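/- For every θ ∈ (0,1) there exists a constant K(θ) > 0, depending only on θ and on the nonlinearity g (and not on the domain Ω or on the flow u), with the following property: if the explosion problem admits a positive classical solution at some parameter λ₁ > 0, then for every λ₀ ∈ (0, θ λ₁] there exists a nonnegative classical solution φ₀ of the explosion problem at parameter λ₀ satisfying 0 ≤ φ₀(x) ≤ K(θ) for all x ∈ Ω. -/

import Mathlib

open Set MeasureTheory
open scoped RealInnerProductSpace

noncomputable section

/-- The Laplacian of a real-valued function on Euclidean space, computed as the sum of
the second partial derivatives in the coordinate directions. -/
def lapl {n : ℕ} (φ : EuclideanSpace ℝ (Fin n) → ℝ) (x : EuclideanSpace ℝ (Fin n)) : ℝ :=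
  ∑ i : Fin n, fderiv ℝ (fun y => fderiv ℝ φ y (EuclideanSpace.single i 1)) x
    (EuclideanSpace.single i 1)

/-- The divergence of a vector field on Euclidean space. -/
def dvg {n : ℕ} (u : EuclideanSpace ℝ (Fin n) → EuclideanSpace ℝ (Fin n))
    (x : EuclideanSpace ℝ (Fin n)) : ℝ :=
  ∑ i : Fin n, fderiv ℝ (fun y => u y i) x (EuclideanSpace.single i 1)

/-- A classical solution of the explosion problem `-Δφ + ⟨u, ∇φ⟩ = λ g(φ)` in `Ω`,
vanishing on `∂Ω`: `C²` in `Ω`, continuous on the closure of `Ω`. -/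
def IsClassicalSol {n : ℕ} (Ω : Set (EuclideanSpace ℝ (Fin n)))
    (u : EuclideanSpace ℝ (Fin n) → EuclideanSpace ℝ (Fin n)) (g : ℝ → ℝ) (lam : ℝ)
    (φ : EuclideanSpace ℝ (Fin n) → ℝ) : Prop :=
  (∀ x ∈ Ω, ContDiffAt ℝ 2 φ x) ∧ ContinuousOn φ (closure Ω) ∧
  (∀ x ∈ Ω, -lapl φ x + ⟪u x, gradient φ x⟫ = lam * g (φ x)) ∧
  (∀ x ∈ frontier Ω, φ x = 0)

/-- A nonnegative classical solution. -/
def IsNonnegSol {n : ℕ} (Ω : Set (EuclideanSpace ℝ (Fin n)))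
    (u : EuclideanSpace ℝ (Fin n) → EuclideanSpace ℝ (Fin n)) (g : ℝ → ℝ) (lam : ℝ)
    (φ : EuclideanSpace ℝ (Fin n) → ℝ) : Prop :=
  IsClassicalSol Ω u g lam φ ∧ ∀ x ∈ Ω, 0 ≤ φ x

/-- A minimal nonnegative classical solution: one that lies below every nonnegative
classical solution at the same parameter. -/
def IsMinimalSol {n : ℕ} (Ω : Set (EuclideanSpace ℝ (Fin n)))
    (u : EuclideanSpace ℝ (Fin n) → EuclideanSpace ℝ (Fin n)) (g : ℝ → ℝ) (lam : ℝ)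
    (φ : EuclideanSpace ℝ (Fin n) → ℝ) : Prop :=
  IsNonnegSol Ω u g lam φ ∧ ∀ v, IsNonnegSol Ω u g lam v → ∀ x ∈ Ω, φ x ≤ v x

/-!
Define `Φ` by `∫₀^{Φ(s)} dt/g(t) = θ ∫₀ˢ dt/g(t)`. Since `∫₀^∞ dt/g` converges and `θ < 1`, the
values of `Φ` stay below some `K` that depends only on `g` and `θ`. As `Φ' = θ g(Φ)/g`, and
`Φ'' ≤ 0` because `g` is convex and increasing, `P = Φ(φ₁)` is a supersolution at every parameter
`λ₀ ≤ θ λ₁`, which vanishes on `∂Ω`. It remains to find a solution between `0` and `P`.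

The boundary of `Ω` plays no role in this: the drift and the reaction are switched off where `P` is
below a level `δ`, and the resulting equation on the whole space is solved by monotone iteration
below the smooth maximum of `P` and `δ`, each step being a linear problem handled with Bessel
potentials. Cut-off functions turn the truncated equations into integral identities that are stable
under pointwise limits and give interior Hölder bounds independent of `δ`; letting `δ → 0` yields a
weak solution, which is `C²` by bootstrapping. The bound `0 ≤ φ ≤ P` forces the boundary values.
-/

open Filter Module InnerProductSpace
open scoped Gradient Laplacian Topology Convolution NNReal

set_option maxSynthPendingDepth 3

/-! ### The heat kernel -/

lemma rpow_le_mul_one_add_sq_div {t α : ℝ} (ht : 0 < t) (hα₀ : 0 ≤ α) (hα₁ : α ≤ 1) {a : ℝ}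
    (ha : 0 ≤ a) :
    a ^ α ≤ t ^ (α / 2) * (3 / 2 + 4 * (a ^ 2 / (8 * t))) := by
  set r := a / √t with hr
  have hr₀ : 0 ≤ r := by positivity
  have hsplit : a ^ α = t ^ (α / 2) * r ^ α := by
    rw [hr, Real.div_rpow ha (Real.sqrt_nonneg t), Real.sqrt_eq_rpow,
      ← Real.rpow_mul ht.le, show 1 / 2 * α = α / 2 by ring]
    field_simp
  have hr_sq : 4 * (a ^ 2 / (8 * t)) = r ^ 2 / 2 := by
    rw [hr, div_pow, Real.sq_sqrt ht.le]
    field_simp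
    ring
  have hr_rpow : r ^ α ≤ 1 + r := by
    rcases le_total r 1 with h | h
    · exact (Real.rpow_le_one hr₀ h hα₀).trans (by linarith)
    · exact (Real.rpow_le_self_of_one_le h hα₁).trans (by linarith)
  rw [hsplit, hr_sq]
  gcongr
  nlinarith [sq_nonneg (r - 1)]

section HeatKernel

variable {V : Type*} [NormedAddCommGroup V] [InnerProductSpace ℝ V]

/-- The Gauss–Weierstrass kernel of `∂ₜ - Δ` on `V`; meaningful for `0 < t`. -/
def heatKernel (t : ℝ) (z : V) : ℝ :=
  (4 * Real.pi * t) ^ (-((finrank ℝ V : ℝ) / 2)) * Real.exp (-‖z‖ ^ 2 / (4 * t))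

/-- The inner product as a bilinear map; `innerSL ℝ` is only conjugate-linear in its type. -/
def realInnerSL (V : Type*) [NormedAddCommGroup V] [InnerProductSpace ℝ V] :
    V →L[ℝ] V →L[ℝ] ℝ :=
  innerSL ℝ

lemma realInnerSL_apply (x y : V) : realInnerSL V x y = ⟪x, y⟫ := rfl

lemma norm_realInnerSL_apply (x : V) : ‖realInnerSL V x‖ = ‖x‖ := innerSL_apply_norm ℝ x

lemma norm_realInnerSL_le_one : ‖realInnerSL V‖ ≤ 1 :=
  ContinuousLinearMap.opNorm_le_bound _ zero_le_one fun x => by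
    rw [norm_realInnerSL_apply, one_mul]

/-- The factor lost when a polynomial weight in `‖z‖ / √t` is absorbed by passing from the
heat kernel at time `t` to the one at time `2 * t`. -/
def doublingConst (V : Type*) [NormedAddCommGroup V] [InnerProductSpace ℝ V] : ℝ :=
  2 ^ ((finrank ℝ V : ℝ) / 2)

lemma doublingConst_pos : 0 < doublingConst V := by
  unfold doublingConst
  positivity

lemma heatKernel_nonneg {t : ℝ} (ht : 0 < t) (z : V) : 0 ≤ heatKernel t z := by
  unfold heatKernel
  positivity

lemma heatKernel_le_heatKernel_zero {t : ℝ} (ht : 0 < t) (z : V) :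
    heatKernel t z ≤ heatKernel t (0 : V) := by
  unfold heatKernel
  gcongr
  simp

lemma heatKernel_zero_antitoneOn : AntitoneOn (fun t => heatKernel t (0 : V)) (Ioi 0) := by
  intro s hs t _ hst
  have hs : 0 < s := hs
  have hexp : -((finrank ℝ V : ℝ) / 2) ≤ 0 := by simp only [Left.neg_nonpos_iff]; positivity
  simpa [heatKernel] using
    Real.rpow_le_rpow_of_nonpos (by positivity) (by gcongr : 4 * Real.pi * s ≤ 4 * Real.pi * t) hexp

lemma heatKernel_eq_doubled {t : ℝ} (ht : 0 < t) (z : V) :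
    heatKernel t z =
      doublingConst V * heatKernel (2 * t) z * Real.exp (-(‖z‖ ^ 2 / (8 * t))) := by
  have hscale : doublingConst V * (4 * Real.pi * (2 * t)) ^ (-((finrank ℝ V : ℝ) / 2)) =
      (4 * Real.pi * t) ^ (-((finrank ℝ V : ℝ) / 2)) := by
    rw [show 4 * Real.pi * (2 * t) = 2 * (4 * Real.pi * t) by ring,
      Real.mul_rpow zero_le_two (by positivity), doublingConst, ← mul_assoc,
      ← Real.rpow_add zero_lt_two, add_neg_cancel, Real.rpow_zero, one_mul]
  unfold heatKernel
  rw [← mul_assoc, hscale, mul_assoc (_ ^ _), ← Real.exp_add]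
  congr 2
  field_simp
  ring

/-- The exponential gained in `heatKernel_eq_doubled` absorbs any weight of at most quadratic
growth in `‖z‖ ^ 2 / t`. -/
lemma mul_heatKernel_le {t c w : ℝ} (ht : 0 < t) (hc : 0 ≤ c) {z : V}
    (hw : w ≤ c * (1 + ‖z‖ ^ 2 / (8 * t) + (‖z‖ ^ 2 / (8 * t)) ^ 2 / 2)) :
    w * heatKernel t z ≤ c * doublingConst V * heatKernel (2 * t) z := by
  set X := ‖z‖ ^ 2 / (8 * t)
  have hX : 0 ≤ X := by positivity
  have hexp : w * Real.exp (-X) ≤ c := by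
    rw [Real.exp_neg, ← div_eq_mul_inv, div_le_iff₀ (Real.exp_pos X)]
    exact hw.trans (mul_le_mul_of_nonneg_left (Real.quadratic_le_exp_of_nonneg hX) hc)
  have hmajorant : 0 ≤ doublingConst V * heatKernel (2 * t) z :=
    mul_nonneg doublingConst_pos.le (heatKernel_nonneg (by positivity) z)
  calc w * heatKernel t z
      = doublingConst V * heatKernel (2 * t) z * (w * Real.exp (-X)) := by
        rw [heatKernel_eq_doubled ht]; ring
    _ ≤ doublingConst V * heatKernel (2 * t) z * c := by gcongr
    _ = c * doublingConst V * heatKernel (2 * t) z := by ring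

lemma norm_rpow_mul_heatKernel_le {t α : ℝ} (ht : 0 < t) (hα₀ : 0 ≤ α) (hα₁ : α ≤ 1) (z : V) :
    heatKernel t z * ‖z‖ ^ α ≤
      4 * doublingConst V * t ^ (α / 2) * heatKernel (2 * t) z := by
  have hweight : ‖z‖ ^ α ≤
      4 * t ^ (α / 2) * (1 + ‖z‖ ^ 2 / (8 * t) + (‖z‖ ^ 2 / (8 * t)) ^ 2 / 2) := by
    refine (rpow_le_mul_one_add_sq_div ht hα₀ hα₁ (norm_nonneg z)).trans ?_
    rw [mul_assoc, mul_left_comm]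
    gcongr
    nlinarith [sq_nonneg (‖z‖ ^ 2 / (8 * t))]
  calc heatKernel t z * ‖z‖ ^ α = ‖z‖ ^ α * heatKernel t z := mul_comm _ _
    _ ≤ 4 * t ^ (α / 2) * doublingConst V * heatKernel (2 * t) z :=
        mul_heatKernel_le ht (by positivity) hweight
    _ = 4 * doublingConst V * t ^ (α / 2) * heatKernel (2 * t) z := by ring

lemma hasFDerivAt_heatKernel (t : ℝ) (z : V) :
    HasFDerivAt (heatKernel t) ((-(1 / (2 * t)) * heatKernel t z) • realInnerSL V z) z := by
  have hexponent : HasFDerivAt (fun y : V => -‖y‖ ^ 2 / (4 * t))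
      ((-(1 / (2 * t))) • realInnerSL V z) z := by
    have h := (hasStrictFDerivAt_norm_sq z).hasFDerivAt.const_mul (-(1 / (4 * t)))
    refine (h.congr_fderiv ?_).congr_of_eventuallyEq (Eventually.of_forall fun y => ?_)
    · ext y
      simp only [one_div, mul_inv_rev, neg_smul, neg_apply, smul_apply, coe_innerSL_apply,
        nsmul_eq_mul, Nat.cast_ofNat, smul_eq_mul, realInnerSL_apply, neg_inj]
      ring
    · ring
  refine (hexponent.exp.const_mul _).congr_fderiv ?_
  ext y
  simp only [one_div, mul_inv_rev, neg_smul, smul_neg, neg_apply, smul_apply,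
    realInnerSL_apply, smul_eq_mul, heatKernel, neg_mul, neg_inj]
  ring

lemma fderiv_heatKernel (t : ℝ) (z : V) :
    fderiv ℝ (heatKernel t) z = (-(1 / (2 * t)) * heatKernel t z) • realInnerSL V z :=
  (hasFDerivAt_heatKernel t z).fderiv

lemma hasFDerivAt_fderiv_heatKernel (t : ℝ) (z : V) :
    HasFDerivAt (fderiv ℝ (heatKernel t))
      ((-(1 / (2 * t))) • ((fderiv ℝ (heatKernel t) z).smulRight (realInnerSL V z) +
        heatKernel t z • realInnerSL V)) z := by
  have h := ((hasFDerivAt_heatKernel t z).const_mul (-(1 / (2 * t)))).smul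
    ((realInnerSL V).hasFDerivAt (x := z))
  refine (h.congr_fderiv ?_).congr_of_eventuallyEq
    (Eventually.of_forall fun y => fderiv_heatKernel t y)
  ext y w
  simp only [one_div, mul_inv_rev, neg_mul, neg_smul, smul_neg, neg_neg, add_apply, neg_apply,
    smul_apply, ContinuousLinearMap.smulRight_apply, realInnerSL_apply, smul_eq_mul,
    fderiv_heatKernel, smul_add]
  ring

lemma fderiv_fderiv_heatKernel (t : ℝ) (z : V) :
    fderiv ℝ (fderiv ℝ (heatKernel t)) z =
      (-(1 / (2 * t))) • ((fderiv ℝ (heatKernel t) z).smulRight (realInnerSL V z) +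
        heatKernel t z • realInnerSL V) :=
  (hasFDerivAt_fderiv_heatKernel t z).fderiv

lemma continuous_heatKernel (t : ℝ) : Continuous (heatKernel (V := V) t) :=
  continuous_iff_continuousAt.2 fun z => (hasFDerivAt_heatKernel t z).continuousAt

lemma continuous_fderiv_heatKernel (t : ℝ) : Continuous (fderiv ℝ (heatKernel (V := V) t)) :=
  continuous_iff_continuousAt.2 fun z => (hasFDerivAt_fderiv_heatKernel t z).continuousAt

lemma continuous_fderiv_fderiv_heatKernel (t : ℝ) :
    Continuous (fderiv ℝ (fderiv ℝ (heatKernel (V := V) t))) := by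
  rw [funext (fderiv_fderiv_heatKernel (V := V) t)]
  have hsmulRight : Continuous fun z : V =>
      (fderiv ℝ (heatKernel t) z).smulRight (realInnerSL V z) :=
    (ContinuousLinearMap.smulRightL ℝ V (V →L[ℝ] ℝ)).continuous₂.comp
      ((continuous_fderiv_heatKernel t).prodMk (realInnerSL V).continuous)
  have := continuous_heatKernel (V := V) t
  fun_prop

lemma norm_fderiv_heatKernel_eq {t : ℝ} (ht : 0 < t) (z : V) :
    ‖fderiv ℝ (heatKernel t) z‖ = ‖z‖ / (2 * t) * heatKernel t z := by
  rw [fderiv_heatKernel, norm_smul, norm_realInnerSL_apply, norm_mul, norm_neg,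
    Real.norm_of_nonneg (heatKernel_nonneg ht z), Real.norm_of_nonneg (by positivity)]
  ring

lemma norm_fderiv_heatKernel_le {t : ℝ} (ht : 0 < t) (z : V) :
    ‖fderiv ℝ (heatKernel t) z‖ ≤
      doublingConst V * t ^ (-(1 / 2) : ℝ) * heatKernel (2 * t) z := by
  have hsqrt : t ^ (-(1 / 2) : ℝ) = 1 / √t := by
    rw [Real.rpow_neg ht.le, ← Real.sqrt_eq_rpow, one_div]
  have hweight : ‖z‖ / (2 * t) ≤
      1 / √t * (1 + ‖z‖ ^ 2 / (8 * t) + (‖z‖ ^ 2 / (8 * t)) ^ 2 / 2) := by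
    set r := ‖z‖ / (2 * √t) with hr
    have hleft : ‖z‖ / (2 * t) = 1 / √t * r := by
      rw [hr]
      nth_rw 1 [← Real.mul_self_sqrt ht.le]
      field_simp
    have hright : ‖z‖ ^ 2 / (8 * t) = r ^ 2 / 2 := by
      rw [hr, div_pow, mul_pow, Real.sq_sqrt ht.le]
      field_simp
      norm_num
    rw [hleft, hright]
    gcongr
    nlinarith [sq_nonneg (r - 1), sq_nonneg (r ^ 2)]
  rw [norm_fderiv_heatKernel_eq ht, hsqrt]
  exact (mul_heatKernel_le ht (by positivity) hweight).trans_eq (by ring)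

lemma norm_fderiv_fderiv_heatKernel_le_self {t : ℝ} (ht : 0 < t) (z : V) :
    ‖fderiv ℝ (fderiv ℝ (heatKernel t)) z‖ ≤
      1 / t * (‖z‖ ^ 2 / (4 * t) + 1 / 2) * heatKernel t z := by
  have hG := heatKernel_nonneg ht z
  rw [fderiv_fderiv_heatKernel, norm_smul, norm_neg, Real.norm_of_nonneg (by positivity)]
  calc 1 / (2 * t) * ‖(fderiv ℝ (heatKernel t) z).smulRight (realInnerSL V z) +
          heatKernel t z • realInnerSL V‖
      ≤ 1 / (2 * t) * (‖z‖ / (2 * t) * heatKernel t z * ‖z‖ + heatKernel t z * 1) := by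
        gcongr
        refine (norm_add_le _ _).trans (add_le_add ?_ ?_)
        · rw [ContinuousLinearMap.norm_smulRight_apply, norm_fderiv_heatKernel_eq ht,
            norm_realInnerSL_apply]
        · rw [norm_smul, Real.norm_of_nonneg hG]
          gcongr
          exact norm_realInnerSL_le_one
    _ = 1 / t * (‖z‖ ^ 2 / (4 * t) + 1 / 2) * heatKernel t z := by
        field_simp
        ring

lemma norm_rpow_mul_norm_fderiv_fderiv_heatKernel_le {t α : ℝ} (ht : 0 < t) (hα₀ : 0 ≤ α)
    (hα₁ : α ≤ 1) (z : V) :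
    ‖fderiv ℝ (fderiv ℝ (heatKernel t)) z‖ * ‖z‖ ^ α ≤
      16 * doublingConst V * t ^ (α / 2 - 1) * heatKernel (2 * t) z := by
  set X := ‖z‖ ^ 2 / (8 * t) with hX
  have hX₀ : 0 ≤ X := by positivity
  have hweight : 1 / t * (‖z‖ ^ 2 / (4 * t) + 1 / 2) * ‖z‖ ^ α ≤
      16 * t ^ (α / 2 - 1) * (1 + X + X ^ 2 / 2) := by
    calc 1 / t * (‖z‖ ^ 2 / (4 * t) + 1 / 2) * ‖z‖ ^ α
        ≤ 1 / t * (‖z‖ ^ 2 / (4 * t) + 1 / 2) * (t ^ (α / 2) * (3 / 2 + 4 * X)) := by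
          gcongr
          exact rpow_le_mul_one_add_sq_div ht hα₀ hα₁ (norm_nonneg z)
      _ = t ^ (α / 2 - 1) * ((2 * X + 1 / 2) * (3 / 2 + 4 * X)) := by
          rw [hX, Real.rpow_sub_one ht.ne']
          field_simp
          ring
      _ ≤ t ^ (α / 2 - 1) * (16 * (1 + X + X ^ 2 / 2)) := by
          refine mul_le_mul_of_nonneg_left ?_ (by positivity)
          nlinarith
      _ = 16 * t ^ (α / 2 - 1) * (1 + X + X ^ 2 / 2) := by ring
  calc ‖fderiv ℝ (fderiv ℝ (heatKernel t)) z‖ * ‖z‖ ^ α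
      ≤ 1 / t * (‖z‖ ^ 2 / (4 * t) + 1 / 2) * heatKernel t z * ‖z‖ ^ α := by
        gcongr
        exact norm_fderiv_fderiv_heatKernel_le_self ht z
    _ = 1 / t * (‖z‖ ^ 2 / (4 * t) + 1 / 2) * ‖z‖ ^ α * heatKernel t z := by ring
    _ ≤ 16 * t ^ (α / 2 - 1) * doublingConst V * heatKernel (2 * t) z :=
        mul_heatKernel_le ht (by positivity) hweight
    _ = 16 * doublingConst V * t ^ (α / 2 - 1) * heatKernel (2 * t) z := by ring

lemma norm_fderiv_fderiv_heatKernel_le {t : ℝ} (ht : 0 < t) (z : V) :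
    ‖fderiv ℝ (fderiv ℝ (heatKernel t)) z‖ ≤
      16 * doublingConst V * t⁻¹ * heatKernel (2 * t) z := by
  simpa [Real.rpow_neg_one] using
    norm_rpow_mul_norm_fderiv_fderiv_heatKernel_le ht le_rfl zero_le_one z

variable [MeasurableSpace V] [BorelSpace V]

lemma stronglyMeasurable_heatKernel :
    StronglyMeasurable (Function.uncurry (heatKernel (V := V))) := by
  have : Measurable (Function.uncurry (heatKernel (V := V))) := by
    unfold heatKernel Function.uncurry
    fun_prop
  exact this.stronglyMeasurable

variable [FiniteDimensional ℝ V]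

lemma integral_heatKernel {t : ℝ} (ht : 0 < t) : ∫ z : V, heatKernel t z = 1 := by
  have hexponent : ∀ z : V, -‖z‖ ^ 2 / (4 * t) = -(1 / (4 * t)) * ‖z‖ ^ 2 := fun z => by ring
  simp only [heatKernel, hexponent]
  rw [integral_const_mul, GaussianFourier.integral_rexp_neg_mul_sq_norm (by positivity),
    show Real.pi / (1 / (4 * t)) = 4 * Real.pi * t by field_simp, ← Real.rpow_add (by positivity),
    neg_add_cancel, Real.rpow_zero]

lemma integrable_heatKernel {t : ℝ} (ht : 0 < t) : Integrable (heatKernel (V := V) t) :=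
  integrable_of_integral_eq_one (integral_heatKernel ht)

lemma integrable_fderiv_heatKernel {t : ℝ} (ht : 0 < t) :
    Integrable (fderiv ℝ (heatKernel (V := V) t)) :=
  ((integrable_heatKernel (by positivity)).const_mul _).mono'
    (continuous_fderiv_heatKernel t).aestronglyMeasurable
    (ae_of_all _ (norm_fderiv_heatKernel_le ht))

lemma integrable_fderiv_fderiv_heatKernel {t : ℝ} (ht : 0 < t) :
    Integrable (fderiv ℝ (fderiv ℝ (heatKernel (V := V) t))) :=
  ((integrable_heatKernel (by positivity)).const_mul _).mono'
    (continuous_fderiv_fderiv_heatKernel t).aestronglyMeasurable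
    (ae_of_all _ (norm_fderiv_fderiv_heatKernel_le ht))

lemma integral_fderiv_fderiv_heatKernel {t : ℝ} (ht : 0 < t) :
    ∫ z : V, fderiv ℝ (fderiv ℝ (heatKernel t)) z = 0 := by
  have hD := integrable_fderiv_heatKernel (V := V) ht
  have hH := integrable_fderiv_fderiv_heatKernel (V := V) ht
  ext v w
  have hderiv : ∀ z : V, HasFDerivAt (fun z => fderiv ℝ (heatKernel t) z w)
      ((fderiv ℝ (fderiv ℝ (heatKernel t)) z).flip w) z := fun z =>
    ((hasFDerivAt_fderiv_heatKernel t z).differentiableAt.hasFDerivAt.clm_apply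
      (hasFDerivAt_const w z)).congr_fderiv (by ext; simp)
  have hderiv_apply : ∀ z : V, fderiv ℝ (fun z : V => fderiv ℝ (heatKernel t) z w) z v =
      fderiv ℝ (fderiv ℝ (heatKernel t)) z v w := fun z => by
    rw [(hderiv z).fderiv, ContinuousLinearMap.flip_apply]
  have hHvw : Integrable fun z : V => fderiv ℝ (fderiv ℝ (heatKernel t)) z v w :=
    (hH.apply_continuousLinearMap v).apply_continuousLinearMap w
  have hparts := integral_mul_fderiv_eq_neg_fderiv_mul_of_integrable (μ := (volume : Measure V))
    (f := fun _ => (1 : ℝ)) (g := fun z => fderiv ℝ (heatKernel t) z w) (v := v) (by simp)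
    (by simpa only [hderiv_apply, one_mul] using hHvw)
    (by simpa only [one_mul] using hD.apply_continuousLinearMap w)
    (fun _ _ => by fun_prop) (fun z _ => (hderiv z).differentiableAt)
  rw [ContinuousLinearMap.integral_apply hH,
    ContinuousLinearMap.integral_apply (hH.apply_continuousLinearMap v)]
  simpa [hderiv_apply] using hparts

lemma stronglyMeasurable_fderiv_heatKernel :
    StronglyMeasurable (Function.uncurry fun t => fderiv ℝ (heatKernel (V := V) t)) := by
  have hG : StronglyMeasurable fun p : ℝ × V => heatKernel p.1 p.2 := stronglyMeasurable_heatKernel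
  have hcoeff : Measurable fun p : ℝ × V => -(1 / (2 * p.1)) := by fun_prop
  have hinner : Continuous fun p : ℝ × V => realInnerSL V p.2 := by fun_prop
  simp only [Function.uncurry_def, fderiv_heatKernel]
  exact (hcoeff.stronglyMeasurable.mul hG).smul hinner.stronglyMeasurable

lemma stronglyMeasurable_fderiv_fderiv_heatKernel :
    StronglyMeasurable
      (Function.uncurry fun t => fderiv ℝ (fderiv ℝ (heatKernel (V := V) t))) := by
  have hG : StronglyMeasurable fun p : ℝ × V => heatKernel p.1 p.2 := stronglyMeasurable_heatKernel
  have hD : StronglyMeasurable fun p : ℝ × V => fderiv ℝ (heatKernel p.1) p.2 :=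
    stronglyMeasurable_fderiv_heatKernel
  have hcoeff : Measurable fun p : ℝ × V => -(1 / (2 * p.1)) := by fun_prop
  have hinner : Continuous fun p : ℝ × V => realInnerSL V p.2 := by fun_prop
  have hsmulRight : StronglyMeasurable fun p : ℝ × V =>
      (fderiv ℝ (heatKernel p.1) p.2).smulRight (realInnerSL V p.2) :=
    (ContinuousLinearMap.smulRightL ℝ V (V →L[ℝ] ℝ)).continuous₂.comp_stronglyMeasurable
      (hD.prodMk hinner.stronglyMeasurable)
  simp only [Function.uncurry_def, fderiv_fderiv_heatKernel]
  exact hcoeff.stronglyMeasurable.smul (hsmulRight.add (hG.smul stronglyMeasurable_const))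

end HeatKernel

section Convolution

variable {V : Type*} [NormedAddCommGroup V] [InnerProductSpace ℝ V] [FiniteDimensional ℝ V]
  [MeasurableSpace V] [BorelSpace V] {F : Type*} [NormedAddCommGroup F] [NormedSpace ℝ F]

/-- The class of densities whose potentials are studied below: integrable and bounded by `B`. -/
structure IsBoundedIntegrable (B : ℝ) (h : V → ℝ) : Prop where
  integrable : Integrable h
  abs_le : ∀ x, |h x| ≤ B

lemma IsBoundedIntegrable.bound_nonneg {B : ℝ} {h : V → ℝ} (hh : IsBoundedIntegrable B h) :
    0 ≤ B :=
  (abs_nonneg _).trans (hh.abs_le 0)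

variable {h : V → ℝ} {k : V → F} {M : ℝ}

lemma integrable_smul_comp_sub (hh : Integrable h) (hk : Continuous k) (hM : ∀ z, ‖k z‖ ≤ M)
    (x : V) : Integrable fun y => h y • k (x - y) := by
  refine (hh.norm.mul_const M).mono' (hh.aestronglyMeasurable.smul
    (by fun_prop : Continuous fun y => k (x - y)).aestronglyMeasurable) (ae_of_all _ fun y => ?_)
  rw [norm_smul]
  gcongr
  exact hM _

lemma continuous_convolution_of_bounded (hh : Integrable h) (hk : Continuous k)
    (hM : ∀ z, ‖k z‖ ≤ M) : Continuous (h ⋆ k) :=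
  BddAbove.continuous_convolution_right_of_integrable _ ⟨M, forall_mem_range.2 hM⟩ hh hk

lemma hasFDerivAt_convolution_of_bounded (hh : Integrable h) (hk : Differentiable ℝ k)
    (hk' : Continuous (fderiv ℝ k)) {M' : ℝ} (hM : ∀ z, ‖k z‖ ≤ M)
    (hM' : ∀ z, ‖fderiv ℝ k z‖ ≤ M') (x : V) :
    HasFDerivAt (h ⋆ k) ((h ⋆ fderiv ℝ k) x) x := by
  refine hasFDerivAt_integral_of_dominated_of_fderiv_le (F := fun x y => h y • k (x - y))
    (F' := fun x y => h y • fderiv ℝ k (x - y)) (bound := fun y => ‖h y‖ * M') univ_mem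
    (Eventually.of_forall fun x' =>
      (integrable_smul_comp_sub hh hk.continuous hM x').aestronglyMeasurable)
    (integrable_smul_comp_sub hh hk.continuous hM x)
    (integrable_smul_comp_sub hh hk' hM' x).aestronglyMeasurable
    (ae_of_all _ fun y x' _ => ?_) (hh.norm.mul_const M') (ae_of_all _ fun y x' _ => ?_)
  · rw [norm_smul]
    gcongr
    exact hM' _
  · exact ((hk (x' - y)).hasFDerivAt.comp x' ((hasFDerivAt_id x').sub_const y)).const_smul (h y)

lemma norm_convolution_le_of_le {B A : ℝ} (hB : ∀ x, |h x| ≤ B) {q : V → ℝ} (hq : ∫ z, q z = 1)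
    (hk : ∀ z, ‖k z‖ ≤ A * q z) (x : V) : ‖(h ⋆ k) x‖ ≤ B * A := by
  have hq_int : Integrable q := integrable_of_integral_eq_one hq
  have hmajorant : ∫ y, B * (A * q (x - y)) = B * A := by
    rw [integral_const_mul, integral_const_mul, integral_sub_left_eq_self q volume x, hq, mul_one]
  rw [← hmajorant, convolution_lsmul]
  refine norm_integral_le_of_norm_le (((hq_int.comp_sub_left x).const_mul A).const_mul B)
    (ae_of_all _ fun y => ?_)
  rw [norm_smul]
  exact mul_le_mul (hB y) (hk _) (norm_nonneg _) ((abs_nonneg _).trans (hB y))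

lemma norm_convolution_sub_smul_integral_le {C α : ℝ≥0} {A : ℝ} (hh : Integrable h)
    (hhα : HolderWith C α h) (hk : Continuous k) (hk_int : Integrable k) (hM : ∀ z, ‖k z‖ ≤ M)
    {q : V → ℝ} (hq : ∫ z, q z = 1) (hkq : ∀ z, ‖k z‖ * ‖z‖ ^ (α : ℝ) ≤ A * q z) (x : V) :
    ‖(h ⋆ k) x - h x • ∫ z, k z‖ ≤ C * A := by
  have hq_int : Integrable q := integrable_of_integral_eq_one hq
  have hdiff : (h ⋆ k) x - h x • ∫ z, k z = ∫ y, (h y - h x) • k (x - y) := by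
    have hconst : Integrable fun y => h x • k (x - y) := (hk_int.comp_sub_left x).smul (h x)
    simp only [sub_smul]
    rw [integral_sub (integrable_smul_comp_sub hh hk hM x) hconst, integral_smul,
      integral_sub_left_eq_self k volume x, convolution_lsmul]
  have hmajorant : ∫ y, C * (A * q (x - y)) = C * A := by
    rw [integral_const_mul, integral_const_mul, integral_sub_left_eq_self q volume x, hq, mul_one]
  rw [hdiff, ← hmajorant]
  refine norm_integral_le_of_norm_le (((hq_int.comp_sub_left x).const_mul A).const_mul _)
    (ae_of_all _ fun y => ?_)
  have hosc : |h y - h x| ≤ C * ‖x - y‖ ^ (α : ℝ) := by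
    rw [norm_sub_rev x y]
    simpa only [dist_eq_norm, Real.norm_eq_abs] using hhα.dist_le y x
  calc ‖(h y - h x) • k (x - y)‖ = |h y - h x| * ‖k (x - y)‖ := by
        rw [norm_smul, Real.norm_eq_abs]
    _ ≤ C * ‖x - y‖ ^ (α : ℝ) * ‖k (x - y)‖ := by gcongr
    _ = C * (‖k (x - y)‖ * ‖x - y‖ ^ (α : ℝ)) := by ring
    _ ≤ C * (A * q (x - y)) := mul_le_mul_of_nonneg_left (hkq _) C.2

end Convolution

section HeatConvolution

variable {V : Type*} [NormedAddCommGroup V] [InnerProductSpace ℝ V]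

lemma norm_heatKernel_le {t : ℝ} (ht : 0 < t) (z : V) :
    ‖heatKernel t z‖ ≤ heatKernel t (0 : V) := by
  rw [Real.norm_of_nonneg (heatKernel_nonneg ht z)]
  exact heatKernel_le_heatKernel_zero ht z

lemma norm_fderiv_heatKernel_le_const {t : ℝ} (ht : 0 < t) (z : V) :
    ‖fderiv ℝ (heatKernel t) z‖ ≤
      doublingConst V * t ^ (-(1 / 2) : ℝ) * heatKernel (2 * t) (0 : V) := by
  have := doublingConst_pos (V := V)
  refine (norm_fderiv_heatKernel_le ht z).trans ?_
  gcongr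
  exact heatKernel_le_heatKernel_zero (by positivity) z

lemma norm_fderiv_fderiv_heatKernel_le_const {t : ℝ} (ht : 0 < t) (z : V) :
    ‖fderiv ℝ (fderiv ℝ (heatKernel t)) z‖ ≤
      16 * doublingConst V * t⁻¹ * heatKernel (2 * t) (0 : V) := by
  have := doublingConst_pos (V := V)
  refine (norm_fderiv_fderiv_heatKernel_le ht z).trans ?_
  gcongr
  exact heatKernel_le_heatKernel_zero (by positivity) z

variable [FiniteDimensional ℝ V] [MeasurableSpace V] [BorelSpace V]
variable {h : V → ℝ} {B t : ℝ} {C α : ℝ≥0}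

lemma hasFDerivAt_convolution_heatKernel (hh : Integrable h) (ht : 0 < t) (x : V) :
    HasFDerivAt (h ⋆ heatKernel t) ((h ⋆ fderiv ℝ (heatKernel t)) x) x :=
  hasFDerivAt_convolution_of_bounded hh
    (fun z => (hasFDerivAt_heatKernel t z).differentiableAt) (continuous_fderiv_heatKernel t)
    (norm_heatKernel_le ht) (norm_fderiv_heatKernel_le_const ht) x

lemma hasFDerivAt_convolution_fderiv_heatKernel (hh : Integrable h) (ht : 0 < t) (x : V) :
    HasFDerivAt (h ⋆ fderiv ℝ (heatKernel t)) ((h ⋆ fderiv ℝ (fderiv ℝ (heatKernel t))) x) x :=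
  hasFDerivAt_convolution_of_bounded hh
    (fun z => (hasFDerivAt_fderiv_heatKernel t z).differentiableAt)
    (continuous_fderiv_fderiv_heatKernel t)
    (norm_fderiv_heatKernel_le_const ht) (norm_fderiv_fderiv_heatKernel_le_const ht) x

lemma abs_convolution_heatKernel_le (hB : ∀ x, |h x| ≤ B) (ht : 0 < t) (x : V) :
    |(h ⋆ heatKernel t) x| ≤ B :=
  (norm_convolution_le_of_le (A := 1) hB (integral_heatKernel ht)
    (fun z => by rw [Real.norm_of_nonneg (heatKernel_nonneg ht z), one_mul]) x).trans_eq
    (mul_one B)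

lemma norm_convolution_fderiv_heatKernel_le (hB : ∀ x, |h x| ≤ B) (ht : 0 < t) (x : V) :
    ‖(h ⋆ fderiv ℝ (heatKernel t)) x‖ ≤ B * doublingConst V * t ^ (-(1 / 2) : ℝ) := by
  rw [mul_assoc]
  exact norm_convolution_le_of_le hB (integral_heatKernel (by positivity))
    (norm_fderiv_heatKernel_le ht) x

lemma norm_convolution_fderiv_fderiv_heatKernel_le (hB : ∀ x, |h x| ≤ B) (ht : 0 < t) (x : V) :
    ‖(h ⋆ fderiv ℝ (fderiv ℝ (heatKernel t))) x‖ ≤ B * (16 * doublingConst V * t⁻¹) :=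
  norm_convolution_le_of_le hB (integral_heatKernel (by positivity))
    (norm_fderiv_fderiv_heatKernel_le ht) x

lemma norm_convolution_fderiv_fderiv_heatKernel_le_of_holderWith (hh : Integrable h)
    (hhα : HolderWith C α h) (hα : α ≤ 1) (ht : 0 < t) (x : V) :
    ‖(h ⋆ fderiv ℝ (fderiv ℝ (heatKernel t))) x‖ ≤
      C * (16 * doublingConst V) * t ^ ((α : ℝ) / 2 - 1) := by
  have hosc := norm_convolution_sub_smul_integral_le hh hhα
    (continuous_fderiv_fderiv_heatKernel t) (integrable_fderiv_fderiv_heatKernel ht)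
    (norm_fderiv_fderiv_heatKernel_le_const ht) (integral_heatKernel (t := 2 * t) (by positivity))
    (norm_rpow_mul_norm_fderiv_fderiv_heatKernel_le ht α.2 hα) x
  rwa [integral_fderiv_fderiv_heatKernel ht, smul_zero, sub_zero, ← mul_assoc] at hosc

lemma abs_convolution_heatKernel_sub_le_of_holderWith (hh : Integrable h)
    (hhα : HolderWith C α h) (hα : α ≤ 1) (ht : 0 < t) (x : V) :
    |(h ⋆ heatKernel t) x - h x| ≤ C * (4 * doublingConst V) * t ^ ((α : ℝ) / 2) := by
  have hosc := norm_convolution_sub_smul_integral_le hh hhα (continuous_heatKernel t)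
    (integrable_heatKernel ht) (norm_heatKernel_le ht)
    (integral_heatKernel (t := 2 * t) (by positivity))
    (fun z => by
      rw [Real.norm_of_nonneg (heatKernel_nonneg ht z)]
      exact norm_rpow_mul_heatKernel_le ht α.2 hα z) x
  rwa [integral_heatKernel ht, smul_eq_mul, mul_one, Real.norm_eq_abs, ← mul_assoc] at hosc

/-- Interpolates between the sup bound and the Lipschitz bound. -/
lemma norm_convolution_fderiv_heatKernel_sub_le (hh : IsBoundedIntegrable B h) (hα : α ≤ 1)
    (ht : 0 < t) (x y : V) :
    ‖(h ⋆ fderiv ℝ (heatKernel t)) x - (h ⋆ fderiv ℝ (heatKernel t)) y‖ ≤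
      16 * (B * doublingConst V) * t ^ (-(1 + α) / 2 : ℝ) * ‖x - y‖ ^ (α : ℝ) := by
  set d := ‖(h ⋆ fderiv ℝ (heatKernel t)) x - (h ⋆ fderiv ℝ (heatKernel t)) y‖
  set A := B * doublingConst V
  have hA : 0 ≤ A := mul_nonneg hh.bound_nonneg doublingConst_pos.le
  set s := t ^ (-(1 / 2) : ℝ)
  have hs : 0 ≤ s := by positivity
  have hs_sq : t⁻¹ = s * s := by
    rw [← Real.rpow_add ht, ← Real.rpow_neg_one]
    norm_num
  have hsup : d ≤ 16 * A * s * 1 := by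
    refine (norm_sub_le _ _).trans ?_
    have := norm_convolution_fderiv_heatKernel_le hh.abs_le ht x
    have := norm_convolution_fderiv_heatKernel_le hh.abs_le ht y
    nlinarith [mul_nonneg hA hs]
  have hlip : d ≤ 16 * A * s * (s * ‖x - y‖) := by
    refine (Convex.norm_image_sub_le_of_norm_hasFDerivWithin_le
      (fun z _ => (hasFDerivAt_convolution_fderiv_heatKernel hh.integrable ht z).hasFDerivWithinAt)
      (fun z _ => norm_convolution_fderiv_fderiv_heatKernel_le hh.abs_le ht z) convex_univ
      (mem_univ y) (mem_univ x)).trans_eq ?_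
    rw [hs_sq]
    ring
  have hr : 0 ≤ s * ‖x - y‖ := by positivity
  calc d ≤ 16 * A * s * min 1 (s * ‖x - y‖) := by
        rw [mul_min_of_nonneg _ _ (by positivity)]
        exact le_min hsup hlip
    _ ≤ 16 * A * s * (s * ‖x - y‖) ^ (α : ℝ) := by
        gcongr
        rcases le_total 1 (s * ‖x - y‖) with h1 | h1
        · exact (min_le_left _ _).trans (Real.one_le_rpow h1 α.2)
        · exact (min_le_right _ _).trans (Real.self_le_rpow_of_le_one hr h1 hα)
    _ = 16 * A * t ^ (-(1 + α) / 2 : ℝ) * ‖x - y‖ ^ (α : ℝ) := by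
        rw [Real.mul_rpow hs (norm_nonneg _), ← Real.rpow_mul ht.le,
          show (-(1 + α) / 2 : ℝ) = -(1 / 2) + -(1 / 2) * α by ring, Real.rpow_add ht]
        ring

end HeatConvolution

/-! ### Bessel potentials -/

section LaplaceConvolution

/-- The Laplace transform at `m` of the power `t ^ a`. -/
def laplaceRpow (m a : ℝ) : ℝ :=
  (1 / m) ^ (a + 1) * Real.Gamma (a + 1)

lemma integrableOn_exp_neg_mul_rpow {m a : ℝ} (hm : 0 < m) (ha : -1 < a) :
    IntegrableOn (fun t => Real.exp (-(m * t)) * t ^ a) (Ioi 0) := by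
  refine (integrableOn_rpow_mul_exp_neg_mul_rpow (p := 1) ha one_pos hm).congr_fun
    (fun t _ => ?_) measurableSet_Ioi
  simp only [Real.rpow_one, neg_mul, mul_comm (t ^ a)]

lemma setIntegral_exp_neg_mul_rpow {m a : ℝ} (hm : 0 < m) (ha : -1 < a) :
    ∫ t in Ioi 0, Real.exp (-(m * t)) * t ^ a = laplaceRpow m a := by
  rw [laplaceRpow, ← Real.integral_rpow_mul_exp_neg_mul_Ioi (by linarith) hm]
  simp only [add_sub_cancel_right, mul_comm]

lemma tendsto_laplaceRpow_atTop {a : ℝ} (ha : -1 < a) :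
    Tendsto (fun m => laplaceRpow m a) atTop (𝓝 0) := by
  have hbase : Tendsto (fun m : ℝ => 1 / m) atTop (𝓝 0) := by
    simpa only [one_div] using tendsto_inv_atTop_zero (𝕜 := ℝ)
  have hpow := hbase.rpow_const (p := a + 1) (Or.inr (by linarith))
  rw [Real.zero_rpow (by linarith)] at hpow
  simpa only [laplaceRpow, zero_mul] using hpow.mul_const (Real.Gamma (a + 1))

variable {V : Type*} [NormedAddCommGroup V] [InnerProductSpace ℝ V] [FiniteDimensional ℝ V]
  [MeasurableSpace V] [BorelSpace V] {F : Type*} [NormedAddCommGroup F] [NormedSpace ℝ F]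

/-- The regularity shared by the heat kernel and its spatial derivatives: joint measurability, and
continuity and boundedness at each positive time. -/
structure IsRegularKernel (k : ℝ → V → F) : Prop where
  stronglyMeasurable : StronglyMeasurable (Function.uncurry k)
  continuous : ∀ t, 0 < t → Continuous (k t)
  exists_norm_le : ∀ t, 0 < t → ∃ M, ∀ z, ‖k t z‖ ≤ M

/-- The Laplace transform in time, at `m`, of the spatial convolutions `h ⋆ k t`. -/
def laplaceConvolution (m : ℝ) (h : V → ℝ) (k : ℝ → V → F) (x : V) : F :=
  ∫ t in Ioi (0 : ℝ), Real.exp (-(m * t)) • (h ⋆ k t) x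

variable {m a a' A A' : ℝ} {h h' : V → ℝ} {k : ℝ → V → F} {x : V}

lemma IsRegularKernel.integrable_smul_comp_sub (hk : IsRegularKernel k) (hh : Integrable h) {t : ℝ}
    (ht : 0 < t) (x : V) : Integrable fun y => h y • k t (x - y) :=
  have ⟨_, hM⟩ := hk.exists_norm_le t ht
  _root_.integrable_smul_comp_sub hh (hk.continuous t ht) hM x

lemma IsRegularKernel.continuous_convolution (hk : IsRegularKernel k) (hh : Integrable h) {t : ℝ}
    (ht : 0 < t) : Continuous (h ⋆ k t) :=
  have ⟨_, hM⟩ := hk.exists_norm_le t ht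
  continuous_convolution_of_bounded hh (hk.continuous t ht) hM

lemma IsRegularKernel.aestronglyMeasurable_laplaceConvolution (hk : IsRegularKernel k)
    (hh : AEStronglyMeasurable h) (x : V) :
    AEStronglyMeasurable (fun t => Real.exp (-(m * t)) • (h ⋆ k t) x)
      (volume.restrict (Ioi 0)) := by
  have hshift : StronglyMeasurable fun p : ℝ × V => Function.uncurry k (p.1, x - p.2) :=
    hk.stronglyMeasurable.comp_measurable (by fun_prop)
  have hjoint : AEStronglyMeasurable (fun p : ℝ × V => h p.2 • k p.1 (x - p.2))
      ((volume.restrict (Ioi 0)).prod volume) :=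
    hh.comp_snd.smul hshift.aestronglyMeasurable
  have hexp : Continuous fun t => Real.exp (-(m * t)) := by fun_prop
  exact hexp.aestronglyMeasurable.smul hjoint.integral_prod_right'

lemma ae_norm_exp_smul_le {f : ℝ → F} (hf : ∀ t, 0 < t → ‖f t‖ ≤ A * t ^ a) :
    ∀ᵐ t ∂(volume.restrict (Ioi 0)),
      ‖Real.exp (-(m * t)) • f t‖ ≤ A * (Real.exp (-(m * t)) * t ^ a) := by
  refine (ae_restrict_iff' measurableSet_Ioi).2 (ae_of_all _ fun t ht => ?_)
  rw [norm_smul, Real.norm_eq_abs, Real.abs_exp, mul_left_comm]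
  gcongr
  exact hf t ht

lemma IsRegularKernel.integrableOn_laplaceConvolution (hk : IsRegularKernel k) (hm : 0 < m)
    (ha : -1 < a) (hh : Integrable h) (hb : ∀ t, 0 < t → ∀ x, ‖(h ⋆ k t) x‖ ≤ A * t ^ a) (x : V) :
    IntegrableOn (fun t => Real.exp (-(m * t)) • (h ⋆ k t) x) (Ioi 0) :=
  ((integrableOn_exp_neg_mul_rpow hm ha).const_mul A).mono'
    (hk.aestronglyMeasurable_laplaceConvolution hh.aestronglyMeasurable x)
    (ae_norm_exp_smul_le fun t ht => hb t ht x)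

lemma norm_integral_exp_smul_le {f : ℝ → F} (hm : 0 < m) (ha : -1 < a)
    (hf : ∀ t, 0 < t → ‖f t‖ ≤ A * t ^ a) :
    ‖∫ t in Ioi 0, Real.exp (-(m * t)) • f t‖ ≤ A * laplaceRpow m a := by
  rw [← setIntegral_exp_neg_mul_rpow hm ha, ← integral_const_mul]
  exact norm_integral_le_of_norm_le ((integrableOn_exp_neg_mul_rpow hm ha).const_mul A)
    (ae_norm_exp_smul_le hf)

lemma IsRegularKernel.hasFDerivAt_laplaceConvolution {k' : ℝ → V → V →L[ℝ] F}
    (hk : IsRegularKernel k) (hk' : IsRegularKernel k') (hm : 0 < m) (ha : -1 < a) (ha' : -1 < a')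
    (hh : Integrable h) (hb : ∀ t, 0 < t → ∀ x, ‖(h ⋆ k t) x‖ ≤ A * t ^ a)
    (hb' : ∀ t, 0 < t → ∀ x, ‖(h ⋆ k' t) x‖ ≤ A' * t ^ a')
    (hd : ∀ t, 0 < t → ∀ x, HasFDerivAt (h ⋆ k t) ((h ⋆ k' t) x) x) (x : V) :
    HasFDerivAt (laplaceConvolution m h k) (laplaceConvolution m h k' x) x := by
  refine hasFDerivAt_integral_of_dominated_of_fderiv_le
    (F := fun x t => Real.exp (-(m * t)) • (h ⋆ k t) x)
    (F' := fun x t => Real.exp (-(m * t)) • (h ⋆ k' t) x)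
    (bound := fun t => A' * (Real.exp (-(m * t)) * t ^ a')) univ_mem
    (Eventually.of_forall fun x' =>
      hk.aestronglyMeasurable_laplaceConvolution hh.aestronglyMeasurable x')
    (hk.integrableOn_laplaceConvolution hm ha hh hb x)
    (hk'.aestronglyMeasurable_laplaceConvolution hh.aestronglyMeasurable x) ?_
    ((integrableOn_exp_neg_mul_rpow hm ha').const_mul A') ?_
  · refine (ae_restrict_iff' measurableSet_Ioi).2 (ae_of_all _ fun t ht x' _ => ?_)
    rw [norm_smul, Real.norm_eq_abs, Real.abs_exp, mul_left_comm]
    gcongr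
    exact hb' t ht x'
  · exact (ae_restrict_iff' measurableSet_Ioi).2
      (ae_of_all _ fun t ht x' _ => (hd t ht x').const_smul _)

lemma IsRegularKernel.continuous_laplaceConvolution (hk : IsRegularKernel k) (hm : 0 < m)
    (ha : -1 < a) (hh : Integrable h) (hb : ∀ t, 0 < t → ∀ x, ‖(h ⋆ k t) x‖ ≤ A * t ^ a) :
    Continuous (laplaceConvolution m h k) :=
  continuous_of_dominated (bound := fun t => A * (Real.exp (-(m * t)) * t ^ a))
    (fun x => hk.aestronglyMeasurable_laplaceConvolution hh.aestronglyMeasurable x)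
    (fun x => ae_norm_exp_smul_le fun t ht => hb t ht x)
    ((integrableOn_exp_neg_mul_rpow hm ha).const_mul A)
    ((ae_restrict_iff' measurableSet_Ioi).2 (ae_of_all _ fun _ ht =>
      (hk.continuous_convolution hh ht).const_smul _))

lemma IsRegularKernel.tendsto_convolution (hk : IsRegularKernel k) {B : ℝ} {hs : ℕ → V → ℝ}
    {S : Set V} (hS : IsCompact S) (hmeas : ∀ j, AEStronglyMeasurable (hs j))
    (hB : ∀ j x, |hs j x| ≤ B) (hsupp : ∀ j, ∀ x ∉ S, hs j x = 0)
    (hlim : ∀ x, Tendsto (hs · x) atTop (𝓝 (h x))) {t : ℝ} (ht : 0 < t) (x : V) :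
    Tendsto (fun j => (hs j ⋆ k t) x) atTop (𝓝 ((h ⋆ k t) x)) := by
  obtain ⟨M, hM⟩ := hk.exists_norm_le t ht
  have hkt := hk.continuous t ht
  refine tendsto_integral_of_dominated_convergence (S.indicator fun _ => B * M)
    (fun j => (hmeas j).smul
      (by fun_prop : Continuous fun y => k t (x - y)).aestronglyMeasurable)
    ((integrable_indicator_iff hS.measurableSet).2 (integrableOn_const hS.measure_lt_top.ne))
    (fun j => ae_of_all _ fun y => ?_) (ae_of_all _ fun y => (hlim y).smul_const _)
  rw [ContinuousLinearMap.lsmul_apply]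
  by_cases hy : y ∈ S
  · rw [indicator_of_mem hy, norm_smul]
    exact mul_le_mul (hB j y) (hM _) (norm_nonneg _) ((abs_nonneg _).trans (hB j y))
  · rw [indicator_of_notMem hy, hsupp j y hy, zero_smul, norm_zero]

lemma IsRegularKernel.tendsto_laplaceConvolution (hk : IsRegularKernel k) (hm : 0 < m)
    (ha : -1 < a) {B : ℝ} {hs : ℕ → V → ℝ} {S : Set V} (hS : IsCompact S)
    (hmeas : ∀ j, AEStronglyMeasurable (hs j)) (hB : ∀ j x, |hs j x| ≤ B)
    (hsupp : ∀ j, ∀ x ∉ S, hs j x = 0) (hlim : ∀ x, Tendsto (hs · x) atTop (𝓝 (h x)))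
    (hb : ∀ j t, 0 < t → ∀ x, ‖(hs j ⋆ k t) x‖ ≤ A * t ^ a) (x : V) :
    Tendsto (fun j => laplaceConvolution m (hs j) k x) atTop (𝓝 (laplaceConvolution m h k x)) :=
  tendsto_integral_of_dominated_convergence (fun t => A * (Real.exp (-(m * t)) * t ^ a))
    (fun j => hk.aestronglyMeasurable_laplaceConvolution (hmeas j) x)
    ((integrableOn_exp_neg_mul_rpow hm ha).const_mul A)
    (fun j => ae_norm_exp_smul_le fun t ht => hb j t ht x)
    ((ae_restrict_iff' measurableSet_Ioi).2 (ae_of_all _ fun _ ht =>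
      (hk.tendsto_convolution hS hmeas hB hsupp hlim ht x).const_smul _))

lemma IsRegularKernel.laplaceConvolution_add (hk : IsRegularKernel k) (hm : 0 < m) (ha : -1 < a)
    (hh : Integrable h) (hh' : Integrable h') (hb : ∀ t, 0 < t → ∀ x, ‖(h ⋆ k t) x‖ ≤ A * t ^ a)
    (hb' : ∀ t, 0 < t → ∀ x, ‖(h' ⋆ k t) x‖ ≤ A' * t ^ a) (x : V) :
    laplaceConvolution m (h + h') k x =
      laplaceConvolution m h k x + laplaceConvolution m h' k x := by
  unfold laplaceConvolution
  rw [← integral_add (hk.integrableOn_laplaceConvolution hm ha hh hb x)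
    (hk.integrableOn_laplaceConvolution hm ha hh' hb' x)]
  refine setIntegral_congr_fun measurableSet_Ioi fun t ht => ?_
  have hexists : ConvolutionExistsAt h (k t) x (.lsmul ℝ ℝ) :=
    hk.integrable_smul_comp_sub hh ht x
  have hexists' : ConvolutionExistsAt h' (k t) x (.lsmul ℝ ℝ) :=
    hk.integrable_smul_comp_sub hh' ht x
  simp only [hexists.add_distrib hexists', smul_add]

lemma laplaceConvolution_smul (m c : ℝ) (h : V → ℝ) (k : ℝ → V → F) (x : V) :
    laplaceConvolution m (c • h) k x = c • laplaceConvolution m h k x := by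
  simp only [laplaceConvolution, smul_convolution, Pi.smul_apply, smul_comm _ c, integral_smul]

end LaplaceConvolution

section HeatEquation

variable {V : Type*} [NormedAddCommGroup V] [InnerProductSpace ℝ V] [FiniteDimensional ℝ V]

variable (V) in
/-- The trace of a bilinear form with respect to the inner product. -/
def bilinTrace : (V →L[ℝ] V →L[ℝ] ℝ) →L[ℝ] ℝ :=
  ∑ i, (ContinuousLinearMap.apply ℝ ℝ (stdOrthonormalBasis ℝ V i)).comp
    (ContinuousLinearMap.apply ℝ (V →L[ℝ] ℝ) (stdOrthonormalBasis ℝ V i))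

lemma bilinTrace_apply (L : V →L[ℝ] V →L[ℝ] ℝ) :
    bilinTrace V L = ∑ i, L (stdOrthonormalBasis ℝ V i) (stdOrthonormalBasis ℝ V i) := by
  simp only [bilinTrace, sum_apply, ContinuousLinearMap.comp_apply,
    ContinuousLinearMap.apply_apply]

lemma laplacian_eq_bilinTrace (f : V → ℝ) (x : V) :
    Δ f x = bilinTrace V (fderiv ℝ (fderiv ℝ f) x) := by
  simp only [laplacian_eq_iteratedFDeriv_stdOrthonormalBasis, bilinTrace_apply,
    iteratedFDeriv_two_apply, Matrix.cons_val_zero, Matrix.cons_val_one]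

lemma laplacian_heatKernel {t : ℝ} (ht : 0 < t) (z : V) :
    Δ (heatKernel (V := V) t) z =
      heatKernel t z * (‖z‖ ^ 2 / (4 * t ^ 2) - finrank ℝ V / (2 * t)) := by
  set e := stdOrthonormalBasis ℝ V
  have hterm (i : Fin (finrank ℝ V)) : fderiv ℝ (fderiv ℝ (heatKernel t)) z (e i) (e i) =
      heatKernel t z * ((1 / (4 * t ^ 2)) * (⟪z, e i⟫ * ⟪e i, z⟫) - 1 / (2 * t)) := by
    simp only [fderiv_fderiv_heatKernel, fderiv_heatKernel, smul_apply,
      add_apply, ContinuousLinearMap.smulRight_apply, realInnerSL_apply,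
      smul_eq_mul, real_inner_self_eq_norm_sq, e.norm_eq_one, real_inner_comm z (e i)]
    field_simp
    ring
  rw [laplacian_eq_bilinTrace, bilinTrace_apply, Finset.sum_congr rfl fun i _ => hterm i,
    ← Finset.mul_sum, Finset.sum_sub_distrib, ← Finset.mul_sum, e.sum_inner_mul_inner,
    real_inner_self_eq_norm_sq, Finset.sum_const, Finset.card_univ, Fintype.card_fin, nsmul_eq_mul]
  ring

lemma hasDerivAt_heatKernel_time {t : ℝ} (ht : 0 < t) (z : V) :
    HasDerivAt (fun s => heatKernel s z) (Δ (heatKernel (V := V) t) z) t := by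
  set d : ℝ := (finrank ℝ V : ℝ)
  have hfactor : HasDerivAt (fun s : ℝ => (4 * Real.pi * s) ^ (-(d / 2)))
      ((4 * Real.pi * 1) * (-(d / 2)) * (4 * Real.pi * t) ^ (-(d / 2) - 1)) t :=
    ((hasDerivAt_id t).const_mul (4 * Real.pi)).rpow_const
      (Or.inl (show 4 * Real.pi * t ≠ 0 by positivity))
  have hexponent : HasDerivAt (fun s : ℝ => -‖z‖ ^ 2 / (4 * s)) (‖z‖ ^ 2 / (4 * t ^ 2)) t := by
    refine ((hasDerivAt_const t (-‖z‖ ^ 2)).div ((hasDerivAt_id t).const_mul 4)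
      (show 4 * t ≠ 0 by positivity)).congr_deriv ?_
    simp only [id_eq]
    field_simp
    ring
  refine (hfactor.mul hexponent.exp).congr_deriv ?_
  rw [laplacian_heatKernel ht, heatKernel, Real.rpow_sub (by positivity), Real.rpow_one]
  field_simp
  ring

variable [MeasurableSpace V] [BorelSpace V] {h : V → ℝ} {C α : ℝ≥0}

lemma hasDerivAt_convolution_heatKernel_time (hh : Integrable h) {t : ℝ} (ht : 0 < t) (x : V) :
    HasDerivAt (fun s => (h ⋆ heatKernel s) x)
      (bilinTrace V ((h ⋆ fderiv ℝ (fderiv ℝ (heatKernel t))) x)) t := by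
  have hhessian {s : ℝ} (hs : 0 < s) :=
    integrable_smul_comp_sub hh (continuous_fderiv_fderiv_heatKernel s)
      (norm_fderiv_fderiv_heatKernel_le_const hs) x
  have htrace : bilinTrace V ((h ⋆ fderiv ℝ (fderiv ℝ (heatKernel t))) x) =
      ∫ y, h y • Δ (heatKernel (V := V) t) (x - y) := by
    rw [convolution_lsmul, ← ContinuousLinearMap.integral_comp_comm _ (hhessian ht)]
    simp only [map_smul, laplacian_eq_bilinTrace]
  rw [htrace]
  have hhalf : ∀ s ∈ Ioi (t / 2), 0 < s := fun s hs => (half_pos ht).trans hs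
  refine (hasDerivAt_integral_of_dominated_loc_of_deriv_le
    (F := fun s y => h y • heatKernel s (x - y))
    (F' := fun s y => h y • Δ (heatKernel (V := V) s) (x - y))
    (bound := fun y => ‖h y‖ * (‖bilinTrace V‖ *
      (16 * doublingConst V * (t / 2)⁻¹ * heatKernel (2 * (t / 2)) (0 : V))))
    (Ioi_mem_nhds (half_lt_self ht)) ?_
    (integrable_smul_comp_sub hh (continuous_heatKernel t) (norm_heatKernel_le ht) x) ?_ ?_
    (hh.norm.mul_const _) ?_).2
  · filter_upwards [Ioi_mem_nhds (half_lt_self ht)] with s hs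
    exact (integrable_smul_comp_sub hh (continuous_heatKernel s)
      (norm_heatKernel_le (hhalf s hs)) x).aestronglyMeasurable
  · have hcont : Continuous fun y => Δ (heatKernel (V := V) t) (x - y) := by
      have := continuous_fderiv_fderiv_heatKernel (V := V) t
      simp only [laplacian_eq_bilinTrace]
      fun_prop
    exact hh.aestronglyMeasurable.smul hcont.aestronglyMeasurable
  · refine ae_of_all _ fun y s hs => ?_
    have := doublingConst_pos (V := V)
    have := heatKernel_nonneg (hhalf s hs) (0 : V)
    rw [norm_smul, laplacian_eq_bilinTrace]
    gcongr
    refine (ContinuousLinearMap.le_opNorm _ _).trans ?_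
    gcongr
    refine (norm_fderiv_fderiv_heatKernel_le_const (hhalf s hs) _).trans ?_
    have hts : t / 2 ≤ s := (mem_Ioi.1 hs).le
    gcongr
    · exact heatKernel_nonneg (by linarith [hhalf s hs]) _
    · exact heatKernel_zero_antitoneOn (mem_Ioi.2 (by linarith))
        (mem_Ioi.2 (by linarith [hhalf s hs])) (by linarith)
  · exact ae_of_all _ fun y s hs =>
      (hasDerivAt_heatKernel_time (hhalf s hs) (x - y)).const_smul (h y)

lemma tendsto_convolution_heatKernel_nhdsGT_zero (hh : Integrable h) (hhα : HolderWith C α h)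
    (hα₀ : 0 < α) (hα₁ : α ≤ 1) (x : V) :
    Tendsto (fun t => (h ⋆ heatKernel t) x) (𝓝[>] 0) (𝓝 (h x)) := by
  have hpow : Tendsto (fun t : ℝ => C * (4 * doublingConst V) * t ^ ((α : ℝ) / 2)) (𝓝[>] 0)
      (𝓝 0) := by
    have hexp : 0 < (α : ℝ) / 2 := by positivity
    have hcont : Continuous fun t : ℝ => C * (4 * doublingConst V) * t ^ ((α : ℝ) / 2) :=
      continuous_const.mul (Real.continuous_rpow_const hexp.le)
    have := hcont.tendsto 0
    rw [Real.zero_rpow hexp.ne', mul_zero] at this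
    exact this.mono_left nhdsWithin_le_nhds
  rw [tendsto_iff_norm_sub_tendsto_zero]
  refine squeeze_zero' (Eventually.of_forall fun _ => norm_nonneg _) ?_ hpow
  filter_upwards [self_mem_nhdsWithin] with t ht
  exact abs_convolution_heatKernel_sub_le_of_holderWith hh hhα hα₁ ht x

end HeatEquation

lemma holderWith_of_dist_le {X Y : Type*} [PseudoMetricSpace X] [PseudoMetricSpace Y] {C α : ℝ≥0}
    {f : X → Y} (hf : ∀ x y, dist (f x) (f y) ≤ C * dist x y ^ (α : ℝ)) : HolderWith C α f := by
  intro x y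
  rw [edist_nndist, edist_nndist, ← ENNReal.coe_rpow_of_nonneg _ α.coe_nonneg, ← ENNReal.coe_mul,
    ENNReal.coe_le_coe, ← NNReal.coe_le_coe]
  exact_mod_cast hf x y

section BesselPotential

variable {V : Type*} [NormedAddCommGroup V] [InnerProductSpace ℝ V]

lemma isRegularKernel_heatKernel [MeasurableSpace V] [BorelSpace V] :
    IsRegularKernel (heatKernel (V := V)) :=
  ⟨stronglyMeasurable_heatKernel, fun t _ => continuous_heatKernel t,
    fun _ ht => ⟨_, norm_heatKernel_le ht⟩⟩

variable [FiniteDimensional ℝ V]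

lemma isRegularKernel_fderiv_heatKernel [MeasurableSpace V] [BorelSpace V] :
    IsRegularKernel fun t => fderiv ℝ (heatKernel (V := V) t) :=
  ⟨stronglyMeasurable_fderiv_heatKernel, fun t _ => continuous_fderiv_heatKernel t,
    fun _ ht => ⟨_, norm_fderiv_heatKernel_le_const ht⟩⟩

lemma isRegularKernel_fderiv_fderiv_heatKernel [MeasurableSpace V] [BorelSpace V] :
    IsRegularKernel fun t => fderiv ℝ (fderiv ℝ (heatKernel (V := V) t)) :=
  ⟨stronglyMeasurable_fderiv_fderiv_heatKernel, fun t _ => continuous_fderiv_fderiv_heatKernel t,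
    fun _ ht => ⟨_, norm_fderiv_fderiv_heatKernel_le_const ht⟩⟩

variable [MeasurableSpace V] [BorelSpace V]

/-- The solution `(m - Δ)⁻¹ h` of the resolvent equation, written with the heat semigroup. -/
def besselPotential (m : ℝ) (h : V → ℝ) : V → ℝ :=
  laplaceConvolution m h heatKernel

/-- The derivative of `besselPotential m h`, with the derivative falling on the kernel. -/
def besselGradient (m : ℝ) (h : V → ℝ) : V → V →L[ℝ] ℝ :=
  laplaceConvolution m h fun t => fderiv ℝ (heatKernel t)

/-- The second derivative of `besselPotential m h`, with both derivatives falling on the kernel. -/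
def besselHessian (m : ℝ) (h : V → ℝ) : V → V →L[ℝ] V →L[ℝ] ℝ :=
  laplaceConvolution m h fun t => fderiv ℝ (fderiv ℝ (heatKernel t))

variable {m B B' : ℝ} {h h' : V → ℝ} {α : ℝ≥0}

lemma IsBoundedIntegrable.norm_convolution_heatKernel_le_rpow (hh : IsBoundedIntegrable B h)
    (t : ℝ) (ht : 0 < t) (x : V) : ‖(h ⋆ heatKernel t) x‖ ≤ B * t ^ (0 : ℝ) := by
  rw [Real.rpow_zero, mul_one]
  exact abs_convolution_heatKernel_le hh.abs_le ht x

lemma abs_besselPotential_le (hm : 0 < m) (hB : ∀ x, |h x| ≤ B) (x : V) :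
    |besselPotential m h x| ≤ B * laplaceRpow m 0 := by
  refine norm_integral_exp_smul_le (f := fun t => (h ⋆ heatKernel t) x) hm neg_one_lt_zero
    fun t ht => ?_
  rw [Real.rpow_zero, mul_one]
  exact abs_convolution_heatKernel_le hB ht x

lemma norm_besselGradient_le (hm : 0 < m) (hB : ∀ x, |h x| ≤ B) (x : V) :
    ‖besselGradient m h x‖ ≤ B * doublingConst V * laplaceRpow m (-(1 / 2)) :=
  norm_integral_exp_smul_le hm (by norm_num) fun _ ht =>
    norm_convolution_fderiv_heatKernel_le hB ht x

lemma hasFDerivAt_besselPotential (hm : 0 < m) (hh : IsBoundedIntegrable B h) (x : V) :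
    HasFDerivAt (besselPotential m h) (besselGradient m h x) x :=
  isRegularKernel_heatKernel.hasFDerivAt_laplaceConvolution isRegularKernel_fderiv_heatKernel hm
    (by norm_num) (by norm_num) hh.integrable hh.norm_convolution_heatKernel_le_rpow
    (fun _ ht => norm_convolution_fderiv_heatKernel_le hh.abs_le ht)
    (fun _ ht => hasFDerivAt_convolution_heatKernel hh.integrable ht) x

lemma fderiv_besselPotential (hm : 0 < m) (hh : IsBoundedIntegrable B h) :
    fderiv ℝ (besselPotential m h) = besselGradient m h :=
  funext fun x => (hasFDerivAt_besselPotential hm hh x).fderiv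

lemma hasFDerivAt_besselGradient (hm : 0 < m) (hh : IsBoundedIntegrable B h)
    (hhα : MemHolder α h) (hα₀ : 0 < α) (hα₁ : α ≤ 1) (x : V) :
    HasFDerivAt (besselGradient m h) (besselHessian m h x) x :=
  isRegularKernel_fderiv_heatKernel.hasFDerivAt_laplaceConvolution
    isRegularKernel_fderiv_fderiv_heatKernel hm (by norm_num)
    (by linarith [NNReal.coe_pos.2 hα₀]) hh.integrable
    (fun _ ht => norm_convolution_fderiv_heatKernel_le hh.abs_le ht)
    (fun _ ht =>
      norm_convolution_fderiv_fderiv_heatKernel_le_of_holderWith hh.integrable hhα.holderWith hα₁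
        ht)
    (fun _ ht => hasFDerivAt_convolution_fderiv_heatKernel hh.integrable ht) x

lemma continuous_besselGradient (hm : 0 < m) (hh : IsBoundedIntegrable B h) :
    Continuous (besselGradient m h) :=
  isRegularKernel_fderiv_heatKernel.continuous_laplaceConvolution hm (by norm_num) hh.integrable
    fun _ ht => norm_convolution_fderiv_heatKernel_le hh.abs_le ht

lemma continuous_besselHessian (hm : 0 < m) (hh : IsBoundedIntegrable B h)
    (hhα : MemHolder α h) (hα₀ : 0 < α) (hα₁ : α ≤ 1) : Continuous (besselHessian m h) :=
  isRegularKernel_fderiv_fderiv_heatKernel.continuous_laplaceConvolution hm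
    (by linarith [NNReal.coe_pos.2 hα₀]) hh.integrable fun _ ht =>
      norm_convolution_fderiv_fderiv_heatKernel_le_of_holderWith hh.integrable hhα.holderWith hα₁ ht

lemma contDiff_one_besselPotential (hm : 0 < m) (hh : IsBoundedIntegrable B h) :
    ContDiff ℝ 1 (besselPotential m h) := by
  rw [contDiff_one_iff_fderiv, fderiv_besselPotential hm hh]
  exact ⟨fun x => (hasFDerivAt_besselPotential hm hh x).differentiableAt,
    continuous_besselGradient hm hh⟩

lemma contDiff_two_besselPotential (hm : 0 < m) (hh : IsBoundedIntegrable B h)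
    (hhα : MemHolder α h) (hα₀ : 0 < α) (hα₁ : α ≤ 1) :
    ContDiff ℝ 2 (besselPotential m h) := by
  have hgrad := hasFDerivAt_besselGradient hm hh hhα hα₀ hα₁
  rw [← one_add_one_eq_two, contDiff_succ_iff_fderiv, fderiv_besselPotential hm hh,
    contDiff_one_iff_fderiv, funext fun x => (hgrad x).fderiv]
  exact ⟨fun x => (hasFDerivAt_besselPotential hm hh x).differentiableAt, by simp,
    fun x => (hgrad x).differentiableAt, continuous_besselHessian hm hh hhα hα₀ hα₁⟩

lemma exists_lipschitzWith_besselPotential (hm : 0 < m) (B : ℝ) :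
    ∃ C, ∀ h : V → ℝ, IsBoundedIntegrable B h → LipschitzWith C (besselPotential m h) := by
  refine ⟨(B * doublingConst V * laplaceRpow m (-(1 / 2))).toNNReal, fun h hh => ?_⟩
  refine lipschitzWith_of_nnnorm_fderiv_le
    (fun x => (hasFDerivAt_besselPotential hm hh x).differentiableAt) fun x => ?_
  rw [fderiv_besselPotential hm hh]
  exact NNReal.coe_le_coe.1
    ((norm_besselGradient_le hm hh.abs_le x).trans (Real.le_coe_toNNReal _))

lemma norm_besselGradient_sub_le (hm : 0 < m) (hh : IsBoundedIntegrable B h) (hα : α < 1)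
    (x y : V) : ‖besselGradient m h x - besselGradient m h y‖ ≤
      16 * (B * doublingConst V) * ‖x - y‖ ^ (α : ℝ) * laplaceRpow m (-(1 + α) / 2) := by
  have hint := isRegularKernel_fderiv_heatKernel.integrableOn_laplaceConvolution hm (by norm_num)
    hh.integrable fun _ ht => norm_convolution_fderiv_heatKernel_le hh.abs_le ht
  rw [besselGradient, laplaceConvolution, laplaceConvolution, ← integral_sub (hint x) (hint y)]
  simp only [← smul_sub]
  refine norm_integral_exp_smul_le hm (by linarith [NNReal.coe_lt_one.2 hα]) fun t ht => ?_
  refine (norm_convolution_fderiv_heatKernel_sub_le hh hα.le ht x y).trans_eq ?_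
  ring

lemma exists_holderWith_besselGradient (hm : 0 < m) (hα : α < 1) (B : ℝ) :
    ∃ C, ∀ h : V → ℝ, IsBoundedIntegrable B h → HolderWith C α (besselGradient m h) := by
  refine ⟨(16 * (B * doublingConst V) * laplaceRpow m (-(1 + α) / 2)).toNNReal,
    fun h hh => holderWith_of_dist_le fun x y => ?_⟩
  rw [dist_eq_norm, dist_eq_norm]
  refine (norm_besselGradient_sub_le hm hh hα x y).trans ?_
  rw [mul_right_comm]
  gcongr
  exact Real.le_coe_toNNReal _

lemma besselPotential_add (hm : 0 < m) (hh : IsBoundedIntegrable B h)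
    (hh' : IsBoundedIntegrable B' h') (x : V) :
    besselPotential m (h + h') x = besselPotential m h x + besselPotential m h' x :=
  isRegularKernel_heatKernel.laplaceConvolution_add hm (by norm_num) hh.integrable hh'.integrable
    hh.norm_convolution_heatKernel_le_rpow hh'.norm_convolution_heatKernel_le_rpow x

lemma besselGradient_add (hm : 0 < m) (hh : IsBoundedIntegrable B h)
    (hh' : IsBoundedIntegrable B' h') (x : V) :
    besselGradient m (h + h') x = besselGradient m h x + besselGradient m h' x :=
  isRegularKernel_fderiv_heatKernel.laplaceConvolution_add hm (by norm_num) hh.integrable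
    hh'.integrable (fun _ ht => norm_convolution_fderiv_heatKernel_le hh.abs_le ht)
    (fun _ ht => norm_convolution_fderiv_heatKernel_le hh'.abs_le ht) x

lemma besselPotential_smul (m c : ℝ) (h : V → ℝ) (x : V) :
    besselPotential m (c • h) x = c * besselPotential m h x :=
  laplaceConvolution_smul m c h heatKernel x

lemma besselGradient_smul (m c : ℝ) (h : V → ℝ) (x : V) :
    besselGradient m (c • h) x = c • besselGradient m h x :=
  laplaceConvolution_smul m c h _ x

end BesselPotential

section Resolvent

variable {V : Type*} [NormedAddCommGroup V] [InnerProductSpace ℝ V] [FiniteDimensional ℝ V]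
  [MeasurableSpace V] [BorelSpace V] {m B B' : ℝ} {h h' : V → ℝ} {α : ℝ≥0}

lemma tendsto_exp_mul_convolution_heatKernel_atTop (hm : 0 < m) (hB : ∀ x, |h x| ≤ B) (x : V) :
    Tendsto (fun t => Real.exp (-(m * t)) * (h ⋆ heatKernel t) x) atTop (𝓝 0) := by
  have hexp : Tendsto (fun t => Real.exp (-(m * t)) * B) atTop (𝓝 0) := by
    simpa only [zero_mul, Function.comp_def, id] using (Real.tendsto_exp_neg_atTop_nhds_zero.comp
      (tendsto_id.const_mul_atTop hm)).mul_const B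
  refine squeeze_zero_norm' ?_ hexp
  filter_upwards [eventually_gt_atTop 0] with t ht
  rw [norm_mul, Real.norm_eq_abs, Real.abs_exp]
  gcongr
  exact abs_convolution_heatKernel_le hB ht x

/- The heat equation turns `tr (D²)` under the Laplace integral into `d/dt`, and integrating
`exp (-m t)` against it by parts leaves the initial value `h`. -/
lemma bilinTrace_besselHessian (hm : 0 < m) (hh : IsBoundedIntegrable B h) (hhα : MemHolder α h)
    (hα₀ : 0 < α) (hα₁ : α ≤ 1) (x : V) :
    bilinTrace V (besselHessian m h x) = m * besselPotential m h x - h x := by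
  have hpot := isRegularKernel_heatKernel.integrableOn_laplaceConvolution hm neg_one_lt_zero
    hh.integrable hh.norm_convolution_heatKernel_le_rpow x
  have hhess := isRegularKernel_fderiv_fderiv_heatKernel.integrableOn_laplaceConvolution hm
    (by linarith [NNReal.coe_pos.2 hα₀]) hh.integrable
    (fun _ ht => norm_convolution_fderiv_fderiv_heatKernel_le_of_holderWith hh.integrable
      hhα.holderWith hα₁ ht) x
  have htrace := (bilinTrace V).integrable_comp hhess
  simp only [map_smul, smul_eq_mul] at htrace hpot
  have hexp (t : ℝ) : HasDerivAt (fun t => Real.exp (-(m * t))) (-m * Real.exp (-(m * t))) t := by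
    simpa [mul_comm] using ((hasDerivAt_id t).const_mul m).fun_neg.exp
  have hzero : Tendsto (fun t => Real.exp (-(m * t)) * (h ⋆ heatKernel t) x) (𝓝[>] 0)
      (𝓝 (h x)) := by
    have hone : Tendsto (fun t => Real.exp (-(m * t))) (𝓝[>] 0) (𝓝 1) := by
      simpa using (hexp 0).continuousAt.tendsto.mono_left nhdsWithin_le_nhds
    simpa only [one_mul] using hone.mul
      (tendsto_convolution_heatKernel_nhdsGT_zero hh.integrable hhα.holderWith hα₀ hα₁ x)
  have hparts := integral_Ioi_deriv_mul_eq_sub (fun t _ => hexp t)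
    (fun t ht => hasDerivAt_convolution_heatKernel_time hh.integrable ht x)
    (((hpot.const_mul (-m)).congr (ae_of_all _ fun t => (mul_assoc _ _ _).symm)).add htrace) hzero
    (tendsto_exp_mul_convolution_heatKernel_atTop hm hh.abs_le x)
  simp only [mul_assoc] at hparts
  rw [integral_add (hpot.const_mul (-m)) htrace, integral_const_mul] at hparts
  rw [besselHessian, laplaceConvolution, ← ContinuousLinearMap.integral_comp_comm _ hhess,
    besselPotential, laplaceConvolution]
  simp only [map_smul, smul_eq_mul]
  linarith

lemma laplacian_besselPotential (hm : 0 < m) (hh : IsBoundedIntegrable B h) (hhα : MemHolder α h)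
    (hα₀ : 0 < α) (hα₁ : α ≤ 1) (x : V) :
    Δ (besselPotential m h) x = m * besselPotential m h x - h x := by
  rw [laplacian_eq_bilinTrace, fderiv_besselPotential hm hh,
    (hasFDerivAt_besselGradient hm hh hhα hα₀ hα₁ x).fderiv,
    bilinTrace_besselHessian hm hh hhα hα₀ hα₁]

lemma IsBoundedIntegrable.add (hh : IsBoundedIntegrable B h) (hh' : IsBoundedIntegrable B' h') :
    IsBoundedIntegrable (B + B') (h + h') :=
  ⟨hh.integrable.add hh'.integrable,
    fun x => (abs_add_le _ _).trans (add_le_add (hh.abs_le x) (hh'.abs_le x))⟩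

lemma IsBoundedIntegrable.smul (hh : IsBoundedIntegrable B h) (c : ℝ) :
    IsBoundedIntegrable (|c| * B) (c • h) :=
  ⟨hh.integrable.smul c, fun x => by
    rw [Pi.smul_apply, smul_eq_mul, abs_mul]
    exact mul_le_mul_of_nonneg_left (hh.abs_le x) (abs_nonneg c)⟩

lemma IsBoundedIntegrable.neg (hh : IsBoundedIntegrable B h) : IsBoundedIntegrable B (-h) :=
  ⟨hh.integrable.neg, fun x => by simpa only [Pi.neg_apply, abs_neg] using hh.abs_le x⟩

lemma IsBoundedIntegrable.sub (hh : IsBoundedIntegrable B h) (hh' : IsBoundedIntegrable B' h') :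
    IsBoundedIntegrable (B + B') (h - h') := by
  simpa only [sub_eq_add_neg] using hh.add hh'.neg

lemma IsBoundedIntegrable.sum {ι : Type*} (s : Finset ι) {f : ι → V → ℝ} {b : ι → ℝ}
    (hf : ∀ i ∈ s, IsBoundedIntegrable (b i) (f i)) :
    IsBoundedIntegrable (∑ i ∈ s, b i) (∑ i ∈ s, f i) :=
  ⟨integrable_finsetSum' _ fun i hi => (hf i hi).integrable, fun x => by
    rw [Finset.sum_apply]
    exact (Finset.abs_sum_le_sum_abs _ _).trans
      (Finset.sum_le_sum fun i hi => (hf i hi).abs_le x)⟩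

lemma isBoundedIntegrable_of_isCompact {S : Set V} (hS : IsCompact S)
    (hmeas : AEStronglyMeasurable h) (hB : ∀ x, |h x| ≤ B) (hsupp : ∀ x ∉ S, h x = 0) :
    IsBoundedIntegrable B h := by
  refine ⟨(integrableOn_iff_integrable_of_support_subset fun x hx => ?_).1
    ((integrableOn_const (C := B) hS.measure_lt_top.ne).mono' hmeas.restrict (ae_of_all _ hB)), hB⟩
  exact not_imp_comm.1 (hsupp x) hx

lemma exists_isBoundedIntegrable_of_hasCompactSupport (hc : Continuous h)
    (hs : HasCompactSupport h) : ∃ B, IsBoundedIntegrable B h :=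
  (hs.exists_bound_of_continuous hc).imp fun _ hB =>
    ⟨hc.integrable_of_hasCompactSupport hs, hB⟩

lemma besselPotential_neg (m : ℝ) (h : V → ℝ) (x : V) :
    besselPotential m (-h) x = -besselPotential m h x := by
  rw [← neg_one_smul ℝ h, besselPotential_smul, neg_one_mul]

lemma besselGradient_neg (m : ℝ) (h : V → ℝ) (x : V) :
    besselGradient m (-h) x = -besselGradient m h x := by
  rw [← neg_one_smul ℝ h, besselGradient_smul, neg_one_smul]

lemma besselPotential_sub (hm : 0 < m) (hh : IsBoundedIntegrable B h)
    (hh' : IsBoundedIntegrable B' h') (x : V) :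
    besselPotential m (h - h') x = besselPotential m h x - besselPotential m h' x := by
  rw [sub_eq_add_neg, besselPotential_add hm hh hh'.neg, besselPotential_neg, sub_eq_add_neg]

lemma besselGradient_sub (hm : 0 < m) (hh : IsBoundedIntegrable B h)
    (hh' : IsBoundedIntegrable B' h') (x : V) :
    besselGradient m (h - h') x = besselGradient m h x - besselGradient m h' x := by
  rw [sub_eq_add_neg, besselGradient_add hm hh hh'.neg, besselGradient_neg, sub_eq_add_neg]

lemma besselPotential_sum (hm : 0 < m) {ι : Type*} (s : Finset ι) {f : ι → V → ℝ} {b : ι → ℝ}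
    (hf : ∀ i ∈ s, IsBoundedIntegrable (b i) (f i)) (x : V) :
    besselPotential m (∑ i ∈ s, f i) x = ∑ i ∈ s, besselPotential m (f i) x := by
  classical
  induction s using Finset.induction_on with
  | empty => simpa using besselPotential_smul m 0 (0 : V → ℝ) x
  | insert a s ha ih =>
    obtain ⟨hfa, hfs⟩ := Finset.forall_mem_insert _ _ _ |>.1 hf
    rw [Finset.sum_insert ha, Finset.sum_insert ha,
      besselPotential_add hm hfa (IsBoundedIntegrable.sum s hfs), ih hfs]

variable {hs : ℕ → V → ℝ} {S : Set V}

lemma tendsto_besselPotential (hm : 0 < m) (hS : IsCompact S)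
    (hmeas : ∀ j, AEStronglyMeasurable (hs j)) (hB : ∀ j x, |hs j x| ≤ B)
    (hsupp : ∀ j, ∀ x ∉ S, hs j x = 0) (hlim : ∀ x, Tendsto (hs · x) atTop (𝓝 (h x))) (x : V) :
    Tendsto (fun j => besselPotential m (hs j) x) atTop (𝓝 (besselPotential m h x)) :=
  isRegularKernel_heatKernel.tendsto_laplaceConvolution hm neg_one_lt_zero hS hmeas hB hsupp hlim
    (fun j => (isBoundedIntegrable_of_isCompact hS (hmeas j) (hB j)
      (hsupp j)).norm_convolution_heatKernel_le_rpow) x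

lemma tendsto_besselGradient (hm : 0 < m) (hS : IsCompact S)
    (hmeas : ∀ j, AEStronglyMeasurable (hs j)) (hB : ∀ j x, |hs j x| ≤ B)
    (hsupp : ∀ j, ∀ x ∉ S, hs j x = 0) (hlim : ∀ x, Tendsto (hs · x) atTop (𝓝 (h x))) (x : V) :
    Tendsto (fun j => besselGradient m (hs j) x) atTop (𝓝 (besselGradient m h x)) :=
  isRegularKernel_fderiv_heatKernel.tendsto_laplaceConvolution hm (by norm_num) hS hmeas hB hsupp
    hlim (fun j _ ht => norm_convolution_fderiv_heatKernel_le (hB j) ht) x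

/- Both sides compute the derivative of `h ⋆ heatKernel t`. -/
lemma convolution_fderiv_heatKernel_apply (hh : ContDiff ℝ 1 h) (hs : HasCompactSupport h) {t : ℝ}
    (ht : 0 < t) (x v : V) :
    (h ⋆ fderiv ℝ (heatKernel t)) x v = ((fun y => fderiv ℝ h y v) ⋆ heatKernel t) x := by
  have hloc : LocallyIntegrable (heatKernel (V := V) t) :=
    (continuous_heatKernel t).locallyIntegrable
  rw [(hasFDerivAt_convolution_heatKernel (hh.continuous.integrable_of_hasCompactSupport hs) ht
    x).unique (hs.hasFDerivAt_convolution_left (.lsmul ℝ ℝ) hh hloc x)]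
  have hexists : ConvolutionExists (fderiv ℝ h) (heatKernel t)
      ((ContinuousLinearMap.lsmul ℝ ℝ).precompL V) :=
    (hs.fderiv ℝ).convolutionExists_left _ (hh.continuous_fderiv one_ne_zero) hloc
  exact ContinuousLinearMap.integral_apply (hexists x) v

lemma besselGradient_apply (hm : 0 < m) (hh : ContDiff ℝ 1 h) (hs : HasCompactSupport h)
    (x v : V) : besselGradient m h x v = besselPotential m (fun y => fderiv ℝ h y v) x := by
  obtain ⟨B, hB⟩ := exists_isBoundedIntegrable_of_hasCompactSupport hh.continuous hs
  have hint := isRegularKernel_fderiv_heatKernel.integrableOn_laplaceConvolution hm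
    (by norm_num) hB.integrable (fun _ ht => norm_convolution_fderiv_heatKernel_le hB.abs_le ht) x
  rw [besselGradient, laplaceConvolution, ContinuousLinearMap.integral_apply hint]
  refine setIntegral_congr_fun measurableSet_Ioi fun t ht => ?_
  exact congrArg (Real.exp (-(m * t)) • ·) (convolution_fderiv_heatKernel_apply hh hs ht x v)

end Resolvent

section BoundedHolder

variable {X E F G : Type*} [MetricSpace X] [NormedAddCommGroup E] [NormedAddCommGroup F]
  [NormedAddCommGroup G] {α : ℝ≥0}

/-- Bounded functions that are Hölder continuous with exponent `α`. -/
structure IsBoundedHolder (α : ℝ≥0) (f : X → E) : Prop where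
  exists_norm_le : ∃ B, ∀ x, ‖f x‖ ≤ B
  memHolder : MemHolder α f

lemma holderWith_zero_of_norm_le {f : X → E} {B : ℝ≥0} (hB : ∀ x, ‖f x‖ ≤ B) :
    HolderWith (2 * B) 0 f :=
  holderWith_of_dist_le fun x y => by
    rw [NNReal.coe_zero, Real.rpow_zero, mul_one, dist_eq_norm, NNReal.coe_mul, NNReal.coe_ofNat]
    linarith [norm_sub_le (f x) (f y), hB x, hB y]

lemma holderWith_of_lipschitzWith_of_norm_le {f : X → E} {B C : ℝ≥0} (hf : LipschitzWith C f)
    (hB : ∀ x, ‖f x‖ ≤ B) (hα₁ : α ≤ 1) : HolderWith (max (2 * B) C) α f :=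
  (holderWith_zero_of_norm_le hB).of_le_of_le (holderWith_one.2 hf) zero_le hα₁

lemma IsBoundedHolder.add {f g : X → E} (hf : IsBoundedHolder α f) (hg : IsBoundedHolder α g) :
    IsBoundedHolder α (f + g) := by
  obtain ⟨Bf, hBf⟩ := hf.exists_norm_le
  obtain ⟨Bg, hBg⟩ := hg.exists_norm_le
  exact ⟨⟨Bf + Bg, fun x => (norm_add_le _ _).trans (add_le_add (hBf x) (hBg x))⟩,
    hf.memHolder.add hg.memHolder⟩

lemma IsBoundedHolder.neg {f : X → E} (hf : IsBoundedHolder α f) : IsBoundedHolder α (-f) := by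
  obtain ⟨B, hB⟩ := hf.exists_norm_le
  refine ⟨⟨B, fun x => (norm_neg (f x)).trans_le (hB x)⟩, ?_⟩
  exact (holderWith_of_dist_le fun x y =>
    (dist_neg_neg (f x) (f y)).trans_le (hf.memHolder.holderWith.dist_le x y)).memHolder

lemma IsBoundedHolder.sub {f g : X → E} (hf : IsBoundedHolder α f) (hg : IsBoundedHolder α g) :
    IsBoundedHolder α (f - g) := by
  simpa only [sub_eq_add_neg] using hf.add hg.neg

variable [NormedSpace ℝ E] [NormedSpace ℝ F] [NormedSpace ℝ G]

lemma norm_bilinear_sub_le_of_holderWith {f : X → E} {g : X → F} {Cf Cg : ℝ≥0} {Bf Bg : ℝ}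
    (hf : HolderWith Cf α f) (hg : HolderWith Cg α g) (hBf : ∀ x, ‖f x‖ ≤ Bf)
    (hBg : ∀ x, ‖g x‖ ≤ Bg) (L : E →L[ℝ] F →L[ℝ] G) (x y : X) :
    ‖L (f x) (g x) - L (f y) (g y)‖ ≤ ‖L‖ * (Bf * Cg + Cf * Bg) * dist x y ^ (α : ℝ) := by
  have hsplit : L (f x) (g x) - L (f y) (g y) = L (f x) (g x - g y) + L (f x - f y) (g y) := by
    simp only [map_sub, sub_apply, sub_add_sub_cancel]
  have hfd := hf.dist_le x y
  have hgd := hg.dist_le x y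
  rw [dist_eq_norm] at hfd hgd
  have hfx := hBf x
  have hgy := hBg y
  calc ‖L (f x) (g x) - L (f y) (g y)‖
      ≤ ‖L‖ * ‖f x‖ * ‖g x - g y‖ + ‖L‖ * ‖f x - f y‖ * ‖g y‖ := by
        rw [hsplit]
        exact norm_add_le_of_le (L.le_opNorm₂ _ _) (L.le_opNorm₂ _ _)
    _ ≤ ‖L‖ * Bf * (Cg * dist x y ^ (α : ℝ)) + ‖L‖ * (Cf * dist x y ^ (α : ℝ)) * Bg := by
        have : 0 ≤ Bf := (norm_nonneg _).trans hfx
        gcongr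
    _ = ‖L‖ * (Bf * Cg + Cf * Bg) * dist x y ^ (α : ℝ) := by ring

lemma IsBoundedHolder.bilinear {f : X → E} {g : X → F} (hf : IsBoundedHolder α f)
    (hg : IsBoundedHolder α g) (L : E →L[ℝ] F →L[ℝ] G) :
    IsBoundedHolder α fun x => L (f x) (g x) := by
  obtain ⟨Bf, hBf⟩ := hf.exists_norm_le
  obtain ⟨Bg, hBg⟩ := hg.exists_norm_le
  refine ⟨⟨‖L‖ * Bf * Bg, fun x => (L.le_opNorm₂ _ _).trans ?_⟩,
    (holderWith_of_dist_le (C := (‖L‖ * (Bf * nnHolderNorm α g + nnHolderNorm α f * Bg)).toNNReal)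
      fun x y => ?_).memHolder⟩
  · have hfx := hBf x
    have hgx := hBg x
    have : 0 ≤ Bf := (norm_nonneg _).trans hfx
    gcongr
  · rw [dist_eq_norm]
    refine (norm_bilinear_sub_le_of_holderWith hf.memHolder.holderWith hg.memHolder.holderWith
      hBf hBg L x y).trans ?_
    gcongr
    exact Real.le_coe_toNNReal _

lemma isBoundedHolder_of_hasCompactSupport {V : Type*} [NormedAddCommGroup V] [NormedSpace ℝ V]
    {f : V → E} (hf : ContDiff ℝ 1 f) (hs : HasCompactSupport f) (hα₁ : α ≤ 1) :
    IsBoundedHolder α f := by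
  obtain ⟨B, hB⟩ := hs.exists_bound_of_continuous hf.continuous
  obtain ⟨C, hC⟩ := hf.lipschitzWith_of_hasCompactSupport hs one_ne_zero
  lift B to ℝ≥0 using (norm_nonneg _).trans (hB 0)
  exact ⟨⟨B, hB⟩, (holderWith_of_lipschitzWith_of_norm_le hC hB hα₁).memHolder⟩

end BoundedHolder

section Representation

variable {V : Type*} [NormedAddCommGroup V] [InnerProductSpace ℝ V]

lemma fderiv_fderiv_apply {f : V → ℝ} {x : V} (hf : ContDiffAt ℝ 2 f x) (v w : V) :
    fderiv ℝ (fun y => fderiv ℝ f y v) x w = fderiv ℝ (fderiv ℝ f) x w v := by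
  have hdiff : DifferentiableAt ℝ (fderiv ℝ f) x :=
    (hf.fderiv_right (m := 1) (by norm_num)).differentiableAt one_ne_zero
  rw [(hdiff.hasFDerivAt.clm_apply (hasFDerivAt_const v x)).fderiv]
  simp

lemma continuous_fderiv_fderiv_apply {w : V → ℝ} (hw : ContDiff ℝ 2 w) (v v' : V) :
    Continuous fun y => fderiv ℝ (fun y => fderiv ℝ w y v') y v :=
  (((hw.fderiv_right (m := 1) (by norm_num)).clm_apply contDiff_const).continuous_fderiv
    one_ne_zero).clm_apply continuous_const

variable [FiniteDimensional ℝ V]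

lemma hasCompactSupport_laplacian {w : V → ℝ} (hs : HasCompactSupport w) :
    HasCompactSupport (Δ w) := by
  have : Δ w = fun x => bilinTrace V (fderiv ℝ (fderiv ℝ w) x) :=
    funext (laplacian_eq_bilinTrace w)
  rw [this]
  exact ((hs.fderiv ℝ).fderiv ℝ).comp_left (map_zero _)

lemma laplacian_eq_sum_fderiv {f : V → ℝ} {x : V} (hf : ContDiffAt ℝ 2 f x) :
    Δ f x = ∑ i, fderiv ℝ (fun y => fderiv ℝ f y (stdOrthonormalBasis ℝ V i)) x
      (stdOrthonormalBasis ℝ V i) := by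
  simp only [laplacian_eq_bilinTrace, bilinTrace_apply, fderiv_fderiv_apply hf]

variable [MeasurableSpace V] [BorelSpace V] {m : ℝ}

lemma besselHessian_apply (hm : 0 < m) {w : V → ℝ} (hw : ContDiff ℝ 2 w)
    (hs : HasCompactSupport w) (x v v' : V) :
    besselHessian m w x v v' =
      besselPotential m (fun y => fderiv ℝ (fun y => fderiv ℝ w y v') y v) x := by
  have hw₁ : ContDiff ℝ 1 w := hw.of_le (by norm_num)
  have hd : ContDiff ℝ 1 fun y => fderiv ℝ w y v' :=
    (hw.fderiv_right (m := 1) (by norm_num)).clm_apply contDiff_const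
  have hds : HasCompactSupport fun y => fderiv ℝ w y v' := hs.fderiv_apply (𝕜 := ℝ) v'
  obtain ⟨B, hB⟩ := exists_isBoundedIntegrable_of_hasCompactSupport hw.continuous hs
  obtain ⟨B', hB'⟩ := exists_isBoundedIntegrable_of_hasCompactSupport hd.continuous hds
  have hgrad := ((hasFDerivAt_besselGradient hm hB
    (isBoundedHolder_of_hasCompactSupport hw₁ hs le_rfl).memHolder one_pos le_rfl
    x).clm_apply (hasFDerivAt_const v' x)).fderiv
  have hpot := (hasFDerivAt_besselPotential hm hB' x).fderiv
  rw [← funext fun y => besselGradient_apply hm hw₁ hs y v', hgrad] at hpot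
  simpa [besselGradient_apply hm hd hds] using congrArg (fun L : V →L[ℝ] ℝ => L v) hpot

lemma besselPotential_smul_sub_laplacian (hm : 0 < m) {w : V → ℝ} (hw : ContDiff ℝ 2 w)
    (hs : HasCompactSupport w) (x : V) : besselPotential m (m • w - Δ w) x = w x := by
  set e := stdOrthonormalBasis ℝ V
  obtain ⟨B, hB⟩ := exists_isBoundedIntegrable_of_hasCompactSupport hw.continuous hs
  choose b hb using fun i => exists_isBoundedIntegrable_of_hasCompactSupport
    (continuous_fderiv_fderiv_apply hw (e i) (e i)) ((hs.fderiv_apply (𝕜 := ℝ) (e i)).fderiv_apply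
      (𝕜 := ℝ) (e i))
  have hlap : Δ w = ∑ i, fun y => fderiv ℝ (fun y => fderiv ℝ w y (e i)) y (e i) := by
    ext y
    rw [Finset.sum_apply, laplacian_eq_sum_fderiv hw.contDiffAt]
  have htrace := bilinTrace_besselHessian hm hB (isBoundedHolder_of_hasCompactSupport
    (hw.of_le (by norm_num)) hs le_rfl).memHolder one_pos le_rfl x
  simp only [bilinTrace_apply, besselHessian_apply hm hw hs] at htrace
  rw [hlap, besselPotential_sub hm (hB.smul m) (.sum _ fun i _ => hb i), besselPotential_smul,
    besselPotential_sum hm _ fun i _ => hb i, htrace, sub_sub_cancel]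

end Representation

/-! ### The maximum principle and the linear problem with drift -/

section MaximumPrinciple

lemma deriv_deriv_nonneg_of_isLocalMin {f : ℝ → ℝ} {x : ℝ} (hmin : IsLocalMin f x)
    (hf : ContinuousAt f x) : 0 ≤ deriv (deriv f) x := by
  by_contra! hneg
  have hmax := isLocalMax_of_deriv_deriv_neg hneg hmin.deriv_eq_zero hf
  have hconst : f =ᶠ[𝓝 x] fun _ => f x := by
    filter_upwards [hmin, hmax] with y hle hge using le_antisymm hge hle
  have hzero : deriv (deriv f) x = 0 := by
    simpa only [deriv_const'] using hconst.deriv.deriv_eq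
  exact hneg.ne hzero

variable {V : Type*} [NormedAddCommGroup V] [InnerProductSpace ℝ V]

lemma fderiv_fderiv_nonneg_of_isLocalMin {f : V → ℝ} {x : V} (hf : ContDiffAt ℝ 2 f x)
    (hmin : IsLocalMin f x) (v : V) : 0 ≤ fderiv ℝ (fderiv ℝ f) x v v := by
  have hline (t : ℝ) : HasDerivAt (fun t : ℝ => x + t • v) v t := by
    simpa using ((hasDerivAt_id t).smul_const v).const_add x
  have hto : Tendsto (fun t : ℝ => x + t • v) (𝓝 0) (𝓝 x) := by
    simpa using (hline 0).continuousAt.tendsto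
  have hderiv : deriv (fun t : ℝ => f (x + t • v)) =ᶠ[𝓝 0]
      fun t => fderiv ℝ f (x + t • v) v := by
    filter_upwards [hto.eventually (hf.eventually (by simp))] with t ht
    exact ((ht.differentiableAt two_ne_zero).hasFDerivAt.comp_hasDerivAt t (hline t)).deriv
  have hdiff : HasFDerivAt (fun y => fderiv ℝ f y v)
      (fderiv ℝ (fun y => fderiv ℝ f y v) x) (x + (0 : ℝ) • v) := by
    rw [zero_smul, add_zero]
    exact (((hf.fderiv_right (m := 1) (by norm_num)).clm_apply contDiffAt_const).differentiableAt
      one_ne_zero).hasFDerivAt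
  have hsecond : deriv (deriv fun t : ℝ => f (x + t • v)) 0 = fderiv ℝ (fderiv ℝ f) x v v := by
    rw [hderiv.deriv_eq, ← fderiv_fderiv_apply hf]
    exact (hdiff.comp_hasDerivAt 0 (hline 0)).deriv
  have hcont : ContinuousAt (fun t : ℝ => f (x + t • v)) 0 := by
    refine ContinuousAt.comp (g := f) ?_ (hline 0).continuousAt
    simpa using hf.continuousAt
  rw [← hsecond]
  refine deriv_deriv_nonneg_of_isLocalMin ?_ hcont
  filter_upwards [hto.eventually hmin] with t ht
  simpa using ht

variable [FiniteDimensional ℝ V]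

lemma laplacian_nonneg_of_isLocalMin {f : V → ℝ} {x : V} (hf : ContDiffAt ℝ 2 f x)
    (hmin : IsLocalMin f x) : 0 ≤ Δ f x := by
  rw [laplacian_eq_bilinTrace, bilinTrace_apply]
  exact Finset.sum_nonneg fun i _ => fderiv_fderiv_nonneg_of_isLocalMin hf hmin _

lemma laplacian_norm_sq (x : V) : Δ (fun y : V => ‖y‖ ^ 2) x = 2 * finrank ℝ V := by
  have hfirst : fderiv ℝ (fun y : V => ‖y‖ ^ 2) = ((2 : ℝ) • realInnerSL V : V →L[ℝ] V →L[ℝ] ℝ) :=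
    funext fun y => by
      rw [(hasStrictFDerivAt_norm_sq y).hasFDerivAt.fderiv, ← Nat.cast_smul_eq_nsmul ℝ]
      rfl
  rw [laplacian_eq_bilinTrace, hfirst, ContinuousLinearMap.fderiv, bilinTrace_apply]
  simp [realInnerSL_apply, mul_comm]

variable {w : V → ℝ} {b : V → V} {m c : ℝ}

lemma neg_mul_le_of_isLocalMin_add_norm_sq {ε : ℝ} {x : V} (hw : ContDiff ℝ 2 w)
    (hb : ∀ x, -c ≤ ⟪x, b x⟫) (hm : 0 < m) (hε : 0 < ε)
    (hsuper : 0 ≤ -Δ w x + fderiv ℝ w x (b x) + m * w x)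
    (hmin : IsLocalMin (w + ε • fun y => ‖y‖ ^ 2) x) :
    -(ε * ((2 * finrank ℝ V + 2 * c) / m)) ≤ w x := by
  have hsq : ContDiffAt ℝ 2 (fun y : V => ‖y‖ ^ 2) x := (contDiff_norm_sq ℝ).contDiffAt
  have hεsq : ContDiffAt ℝ 2 (ε • fun y : V => ‖y‖ ^ 2) x := hsq.const_smul ε
  have hgrad : fderiv ℝ w x (b x) = -(ε * (2 * ⟪x, b x⟫)) := by
    have hzero := hmin.fderiv_eq_zero
    rw [fderiv_add (hw.differentiable two_ne_zero x)
      (hεsq.differentiableAt two_ne_zero), fderiv_const_smul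
      (hsq.differentiableAt two_ne_zero), (hasStrictFDerivAt_norm_sq x).hasFDerivAt.fderiv] at hzero
    simpa [add_eq_zero_iff_eq_neg] using congrArg (fun L : V →L[ℝ] ℝ => L (b x)) hzero
  have hlap : -(ε * (2 * finrank ℝ V)) ≤ Δ w x := by
    have hnonneg := laplacian_nonneg_of_isLocalMin (f := w + ε • fun y => ‖y‖ ^ 2)
      (hw.contDiffAt.add hεsq) hmin
    rw [hw.contDiffAt.laplacian_add hεsq, laplacian_smul ε hsq, laplacian_norm_sq,
      smul_eq_mul] at hnonneg
    linarith
  rw [mul_div_assoc', ← neg_div, div_le_iff₀ hm]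
  nlinarith [hb x]

lemma nonneg_of_supersolution (hw : ContDiff ℝ 2 w) (hbelow : BddBelow (range w))
    (hb : ∀ x, -c ≤ ⟪x, b x⟫) (hm : 0 < m)
    (hsuper : ∀ x, 0 ≤ -Δ w x + fderiv ℝ w x (b x) + m * w x) (x : V) : 0 ≤ w x := by
  obtain ⟨M, hM⟩ := hbelow
  set K : ℝ := (2 * finrank ℝ V + 2 * c) / m
  have hperturbed (ε : ℝ) (hε : 0 < ε) : -(ε * K) ≤ w x + ε * ‖x‖ ^ 2 := by
    have hcoercive : Tendsto (w + ε • fun y => ‖y‖ ^ 2) (cocompact V) atTop :=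
      tendsto_atTop_add_left_of_le _ M (fun y => hM (mem_range_self y))
        (((tendsto_pow_atTop two_ne_zero).comp
          (tendsto_norm_cocompact_atTop (E := V))).const_mul_atTop hε)
    obtain ⟨x₀, hx₀⟩ := (hw.add ((contDiff_norm_sq ℝ).const_smul ε)).continuous.exists_forall_le
      hcoercive
    have hle := neg_mul_le_of_isLocalMin_add_norm_sq hw hb hm hε (hsuper x₀)
      (Eventually.of_forall hx₀)
    have hx : w x₀ + ε * ‖x₀‖ ^ 2 ≤ w x + ε * ‖x‖ ^ 2 := hx₀ x
    linarith [mul_nonneg hε.le (sq_nonneg ‖x₀‖)]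
  have hleft : Tendsto (fun ε : ℝ => -(ε * K)) (𝓝[>] 0) (𝓝 0) :=
    tendsto_nhdsWithin_of_tendsto_nhds (Continuous.tendsto' (by fun_prop) _ _ (by simp))
  have hright : Tendsto (fun ε : ℝ => w x + ε * ‖x‖ ^ 2) (𝓝[>] 0) (𝓝 (w x)) :=
    tendsto_nhdsWithin_of_tendsto_nhds (Continuous.tendsto' (by fun_prop) _ _ (by simp))
  exact le_of_tendsto_of_tendsto hleft hright (eventually_nhdsWithin_of_forall hperturbed)

end MaximumPrinciple

section LinearProblem

open BoundedContinuousFunction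

variable {V : Type*} [NormedAddCommGroup V] [InnerProductSpace ℝ V] [FiniteDimensional ℝ V]
  [MeasurableSpace V] [BorelSpace V] {m B Cb : ℝ} {α : ℝ≥0} {f h : V → ℝ} {b : V → V}

lemma isBoundedIntegrable_indicator {S : Set V} (hS : IsCompact S) (p : V →ᵇ ℝ) :
    IsBoundedIntegrable ‖p‖ (S.indicator p) := by
  refine isBoundedIntegrable_of_isCompact hS
    (p.continuous.measurable.indicator hS.measurableSet).aestronglyMeasurable (fun x => ?_)
    fun x hx => indicator_of_notMem hx _
  exact (norm_indicator_le_norm_self _ _).trans (p.norm_coe_le_norm x)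

lemma isBoundedHolder_besselGradient (hm : 0 < m) (hh : IsBoundedIntegrable B h) (hα : α < 1) :
    IsBoundedHolder α (besselGradient m h) :=
  ⟨⟨_, norm_besselGradient_le hm hh.abs_le⟩,
    ((exists_holderWith_besselGradient hm hα B).choose_spec h hh).memHolder⟩

lemma abs_besselGradient_apply_le (hm : 0 < m) (hh : IsBoundedIntegrable B h)
    (hCb : ∀ x, ‖b x‖ ≤ Cb) (x : V) :
    |besselGradient m h x (b x)| ≤ B * (doublingConst V * laplaceRpow m (-(1 / 2)) * Cb) := by
  have hgrad := norm_besselGradient_le hm hh.abs_le x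
  have hbx := hCb x
  calc |besselGradient m h x (b x)| ≤ ‖besselGradient m h x‖ * ‖b x‖ :=
        (besselGradient m h x).le_opNorm _
    _ ≤ B * doublingConst V * laplaceRpow m (-(1 / 2)) * Cb := by
        have := (norm_nonneg _).trans hgrad
        gcongr
    _ = B * (doublingConst V * laplaceRpow m (-(1 / 2)) * Cb) := by ring

lemma exists_eq_besselGradient_sub_indicator (hb : Continuous b) (hbs : HasCompactSupport b)
    (hCb : ∀ x, ‖b x‖ ≤ Cb) (hm : 0 < m)
    (hsmall : doublingConst V * laplaceRpow m (-(1 / 2)) * Cb ≤ 1 / 2)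
    (hf : IsBoundedIntegrable B f) :
    ∃ p : V →ᵇ ℝ, ∀ x, p x = besselGradient m (f - (tsupport b).indicator p) x (b x) := by
  set S := tsupport b
  have hS : IsCompact S := hbs
  have hsub (p : V →ᵇ ℝ) := hf.sub (isBoundedIntegrable_indicator hS p)
  let T : (V →ᵇ ℝ) → (V →ᵇ ℝ) := fun p =>
    BoundedContinuousFunction.ofNormedAddCommGroup
      (fun x => besselGradient m (f - S.indicator p) x (b x))
      ((continuous_besselGradient hm (hsub p)).clm_apply hb) _
      (abs_besselGradient_apply_le hm (hsub p) hCb)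
  have hdiff (p q : V →ᵇ ℝ) (x : V) :
      T p x - T q x = besselGradient m (S.indicator (q - p)) x (b x) := by
    change besselGradient m (f - S.indicator p) x (b x) -
      besselGradient m (f - S.indicator q) x (b x) = _
    rw [← _root_.sub_apply, ← besselGradient_sub hm (hsub p) (hsub q), sub_sub_sub_cancel_left,
      ← indicator_sub']
  have hT : ContractingWith (1 / 2) T := by
    refine ⟨by norm_num [← NNReal.coe_lt_coe], LipschitzWith.of_dist_le_mul fun p q => ?_⟩
    refine (BoundedContinuousFunction.dist_le (by positivity)).2 fun x => ?_
    rw [Real.dist_eq, hdiff, dist_comm, dist_eq_norm]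
    refine (abs_besselGradient_apply_le hm (isBoundedIntegrable_indicator hS (q - p)) hCb
      x).trans ?_
    rw [mul_comm ((1 / 2 : ℝ≥0) : ℝ)]
    exact mul_le_mul_of_nonneg_left (hsmall.trans (by norm_num)) (norm_nonneg _)
  exact ⟨hT.fixedPoint, fun x => congrArg (fun q : V →ᵇ ℝ => q x) hT.fixedPoint_isFixedPt.symm⟩

lemma exists_eq_besselGradient_sub (hb : Continuous b) (hbs : HasCompactSupport b)
    (hCb : ∀ x, ‖b x‖ ≤ Cb) (hm : 0 < m)
    (hsmall : doublingConst V * laplaceRpow m (-(1 / 2)) * Cb ≤ 1 / 2)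
    (hf : IsBoundedIntegrable B f) :
    ∃ (p : V → ℝ) (B' : ℝ), IsBoundedIntegrable B' p ∧
      ∀ x, p x = besselGradient m (f - p) x (b x) := by
  obtain ⟨p, hp⟩ := exists_eq_besselGradient_sub_indicator hb hbs hCb hm hsmall hf
  have hsupp : (tsupport b).indicator p = p := by
    refine indicator_eq_self.2 fun x hx => ?_
    by_contra hxb
    refine hx ?_
    rw [hp, image_eq_zero_of_notMem_tsupport hxb, map_zero]
  rw [hsupp] at hp
  exact ⟨p, ‖p‖, hsupp ▸ isBoundedIntegrable_indicator hbs p, hp⟩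

lemma exists_solution_linear_drift_problem (hb : ContDiff ℝ 1 b) (hbs : HasCompactSupport b)
    (hCb : ∀ x, ‖b x‖ ≤ Cb) (hm : 0 < m)
    (hsmall : doublingConst V * laplaceRpow m (-(1 / 2)) * Cb ≤ 1 / 2)
    (hf : IsBoundedIntegrable B f) (hfα : IsBoundedHolder α f) (hα₀ : 0 < α) (hα₁ : α < 1) :
    ∃ v : V → ℝ, ContDiff ℝ 2 v ∧ (∃ M, ∀ x, |v x| ≤ M) ∧
      ∀ x, -Δ v x + fderiv ℝ v x (b x) + m * v x = f x := by
  obtain ⟨p, B', hp, hfix⟩ := exists_eq_besselGradient_sub hb.continuous hbs hCb hm hsmall hf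
  have hfp := hf.sub hp
  have hpα : IsBoundedHolder α p := by
    rw [funext hfix]
    exact (isBoundedHolder_besselGradient hm hfp hα₁).bilinear
      (isBoundedHolder_of_hasCompactSupport hb hbs hα₁.le) (ContinuousLinearMap.id ℝ _)
  have hfpα := (hfα.sub hpα).memHolder
  refine ⟨besselPotential m (f - p), contDiff_two_besselPotential hm hfp hfpα hα₀ hα₁.le,
    ⟨_, abs_besselPotential_le hm hfp.abs_le⟩, fun x => ?_⟩
  rw [laplacian_besselPotential hm hfp hfpα hα₀ hα₁.le, fderiv_besselPotential hm hfp, ← hfix,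
    Pi.sub_apply]
  ring

end LinearProblem

/-! ### The localized weak formulation -/

section VectorCalculus

variable {V : Type*} [NormedAddCommGroup V] [InnerProductSpace ℝ V]

lemma contDiff_of_contDiffAt_tsupport {E F : Type*} [NormedAddCommGroup E] [NormedSpace ℝ E]
    [NormedAddCommGroup F] [NormedSpace ℝ F] {f : E → F} {k : WithTop ℕ∞}
    (hf : ∀ x ∈ tsupport f, ContDiffAt ℝ k f x) : ContDiff ℝ k f :=
  contDiff_iff_contDiffAt.2 fun x => by
    by_cases hx : x ∈ tsupport f
    · exact hf x hx
    · exact contDiffAt_const.congr_of_eventuallyEq (notMem_tsupport_iff_eventuallyEq.1 hx)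

lemma contDiff_smul_of_contDiffAt {E F : Type*} [NormedAddCommGroup E] [NormedSpace ℝ E]
    [NormedAddCommGroup F] [NormedSpace ℝ F] {v : E → ℝ} {f : E → F} {k : WithTop ℕ∞}
    (hf : ContDiff ℝ k f) (hv : ∀ x ∈ tsupport f, ContDiffAt ℝ k v x) :
    ContDiff ℝ k fun x => v x • f x :=
  contDiff_of_contDiffAt_tsupport fun x hx =>
    (hv x (tsupport_smul_subset_right v f hx)).smul hf.contDiffAt

/-- The divergence of a vector field on an inner product space. -/
def divergence (X : V → V) (x : V) : ℝ :=
  LinearMap.trace ℝ V (fderiv ℝ X x)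

lemma divergence_of_notMem_tsupport {X : V → V} {x : V} (hx : x ∉ tsupport X) :
    divergence X x = 0 := by
  rw [divergence, (notMem_tsupport_iff_eventuallyEq.1 hx).fderiv_eq]
  simp

lemma hasCompactSupport_divergence {X : V → V} (hs : HasCompactSupport X) :
    HasCompactSupport (divergence X) :=
  .intro hs fun _ => divergence_of_notMem_tsupport

lemma divergence_add {X Y : V → V} {x : V} (hX : DifferentiableAt ℝ X x)
    (hY : DifferentiableAt ℝ Y x) :
    divergence (fun y => X y + Y y) x = divergence X x + divergence Y x := by
  rw [divergence, fderiv_fun_add hX hY, ContinuousLinearMap.toLinearMap_add, map_add]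
  rfl

variable [FiniteDimensional ℝ V]

lemma divergence_eq_sum_inner (X : V → V) (x : V) :
    divergence X x = ∑ i, ⟪stdOrthonormalBasis ℝ V i, fderiv ℝ X x (stdOrthonormalBasis ℝ V i)⟫ :=
  LinearMap.trace_eq_sum_inner _ _

lemma continuous_divergence {X : V → V} (hX : ContDiff ℝ 1 X) : Continuous (divergence X) := by
  simp only [funext (divergence_eq_sum_inner X)]
  exact continuous_finsetSum _ fun i _ => continuous_const.inner
    ((hX.continuous_fderiv one_ne_zero).clm_apply continuous_const)

lemma divergence_smul {v : V → ℝ} {X : V → V} {x : V} (hv : DifferentiableAt ℝ v x)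
    (hX : DifferentiableAt ℝ X x) :
    divergence (fun y => v y • X y) x = v x * divergence X x + fderiv ℝ v x (X x) := by
  set e := stdOrthonormalBasis ℝ V
  have hbasis : fderiv ℝ v x (X x) = ∑ i, ⟪e i, X x⟫ * fderiv ℝ v x (e i) := by
    conv_lhs => rw [← e.sum_repr' (X x)]
    simp only [map_sum, map_smul, smul_eq_mul]
  rw [hbasis, divergence_eq_sum_inner, divergence_eq_sum_inner, Finset.mul_sum,
    ← Finset.sum_add_distrib]
  refine Finset.sum_congr rfl fun i _ => ?_
  rw [fderiv_fun_smul hv hX]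
  simp only [add_apply, smul_apply, ContinuousLinearMap.smulRight_apply, inner_add_right,
    inner_smul_right]
  ring

lemma contDiffAt_gradient {f : V → ℝ} {x : V} {k l : WithTop ℕ∞} (hf : ContDiffAt ℝ l f x)
    (hkl : k + 1 ≤ l) : ContDiffAt ℝ k (∇ f) x := by
  have h := hf.fderiv_right hkl
  exact (toDual ℝ V).symm.contDiff.contDiffAt.comp x h

lemma differentiableAt_gradient {f : V → ℝ} {x : V} (hf : ContDiffAt ℝ 2 f x) :
    DifferentiableAt ℝ (∇ f) x :=
  (contDiffAt_gradient hf one_add_one_eq_two.le).differentiableAt one_ne_zero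

lemma contDiff_laplacian {f : V → ℝ} {k l : WithTop ℕ∞} (hf : ContDiff ℝ l f)
    (hkl : k + 1 + 1 ≤ l) : ContDiff ℝ k (Δ f) := by
  rw [funext (laplacian_eq_bilinTrace f)]
  exact (bilinTrace V).contDiff.comp ((hf.fderiv_right hkl).fderiv_right le_rfl)

lemma divergence_gradient {f : V → ℝ} {x : V} (hf : ContDiffAt ℝ 2 f x) :
    divergence (∇ f) x = Δ f x := by
  rw [divergence_eq_sum_inner, laplacian_eq_sum_fderiv hf]
  refine Finset.sum_congr rfl fun i _ => ?_
  set e := stdOrthonormalBasis ℝ V i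
  have hinner : (fun y => fderiv ℝ f y e) = fun y => ⟪e, ∇ f y⟫ :=
    funext fun y => inner_gradient_right.symm
  rw [hinner, fderiv_inner_apply ℝ (differentiableAt_const e) (differentiableAt_gradient hf)]
  simp

lemma gradient_mul {f g : V → ℝ} {x : V} (hf : DifferentiableAt ℝ f x)
    (hg : DifferentiableAt ℝ g x) :
    ∇ (fun y => f y * g y) x = f x • ∇ g x + g x • ∇ f x := by
  simp [gradient, fderiv_fun_mul hf hg]

lemma laplacian_mul {f g : V → ℝ} {x : V} (hf : ContDiffAt ℝ 2 f x) (hg : ContDiffAt ℝ 2 g x) :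
    Δ (fun y => f y * g y) x =
      f x * Δ g x + g x * Δ f x + 2 * fderiv ℝ g x (∇ f x) := by
  have hgrad : ∇ (fun y => f y * g y) =ᶠ[𝓝 x] fun y => f y • ∇ g y + g y • ∇ f y := by
    filter_upwards [hf.eventually (by simp), hg.eventually (by simp)] with y hfy hgy
    exact gradient_mul (hfy.differentiableAt two_ne_zero) (hgy.differentiableAt two_ne_zero)
  have hf' := hf.differentiableAt two_ne_zero
  have hg' := hg.differentiableAt two_ne_zero
  have hsymm : fderiv ℝ f x (∇ g x) = fderiv ℝ g x (∇ f x) := by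
    rw [← inner_gradient_left, ← inner_gradient_left, real_inner_comm]
  rw [← divergence_gradient (hf.mul hg), divergence, hgrad.fderiv_eq, ← divergence,
    divergence_add (hf'.fun_smul (differentiableAt_gradient hg))
      (hg'.fun_smul (differentiableAt_gradient hf)),
    divergence_smul hf' (differentiableAt_gradient hg),
    divergence_smul hg' (differentiableAt_gradient hf), divergence_gradient hf,
    divergence_gradient hg, hsymm]
  ring

end VectorCalculus

section BesselDivergence

variable {V : Type*} [NormedAddCommGroup V] [InnerProductSpace ℝ V] [FiniteDimensional ℝ V]
  [MeasurableSpace V] [BorelSpace V] {m : ℝ} {X : V → V} {α : ℝ≥0}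

/-- The operator `(m - Δ)⁻¹ div` on vector fields `X`, defined without differentiating `X`: it is
the divergence of the Bessel potential of `X`. -/
def besselDivergence (m : ℝ) (X : V → V) (x : V) : ℝ :=
  ∑ i, besselGradient m (fun y => ⟪stdOrthonormalBasis ℝ V i, X y⟫) x (stdOrthonormalBasis ℝ V i)

/-- Vector fields whose components are integrable and bounded by `B`. -/
def IsBoundedIntegrableField (B : ℝ) (X : V → V) : Prop :=
  ∀ i, IsBoundedIntegrable B fun y => ⟪stdOrthonormalBasis ℝ V i, X y⟫

lemma besselDivergence_eq_besselPotential (hm : 0 < m) (hX : ContDiff ℝ 1 X)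
    (hs : HasCompactSupport X) (x : V) :
    besselDivergence m X x = besselPotential m (divergence X) x := by
  set e := stdOrthonormalBasis ℝ V
  have hcomp (i) : ContDiff ℝ 1 fun y => ⟪e i, X y⟫ := contDiff_const.inner ℝ hX
  have hcomps (i) : HasCompactSupport fun y => ⟪e i, X y⟫ :=
    hs.comp_left (g := fun z => ⟪e i, z⟫) (inner_zero_right _)
  have hdiv : divergence X = ∑ i, fun y => fderiv ℝ (fun y => ⟪e i, X y⟫) y (e i) := by
    ext y
    rw [divergence_eq_sum_inner, Finset.sum_apply]
    refine Finset.sum_congr rfl fun i _ => ?_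
    rw [fderiv_inner_apply ℝ (differentiableAt_const _) (hX.differentiable one_ne_zero y)]
    simp [e]
  choose b hb using fun i => exists_isBoundedIntegrable_of_hasCompactSupport
    (((hcomp i).continuous_fderiv one_ne_zero).clm_apply continuous_const)
    ((hcomps i).fderiv_apply (𝕜 := ℝ) (e i))
  rw [hdiv, besselPotential_sum hm _ fun i _ => hb i]
  exact Finset.sum_congr rfl fun i _ => besselGradient_apply hm (hcomp i) (hcomps i) x (e i)

lemma exists_holderWith_besselDivergence (hm : 0 < m) (hα : α < 1) (B : ℝ) :
    ∃ C, ∀ X : V → V, IsBoundedIntegrableField B X → HolderWith C α (besselDivergence m X) := by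
  obtain ⟨C, hC⟩ := exists_holderWith_besselGradient (V := V) hm hα B
  refine ⟨∑ _i : Fin (finrank ℝ V), C, fun X hX => holderWith_of_dist_le fun x y => ?_⟩
  simp only [besselDivergence, NNReal.coe_sum, Finset.sum_mul]
  refine (dist_sum_sum_le _ _ _).trans (Finset.sum_le_sum fun i _ => ?_)
  rw [dist_eq_norm, ← _root_.sub_apply]
  refine ((ContinuousLinearMap.le_opNorm _ _).trans_eq ?_).trans ((hC _ (hX i)).dist_le x y)
  rw [(stdOrthonormalBasis ℝ V).norm_eq_one, mul_one, dist_eq_norm]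

lemma contDiff_one_besselDivergence {B : ℝ} (hm : 0 < m) (hX : IsBoundedIntegrableField B X)
    (hXα : MemHolder α X) (hα₀ : 0 < α) (hα₁ : α ≤ 1) : ContDiff ℝ 1 (besselDivergence m X) := by
  refine ContDiff.sum fun i _ => ContDiff.clm_apply ?_ contDiff_const
  have hcomp : MemHolder α fun y => ⟪stdOrthonormalBasis ℝ V i, X y⟫ := by
    refine (holderWith_of_dist_le (C := nnHolderNorm α X) fun y z => ?_).memHolder
    rw [Real.dist_eq, ← inner_sub_right]
    refine (abs_real_inner_le_norm _ _).trans ?_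
    rw [(stdOrthonormalBasis ℝ V).norm_eq_one, one_mul, ← dist_eq_norm]
    exact hXα.holderWith.dist_le y z
  rw [← fderiv_besselPotential hm (hX i)]
  exact (contDiff_two_besselPotential hm (hX i) hcomp hα₀ hα₁).fderiv_right one_add_one_eq_two.le

lemma tendsto_besselDivergence {B : ℝ} {S : Set V} {Xs : ℕ → V → V} (hm : 0 < m) (hS : IsCompact S)
    (hXs : ∀ j, IsBoundedIntegrableField B (Xs j)) (hsupp : ∀ j, ∀ x ∉ S, Xs j x = 0)
    (hlim : ∀ x, Tendsto (Xs · x) atTop (𝓝 (X x))) (x : V) :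
    Tendsto (fun j => besselDivergence m (Xs j) x) atTop (𝓝 (besselDivergence m X x)) := by
  refine tendsto_finsetSum _ fun i _ => ?_
  have h := tendsto_besselGradient hm hS (fun j => (hXs j i).integrable.aestronglyMeasurable)
    (fun j => (hXs j i).abs_le) (fun j y hy => by rw [hsupp j y hy, inner_zero_right])
    (fun y => tendsto_const_nhds.inner (hlim y)) x
  exact ((ContinuousLinearMap.apply ℝ ℝ (stdOrthonormalBasis ℝ V i)).continuous.tendsto _).comp h

end BesselDivergence

section LocalizedEquation

variable {V : Type*} [NormedAddCommGroup V] [InnerProductSpace ℝ V] [FiniteDimensional ℝ V]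
  {u : V → V} {ζ v f : V → ℝ} {M : ℝ} {α : ℝ≥0}

/-- A compactly supported `C³` function on whose support the drift `u` is `C¹`; multiplying the
equation by such a function localizes it. -/
structure IsCutoff (u : V → V) (ζ : V → ℝ) : Prop where
  contDiff : ContDiff ℝ 3 ζ
  hasCompactSupport : HasCompactSupport ζ
  contDiffAt_drift : ∀ x ∈ tsupport ζ, ContDiffAt ℝ 1 u x

/-- The vector field `X = ζ u + 2 ∇ζ` in the equation
`(1 - Δ)(ζ v) = ζ (f + v) + (div X - Δζ) v - div (v X)`, which is satisfied by the product of the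
cutoff `ζ` with a solution of `-Δv + ⟪u, ∇v⟫ = f`. -/
def cutoffField (u : V → V) (ζ : V → ℝ) (y : V) : V :=
  ζ y • u y + (2 : ℝ) • ∇ ζ y

/-- The coefficient `div X - Δζ` of `v` in the localized equation, where `X = ζ u + 2 ∇ζ`. -/
def cutoffCoeff (u : V → V) (ζ : V → ℝ) (y : V) : ℝ :=
  divergence (cutoffField u ζ) y - Δ ζ y

/-- The part of the right-hand side of the localized equation that is not a divergence. -/
def cutoffSource (u : V → V) (ζ v f : V → ℝ) (y : V) : ℝ :=
  ζ y * (f y + v y) + cutoffCoeff u ζ y * v y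

/-- The right-hand side `ζ (f + v) + (div X - Δζ) v - div (v X)` of the localized equation. -/
def localizedRhs (u : V → V) (ζ v f : V → ℝ) (y : V) : ℝ :=
  cutoffSource u ζ v f y - divergence (fun y => v y • cutoffField u ζ y) y

lemma tsupport_cutoffField_subset (u : V → V) (ζ : V → ℝ) :
    tsupport (cutoffField u ζ) ⊆ tsupport ζ := by
  refine closure_minimal (fun x hx => ?_) (isClosed_tsupport ζ)
  contrapose! hx
  simp [cutoffField, gradient, image_eq_zero_of_notMem_tsupport hx,
    (notMem_tsupport_iff_eventuallyEq.1 hx).fderiv_eq]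

lemma cutoffField_of_notMem_tsupport {x : V} (hx : x ∉ tsupport ζ) : cutoffField u ζ x = 0 :=
  image_eq_zero_of_notMem_tsupport fun h => hx (tsupport_cutoffField_subset u ζ h)

lemma laplacian_of_notMem_tsupport {x : V} (hx : x ∉ tsupport ζ) : Δ ζ x = 0 := by
  rw [(laplacian_congr_nhds (notMem_tsupport_iff_eventuallyEq.1 hx)).eq_of_nhds]
  exact congrFun (laplacian_const (c := (0 : ℝ))) x

lemma cutoffCoeff_of_notMem_tsupport {x : V} (hx : x ∉ tsupport ζ) : cutoffCoeff u ζ x = 0 := by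
  rw [cutoffCoeff, laplacian_of_notMem_tsupport hx,
    divergence_of_notMem_tsupport fun h => hx (tsupport_cutoffField_subset u ζ h), sub_zero]

lemma tsupport_cutoffCoeff_subset (u : V → V) (ζ : V → ℝ) :
    tsupport (cutoffCoeff u ζ) ⊆ tsupport ζ :=
  closure_minimal (fun _ hx => not_imp_comm.1 cutoffCoeff_of_notMem_tsupport hx)
    (isClosed_tsupport ζ)

lemma cutoffSource_of_notMem_tsupport {x : V} (hx : x ∉ tsupport ζ) :
    cutoffSource u ζ v f x = 0 := by
  rw [cutoffSource, cutoffCoeff_of_notMem_tsupport hx, image_eq_zero_of_notMem_tsupport hx,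
    zero_mul, zero_mul, add_zero]

lemma localizedRhs_of_notMem_tsupport {x : V} (hx : x ∉ tsupport ζ) :
    localizedRhs u ζ v f x = 0 := by
  have hfield : x ∉ tsupport fun y => v y • cutoffField u ζ y := fun h =>
    hx (tsupport_cutoffField_subset u ζ (tsupport_smul_subset_right v _ h))
  rw [localizedRhs, cutoffSource_of_notMem_tsupport hx, divergence_of_notMem_tsupport hfield,
    sub_zero]

lemma IsCutoff.hasCompactSupport_cutoffField (hζ : IsCutoff u ζ) :
    HasCompactSupport (cutoffField u ζ) :=
  .of_support_subset_isCompact hζ.hasCompactSupport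
    ((subset_tsupport _).trans (tsupport_cutoffField_subset u ζ))

lemma IsCutoff.hasCompactSupport_cutoffCoeff (hζ : IsCutoff u ζ) :
    HasCompactSupport (cutoffCoeff u ζ) :=
  .intro hζ.hasCompactSupport fun _ => cutoffCoeff_of_notMem_tsupport

lemma IsCutoff.contDiff_cutoffField (hζ : IsCutoff u ζ) : ContDiff ℝ 1 (cutoffField u ζ) :=
  contDiff_of_contDiffAt_tsupport fun x hx => by
    have hu := hζ.contDiffAt_drift x (tsupport_cutoffField_subset u ζ hx)
    have hζx : ContDiffAt ℝ 3 ζ x := hζ.contDiff.contDiffAt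
    exact ((hζx.of_le (by norm_num)).smul hu).add
      (contDiffAt_const.smul (contDiffAt_gradient hζx (by norm_num)))

lemma IsCutoff.contDiff_laplacian_cutoff (hζ : IsCutoff u ζ) : ContDiff ℝ 1 (Δ ζ) :=
  contDiff_laplacian hζ.contDiff (by norm_num)

lemma IsCutoff.continuous_cutoffCoeff (hζ : IsCutoff u ζ) : Continuous (cutoffCoeff u ζ) :=
  (continuous_divergence hζ.contDiff_cutoffField).sub hζ.contDiff_laplacian_cutoff.continuous

lemma IsCutoff.contDiff_smul_cutoffField (hζ : IsCutoff u ζ)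
    (hv : ∀ x ∈ tsupport ζ, ContDiffAt ℝ 1 v x) : ContDiff ℝ 1 fun y => v y • cutoffField u ζ y :=
  contDiff_smul_of_contDiffAt hζ.contDiff_cutoffField fun x hx =>
    hv x (tsupport_cutoffField_subset u ζ hx)

lemma IsCutoff.localizedRhs_eq (hζ : IsCutoff u ζ) {y : V}
    (hv : DifferentiableAt ℝ v y) : localizedRhs u ζ v f y =
      ζ y * (f y + v y) - v y * Δ ζ y - fderiv ℝ v y (cutoffField u ζ y) := by
  rw [localizedRhs, divergence_smul hv (hζ.contDiff_cutoffField.differentiable one_ne_zero y),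
    cutoffSource, cutoffCoeff]
  ring

lemma IsCutoff.localizedRhs_eq_of_solution (hζ : IsCutoff u ζ)
    (hv : ∀ x ∈ tsupport ζ, ContDiffAt ℝ 2 v x)
    (hf : ∀ x ∈ tsupport ζ, -Δ v x + fderiv ℝ v x (u x) = f x) (y : V) :
    localizedRhs u ζ v f y = (1 : ℝ) • (ζ y * v y) - Δ (fun y => ζ y * v y) y := by
  by_cases hy : y ∈ tsupport ζ
  · rw [hζ.localizedRhs_eq ((hv y hy).differentiableAt two_ne_zero),
      laplacian_mul (hζ.contDiff.contDiffAt.of_le (by norm_num)) (hv y hy), ← hf y hy, cutoffField,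
      map_add, map_smul, map_smul]
    simp only [smul_eq_mul]
    ring
  · have hprod : y ∉ tsupport fun y => ζ y * v y := fun h => hy (tsupport_mul_subset_left h)
    rw [localizedRhs_of_notMem_tsupport hy, laplacian_of_notMem_tsupport hprod,
      image_eq_zero_of_notMem_tsupport hy, zero_mul, smul_zero, sub_zero]

variable [MeasurableSpace V] [BorelSpace V]

/-- The localized equation, with `1 - Δ` inverted so that it makes sense for every bounded
measurable `v`; it then says that `-Δv + ⟪u, ∇v⟫ = f` holds weakly after multiplication by `ζ`. -/
def SolvesLocalized (u : V → V) (ζ v f : V → ℝ) : Prop :=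
  ∀ x, ζ x * v x = besselPotential 1 (cutoffSource u ζ v f) x -
    besselDivergence 1 (fun y => v y • cutoffField u ζ y) x

lemma IsCutoff.solvesLocalized (hζ : IsCutoff u ζ) (hv : ∀ x ∈ tsupport ζ, ContDiffAt ℝ 2 v x)
    (hf : ∀ x ∈ tsupport ζ, -Δ v x + fderiv ℝ v x (u x) = f x) : SolvesLocalized u ζ v f := by
  intro x
  have hw : ContDiff ℝ 2 fun y => ζ y * v y := by
    simpa only [smul_eq_mul, mul_comm] using
      contDiff_smul_of_contDiffAt (hζ.contDiff.of_le (by norm_num)) hv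
  have hws : HasCompactSupport fun y => ζ y * v y := hζ.hasCompactSupport.mul_right
  have hX := hζ.contDiff_smul_cutoffField fun y hy => (hv y hy).of_le one_le_two
  have hXs : HasCompactSupport fun y => v y • cutoffField u ζ y :=
    hζ.hasCompactSupport_cutoffField.smul_left
  obtain ⟨B, hB⟩ := exists_isBoundedIntegrable_of_hasCompactSupport
    ((hw.continuous.const_smul (1 : ℝ)).sub
      (contDiff_laplacian (k := 0) hw (by norm_num)).continuous)
    ((hws.smul_left (f := fun _ => (1 : ℝ))).sub (hasCompactSupport_laplacian hws))
  obtain ⟨B', hB'⟩ := exists_isBoundedIntegrable_of_hasCompactSupport (continuous_divergence hX)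
    (hasCompactSupport_divergence hXs)
  have hsource : cutoffSource u ζ v f = (fun y => (1 : ℝ) • (ζ y * v y) -
      Δ (fun y => ζ y * v y) y) + divergence fun y => v y • cutoffField u ζ y := by
    ext y
    rw [Pi.add_apply, ← hζ.localizedRhs_eq_of_solution hv hf, localizedRhs, sub_add_cancel]
  rw [hsource, besselDivergence_eq_besselPotential one_pos hX hXs,
    ← besselPotential_smul_sub_laplacian one_pos hw hws x, eq_sub_iff_add_eq]
  exact (besselPotential_add one_pos hB hB' x).symm

end LocalizedEquation

section LocalizedEstimates

variable {V : Type*} [NormedAddCommGroup V] [InnerProductSpace ℝ V] [FiniteDimensional ℝ V]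
  [MeasurableSpace V] [BorelSpace V] {u : V → V} {ζ v f : V → ℝ} {M : ℝ} {α : ℝ≥0}

lemma exists_isBoundedIntegrable_mul {g : V → ℝ} (hg : Continuous g) (hs : HasCompactSupport g)
    (M : ℝ) : ∃ B, ∀ v : V → ℝ, AEStronglyMeasurable v → (∀ x ∈ tsupport g, |v x| ≤ M) →
      IsBoundedIntegrable B (g * v) := by
  obtain ⟨C, hC⟩ := hs.exists_bound_of_continuous hg
  have hC₀ : 0 ≤ C := (norm_nonneg _).trans (hC 0)
  refine ⟨C * |M|, fun v hv hvM => isBoundedIntegrable_of_isCompact hs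
    (hg.aestronglyMeasurable.mul hv) (fun x => ?_) fun x hx => ?_⟩
  · rw [Pi.mul_apply, abs_mul]
    by_cases hx : x ∈ tsupport g
    · exact mul_le_mul (hC x) ((hvM x hx).trans (le_abs_self M)) (abs_nonneg _) hC₀
    · rw [image_eq_zero_of_notMem_tsupport hx, abs_zero, zero_mul]
      positivity
  · rw [Pi.mul_apply, image_eq_zero_of_notMem_tsupport hx, zero_mul]

/-- Measurable functions bounded by `M` on the support of `ζ`. -/
structure IsBoundedOnSupport (ζ : V → ℝ) (M : ℝ) (v : V → ℝ) : Prop where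
  aestronglyMeasurable : AEStronglyMeasurable v
  abs_le : ∀ x ∈ tsupport ζ, |v x| ≤ M

lemma exists_isBoundedOnSupport_comp {G : ℝ → ℝ} (hG : Continuous G) (M : ℝ) :
    ∃ N, ∀ ζ v : V → ℝ, IsBoundedOnSupport ζ M v →
      IsBoundedOnSupport ζ N v ∧ IsBoundedOnSupport ζ N fun y => G (v y) := by
  obtain ⟨N, hN⟩ := (isCompact_Icc (a := -M) (b := M)).exists_bound_of_continuousOn hG.continuousOn
  exact ⟨max M N, fun ζ v hv =>
    ⟨⟨hv.aestronglyMeasurable, fun x hx => (hv.abs_le x hx).trans (le_max_left _ _)⟩,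
      ⟨hG.comp_aestronglyMeasurable hv.aestronglyMeasurable, fun x hx =>
        (hN _ (abs_le.1 (hv.abs_le x hx))).trans (le_max_right _ _)⟩⟩⟩

lemma IsCutoff.exists_isBoundedIntegrable_cutoffSource (hζ : IsCutoff u ζ) (M : ℝ) :
    ∃ B, ∀ v f : V → ℝ, IsBoundedOnSupport ζ M v → IsBoundedOnSupport ζ M f →
      IsBoundedIntegrable B (cutoffSource u ζ v f) := by
  obtain ⟨B, hB⟩ :=
    exists_isBoundedIntegrable_mul hζ.contDiff.continuous hζ.hasCompactSupport (M + M)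
  obtain ⟨B', hB'⟩ :=
    exists_isBoundedIntegrable_mul hζ.continuous_cutoffCoeff hζ.hasCompactSupport_cutoffCoeff M
  refine ⟨B + B', fun v f hv hf => ?_⟩
  refine (hB (f + v) (hf.aestronglyMeasurable.add hv.aestronglyMeasurable) fun x hx => ?_).add
    (hB' v hv.aestronglyMeasurable fun x hx => hv.abs_le x ?_)
  · exact (abs_add_le _ _).trans (add_le_add (hf.abs_le x hx) (hv.abs_le x hx))
  · by_contra h
    exact h (tsupport_cutoffCoeff_subset u ζ hx)

lemma IsCutoff.exists_isBoundedIntegrableField (hζ : IsCutoff u ζ) (M : ℝ) :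
    ∃ B, ∀ v : V → ℝ, IsBoundedOnSupport ζ M v →
      IsBoundedIntegrableField B fun y => v y • cutoffField u ζ y := by
  set e := stdOrthonormalBasis ℝ V
  choose b hb using fun i => exists_isBoundedIntegrable_mul
    (continuous_const.inner hζ.contDiff_cutoffField.continuous)
    (hζ.hasCompactSupport_cutoffField.comp_left (g := fun z => ⟪e i, z⟫) (inner_zero_right _)) M
  refine ⟨∑ i, |b i|, fun v hv i => ?_⟩
  have hi := hb i v hv.aestronglyMeasurable fun x hx => hv.abs_le x <|
    tsupport_cutoffField_subset u ζ <|
      tsupport_comp_subset (g := fun z => ⟪e i, z⟫) (inner_zero_right _) _ hx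
  have hle : b i ≤ ∑ i, |b i| := (le_abs_self _).trans
    (Finset.single_le_sum (f := fun i => |b i|) (fun _ _ => abs_nonneg _) (Finset.mem_univ i))
  have heq : (fun y => ⟪e i, v y • cutoffField u ζ y⟫) =
      (fun y => ⟪e i, cutoffField u ζ y⟫) * v := by
    ext y
    rw [inner_smul_right, Pi.mul_apply, mul_comm]
  rw [heq]
  exact ⟨hi.integrable, fun x => (hi.abs_le x).trans hle⟩

lemma IsCutoff.solvesLocalized_of_tendsto (hζ : IsCutoff u ζ) {vs fs : ℕ → V → ℝ}
    (hvs : ∀ j, IsBoundedOnSupport ζ M (vs j)) (hfs : ∀ j, IsBoundedOnSupport ζ M (fs j))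
    (hv : ∀ x ∈ tsupport ζ, Tendsto (vs · x) atTop (𝓝 (v x)))
    (hf : ∀ x ∈ tsupport ζ, Tendsto (fs · x) atTop (𝓝 (f x)))
    (hsolves : ∀ᶠ j in atTop, SolvesLocalized u ζ (vs j) (fs j)) : SolvesLocalized u ζ v f := by
  intro x
  obtain ⟨B, hB⟩ := hζ.exists_isBoundedIntegrable_cutoffSource M
  obtain ⟨B', hB'⟩ := hζ.exists_isBoundedIntegrableField M
  have hsource (y : V) :
      Tendsto (fun j => cutoffSource u ζ (vs j) (fs j) y) atTop (𝓝 (cutoffSource u ζ v f y)) := by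
    by_cases hy : y ∈ tsupport ζ
    · exact (((hf y hy).add (hv y hy)).const_mul _).add ((hv y hy).const_mul _)
    · simp only [cutoffSource_of_notMem_tsupport hy, tendsto_const_nhds]
  have hfield (y : V) : Tendsto (fun j => vs j y • cutoffField u ζ y) atTop
      (𝓝 (v y • cutoffField u ζ y)) := by
    by_cases hy : y ∈ tsupport ζ
    · exact (hv y hy).smul_const _
    · simp only [cutoffField_of_notMem_tsupport hy, smul_zero, tendsto_const_nhds]
  have hprod : Tendsto (fun j => ζ x * vs j x) atTop (𝓝 (ζ x * v x)) := by
    by_cases hx : x ∈ tsupport ζ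
    · exact (hv x hx).const_mul _
    · simp only [image_eq_zero_of_notMem_tsupport hx, zero_mul, tendsto_const_nhds]
  have hsource_int (j : ℕ) := hB _ _ (hvs j) (hfs j)
  have hpotential := tendsto_besselPotential one_pos hζ.hasCompactSupport
    (fun j => (hsource_int j).integrable.aestronglyMeasurable) (fun j => (hsource_int j).abs_le)
    (fun _ _ => cutoffSource_of_notMem_tsupport) hsource x
  have hdivergence := tendsto_besselDivergence one_pos hζ.hasCompactSupport
    (fun j => hB' _ (hvs j)) (fun j y hy => by rw [cutoffField_of_notMem_tsupport hy, smul_zero])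
    hfield x
  exact tendsto_nhds_unique hprod
    ((hpotential.sub hdivergence).congr' (hsolves.mono fun j hj => (hj x).symm))

lemma IsCutoff.exists_holderWith (hζ : IsCutoff u ζ) (hα : α < 1) (M : ℝ) :
    ∃ C, ∀ v f : V → ℝ, IsBoundedOnSupport ζ M v → IsBoundedOnSupport ζ M f →
      SolvesLocalized u ζ v f → HolderWith C α fun x => ζ x * v x := by
  obtain ⟨B, hB⟩ := hζ.exists_isBoundedIntegrable_cutoffSource M
  obtain ⟨B', hB'⟩ := hζ.exists_isBoundedIntegrableField M
  obtain ⟨C, hC⟩ := exists_lipschitzWith_besselPotential (V := V) one_pos B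
  obtain ⟨C', hC'⟩ := exists_holderWith_besselDivergence (V := V) one_pos hα B'
  have hpotential (h : V → ℝ) (hh : IsBoundedIntegrable B h) :=
    holderWith_of_lipschitzWith_of_norm_le (hC h hh) (B := (B * laplaceRpow 1 0).toNNReal)
      (fun x => (abs_besselPotential_le one_pos hh.abs_le x).trans (Real.le_coe_toNNReal _)) hα.le
  refine ⟨max (2 * (B * laplaceRpow 1 0).toNNReal) C + C', fun v f hv hf hsolves =>
    holderWith_of_dist_le fun x y => ?_⟩
  rw [hsolves x, hsolves y, NNReal.coe_add, add_mul]
  exact (dist_sub_sub_le _ _ _ _).trans (add_le_add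
    ((hpotential _ (hB v f hv hf)).dist_le x y) ((hC' _ (hB' v hv)).dist_le x y))

end LocalizedEstimates

section InteriorRegularity

variable {V : Type*} [NormedAddCommGroup V] [InnerProductSpace ℝ V] [FiniteDimensional ℝ V]
  {Ω K : Set V} {u : V → V} {G : ℝ → ℝ} {ζ v : V → ℝ} {M : ℝ} {α : ℝ≥0}

open scoped Manifold ContDiff in
lemma exists_isCutoff (hK : IsCompact K) (hΩ : IsOpen Ω) (hKΩ : K ⊆ Ω)
    (hu : ∀ x ∈ Ω, ContDiffAt ℝ 1 u x) :
    ∃ ζ : V → ℝ, IsCutoff u ζ ∧ tsupport ζ ⊆ Ω ∧ (∀ x ∈ K, ζ =ᶠ[𝓝 x] 1) ∧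
      ∀ x, ζ x ∈ Icc (0 : ℝ) 1 := by
  obtain ⟨L, hL, hKL, hLΩ⟩ := exists_compact_between hK hΩ hKΩ
  obtain ⟨ζ, hone, hzero, hmem⟩ :=
    exists_contMDiffMap_one_nhds_of_subset_interior (n := 3) 𝓘(ℝ, V) hK.isClosed hKL
  have hsupp : tsupport ζ ⊆ L :=
    closure_minimal (fun x hx => not_imp_comm.1 (hzero x) hx) hL.isClosed
  exact ⟨ζ, ⟨ζ.contMDiff.contDiff, hL.of_isClosed_subset (isClosed_tsupport _) hsupp,
    fun x hx => hu x (hLΩ (hsupp hx))⟩, hsupp.trans hLΩ, eventually_nhdsSet_iff_forall.1 hone, hmem⟩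

lemma mul_eventuallyEq_of_eventuallyEq_one {X R : Type*} [TopologicalSpace X] [MulOneClass R]
    {ζ v : X → R} {x : X} (hζ : ζ =ᶠ[𝓝 x] 1) :
    (fun y => ζ y * v y) =ᶠ[𝓝 x] v := by
  filter_upwards [hζ] with y hy
  rw [hy, Pi.one_apply, one_mul]

variable [MeasurableSpace V] [BorelSpace V]

/-- Bounded measurable functions that solve `-Δv + ⟪u, ∇v⟫ = G(v)` in `Ω` in the weak sense
expressed by the localized equations. -/
structure IsBoundedWeakSol (Ω : Set V) (u : V → V) (G : ℝ → ℝ) (M : ℝ) (v : V → ℝ) : Prop where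
  aestronglyMeasurable : AEStronglyMeasurable v
  protected abs_le : ∀ x ∈ Ω, |v x| ≤ M
  solvesLocalized : ∀ ζ, IsCutoff u ζ → tsupport ζ ⊆ Ω → SolvesLocalized u ζ v fun y => G (v y)

namespace IsBoundedWeakSol

lemma exists_isBoundedOnSupport (hv : IsBoundedWeakSol Ω u G M v) (hG : Continuous G) :
    ∃ N, ∀ ζ : V → ℝ, tsupport ζ ⊆ Ω →
      IsBoundedOnSupport ζ N v ∧ IsBoundedOnSupport ζ N fun y => G (v y) := by
  obtain ⟨N, hN⟩ := exists_isBoundedOnSupport_comp (V := V) hG M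
  exact ⟨N, fun ζ hζΩ =>
    hN ζ v ⟨hv.aestronglyMeasurable, fun x hx => hv.abs_le x (hζΩ hx)⟩⟩

lemma isBoundedHolder_cutoff_mul (hv : IsBoundedWeakSol Ω u G M v) (hG : Continuous G)
    (hζ : IsCutoff u ζ) (hζΩ : tsupport ζ ⊆ Ω) (hα : α < 1) :
    IsBoundedHolder α fun x => ζ x * v x := by
  obtain ⟨N, hN⟩ := hv.exists_isBoundedOnSupport hG
  obtain ⟨C, hC⟩ := hζ.exists_holderWith hα N
  obtain ⟨B, hB⟩ := exists_isBoundedIntegrable_mul hζ.contDiff.continuous hζ.hasCompactSupport M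
  exact ⟨⟨B, (hB v hv.aestronglyMeasurable fun x hx => hv.abs_le x (hζΩ hx)).abs_le⟩,
    (hC _ _ (hN ζ hζΩ).1 (hN ζ hζΩ).2 (hv.solvesLocalized ζ hζ hζΩ)).memHolder⟩

lemma isBoundedHolder_smul_cutoffField (hv : IsBoundedWeakSol Ω u G M v) (hG : Continuous G)
    (hΩ : IsOpen Ω) (hu : ∀ x ∈ Ω, ContDiffAt ℝ 1 u x) (hζ : IsCutoff u ζ) (hζΩ : tsupport ζ ⊆ Ω)
    (hα : α < 1) : IsBoundedHolder α fun y => v y • cutoffField u ζ y := by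
  obtain ⟨ζ', hζ', hζ'Ω, hone, -⟩ := exists_isCutoff hζ.hasCompactSupport hΩ hζΩ hu
  have heq : (fun y => v y • cutoffField u ζ y) = fun y => (ζ' y * v y) • cutoffField u ζ y := by
    ext1 y
    by_cases hy : y ∈ tsupport ζ
    · rw [(hone y hy).eq_of_nhds, Pi.one_apply, one_mul]
    · rw [cutoffField_of_notMem_tsupport hy, smul_zero, smul_zero]
  rw [heq]
  exact (hv.isBoundedHolder_cutoff_mul hG hζ' hζ'Ω hα).bilinear
    (isBoundedHolder_of_hasCompactSupport hζ.contDiff_cutoffField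
      hζ.hasCompactSupport_cutoffField hα.le) (ContinuousLinearMap.lsmul ℝ ℝ)

lemma contDiff_one_cutoff_mul (hv : IsBoundedWeakSol Ω u G M v) (hG : Continuous G)
    (hΩ : IsOpen Ω) (hu : ∀ x ∈ Ω, ContDiffAt ℝ 1 u x) (hζ : IsCutoff u ζ)
    (hζΩ : tsupport ζ ⊆ Ω) : ContDiff ℝ 1 fun x => ζ x * v x := by
  obtain ⟨N, hN⟩ := hv.exists_isBoundedOnSupport hG
  obtain ⟨B, hB⟩ := hζ.exists_isBoundedIntegrable_cutoffSource N
  obtain ⟨B', hB'⟩ := hζ.exists_isBoundedIntegrableField N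
  have hhalf : (1 / 2 : ℝ≥0) < 1 := NNReal.half_lt_self one_ne_zero
  rw [funext (hv.solvesLocalized ζ hζ hζΩ)]
  exact (contDiff_one_besselPotential one_pos (hB _ _ (hN ζ hζΩ).1 (hN ζ hζΩ).2)).sub
    (contDiff_one_besselDivergence one_pos (hB' v (hN ζ hζΩ).1)
      (hv.isBoundedHolder_smul_cutoffField hG hΩ hu hζ hζΩ hhalf).memHolder
      (by positivity) hhalf.le)

lemma contDiffAt_one (hv : IsBoundedWeakSol Ω u G M v) (hG : Continuous G) (hΩ : IsOpen Ω)
    (hu : ∀ x ∈ Ω, ContDiffAt ℝ 1 u x) {x : V} (hx : x ∈ Ω) : ContDiffAt ℝ 1 v x := by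
  obtain ⟨ζ, hζ, hζΩ, hone, -⟩ :=
    exists_isCutoff isCompact_singleton hΩ (singleton_subset_iff.2 hx) hu
  exact (hv.contDiff_one_cutoff_mul hG hΩ hu hζ hζΩ).contDiffAt.congr_of_eventuallyEq
    (mul_eventuallyEq_of_eventuallyEq_one (hone x rfl)).symm

lemma exists_isBoundedIntegrable_eq_besselPotential (hv : IsBoundedWeakSol Ω u G M v)
    (hG : Continuous G) (hΩ : IsOpen Ω) (hu : ∀ x ∈ Ω, ContDiffAt ℝ 1 u x) (hζ : IsCutoff u ζ)
    (hζΩ : tsupport ζ ⊆ Ω) :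
    ∃ B, IsBoundedIntegrable B (localizedRhs u ζ v fun y => G (v y)) ∧
      (fun x => ζ x * v x) = besselPotential 1 (localizedRhs u ζ v fun y => G (v y)) := by
  obtain ⟨N, hN⟩ := hv.exists_isBoundedOnSupport hG
  obtain ⟨B, hB⟩ := hζ.exists_isBoundedIntegrable_cutoffSource N
  have hsource := hB _ _ (hN ζ hζΩ).1 (hN ζ hζΩ).2
  have hX := hζ.contDiff_smul_cutoffField fun x hx => hv.contDiffAt_one hG hΩ hu (hζΩ hx)
  have hXs : HasCompactSupport fun y => v y • cutoffField u ζ y :=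
    hζ.hasCompactSupport_cutoffField.smul_left
  obtain ⟨B', hB'⟩ := exists_isBoundedIntegrable_of_hasCompactSupport (continuous_divergence hX)
    (hasCompactSupport_divergence hXs)
  refine ⟨B + B', hsource.sub hB', ?_⟩
  ext x
  rw [hv.solvesLocalized ζ hζ hζΩ x, besselDivergence_eq_besselPotential one_pos hX hXs]
  exact (besselPotential_sub one_pos hsource hB' x).symm

lemma isBoundedHolder_fderiv_cutoff_mul (hv : IsBoundedWeakSol Ω u G M v)
    (hG : Continuous G) (hΩ : IsOpen Ω) (hu : ∀ x ∈ Ω, ContDiffAt ℝ 1 u x) (hζ : IsCutoff u ζ)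
    (hζΩ : tsupport ζ ⊆ Ω) (hα : α < 1) :
    IsBoundedHolder α (fderiv ℝ fun x => ζ x * v x) := by
  obtain ⟨B, hB, heq⟩ := hv.exists_isBoundedIntegrable_eq_besselPotential hG hΩ hu hζ hζΩ
  rw [heq, fderiv_besselPotential one_pos hB]
  exact isBoundedHolder_besselGradient one_pos hB hα

/- With a cutoff `ζ'` equal to `1` near the support of `ζ`, every occurrence of `v` in the
right-hand side may be replaced by `ζ' v`, whose first derivatives are globally Hölder. -/
lemma isBoundedHolder_localizedRhs (hv : IsBoundedWeakSol Ω u G M v)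
    (hG : ContDiff ℝ 1 G) (hΩ : IsOpen Ω) (hu : ∀ x ∈ Ω, ContDiffAt ℝ 1 u x) (hζ : IsCutoff u ζ)
    (hζΩ : tsupport ζ ⊆ Ω) (hα : α < 1) :
    IsBoundedHolder α (localizedRhs u ζ v fun y => G (v y)) := by
  obtain ⟨ζ', hζ', hζ'Ω, hone, -⟩ := exists_isCutoff hζ.hasCompactSupport hΩ hζΩ hu
  set w : V → ℝ := fun y => ζ' y * v y
  have hw : ContDiff ℝ 1 w := hv.contDiff_one_cutoff_mul hG.continuous hΩ hu hζ' hζ'Ω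
  have hw' : IsBoundedHolder α (fderiv ℝ w) :=
    hv.isBoundedHolder_fderiv_cutoff_mul hG.continuous hΩ hu hζ' hζ'Ω hα
  have hX : IsBoundedHolder α (cutoffField u ζ) := isBoundedHolder_of_hasCompactSupport
    hζ.contDiff_cutoffField hζ.hasCompactSupport_cutoffField hα.le
  have hreaction : IsBoundedHolder α fun y => ζ y * (G (w y) + w y) :=
    isBoundedHolder_of_hasCompactSupport
      ((hζ.contDiff.of_le (by norm_num)).mul ((hG.comp hw).add hw)) hζ.hasCompactSupport.mul_right
      hα.le
  have hlaplacian : IsBoundedHolder α fun y => w y * Δ ζ y :=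
    isBoundedHolder_of_hasCompactSupport (hw.mul hζ.contDiff_laplacian_cutoff)
      (hasCompactSupport_laplacian hζ.hasCompactSupport).mul_left hα.le
  have heq : localizedRhs u ζ v (fun y => G (v y)) = (fun y => ζ y * (G (w y) + w y)) -
      (fun y => w y * Δ ζ y) - fun y => fderiv ℝ w y (cutoffField u ζ y) := by
    ext y
    simp only [Pi.sub_apply]
    by_cases hy : y ∈ tsupport ζ
    · have hwv := mul_eventuallyEq_of_eventuallyEq_one (v := v) (hone y hy)
      rw [hζ.localizedRhs_eq ((hv.contDiffAt_one hG.continuous hΩ hu (hζΩ hy)).differentiableAt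
        one_ne_zero), ← hwv.eq_of_nhds, ← hwv.fderiv_eq]
    · rw [localizedRhs_of_notMem_tsupport hy, image_eq_zero_of_notMem_tsupport hy,
        laplacian_of_notMem_tsupport hy, cutoffField_of_notMem_tsupport hy, map_zero]
      ring
  rw [heq]
  exact (hreaction.sub hlaplacian).sub (hw'.bilinear hX (ContinuousLinearMap.id ℝ (V →L[ℝ] ℝ)))

theorem contDiffAt_two_and_eq (hv : IsBoundedWeakSol Ω u G M v) (hG : ContDiff ℝ 1 G)
    (hΩ : IsOpen Ω) (hu : ∀ x ∈ Ω, ContDiffAt ℝ 1 u x) {x : V} (hx : x ∈ Ω) :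
    ContDiffAt ℝ 2 v x ∧ -Δ v x + fderiv ℝ v x (u x) = G (v x) := by
  obtain ⟨ζ, hζ, hζΩ, hone, -⟩ :=
    exists_isCutoff isCompact_singleton hΩ (singleton_subset_iff.2 hx) hu
  have hζx : ζ =ᶠ[𝓝 x] 1 := hone x rfl
  have hhalf : (1 / 2 : ℝ≥0) < 1 := NNReal.half_lt_self one_ne_zero
  obtain ⟨B, hB, heq⟩ :=
    hv.exists_isBoundedIntegrable_eq_besselPotential hG.continuous hΩ hu hζ hζΩ
  have hHolder := (hv.isBoundedHolder_localizedRhs hG hΩ hu hζ hζΩ hhalf).memHolder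
  have hpotential := heq ▸ mul_eventuallyEq_of_eventuallyEq_one (v := v) hζx
  refine ⟨(contDiff_two_besselPotential one_pos hB hHolder (by positivity)
    hhalf.le).contDiffAt.congr_of_eventuallyEq hpotential.symm, ?_⟩
  have hfield : cutoffField u ζ x = u x := by
    simp [cutoffField, gradient, hζx.fderiv_eq, hζx.eq_of_nhds]
  have hΔζ : Δ ζ x = 0 :=
    (laplacian_congr_nhds hζx).eq_of_nhds.trans (congrFun (laplacian_const (c := (1 : ℝ))) x)
  rw [← (laplacian_congr_nhds hpotential).eq_of_nhds,
    laplacian_besselPotential one_pos hB hHolder (by positivity) hhalf.le, hpotential.eq_of_nhds,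
    hζ.localizedRhs_eq ((hv.contDiffAt_one hG.continuous hΩ hu hx).differentiableAt one_ne_zero),
    hfield, hΔζ, hζx.eq_of_nhds, Pi.one_apply]
  ring

end IsBoundedWeakSol

end InteriorRegularity

/-! ### Monotone iteration -/

section MonotoneIteration

variable {V : Type*} [NormedAddCommGroup V] [InnerProductSpace ℝ V] [FiniteDimensional ℝ V]
  {b u : V → V} {m : ℝ} {H : ℝ → ℝ} {χ η v w ζ : V → ℝ}

/-- The operator `-Δ + ⟪b, ∇⟫ + m`. -/
def driftOperator (b : V → V) (m : ℝ) (v : V → ℝ) (x : V) : ℝ :=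
  -Δ v x + fderiv ℝ v x (b x) + m * v x

lemma driftOperator_sub (hv : ContDiff ℝ 2 v) (hw : ContDiff ℝ 2 w) (x : V) :
    driftOperator b m (v - w) x = driftOperator b m v x - driftOperator b m w x := by
  simp only [driftOperator]
  rw [hv.contDiffAt.laplacian_sub hw.contDiffAt, fderiv_sub (hv.differentiable two_ne_zero x)
    (hw.differentiable two_ne_zero x), _root_.sub_apply, Pi.sub_apply]
  ring

lemma driftOperator_zero (x : V) : driftOperator b m 0 x = 0 := by
  have hΔ : Δ (0 : V → ℝ) x = 0 := congrFun (laplacian_const (c := (0 : ℝ))) x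
  simp [driftOperator, hΔ]

lemma le_of_driftOperator_le (hb : Continuous b) (hbs : HasCompactSupport b) (hm : 0 < m)
    (hv : ContDiff ℝ 2 v) (hw : ContDiff ℝ 2 w) (hvb : BddAbove (range v))
    (hwb : BddBelow (range w)) (hle : ∀ x, driftOperator b m v x ≤ driftOperator b m w x) (x : V) :
    v x ≤ w x := by
  obtain ⟨C, hC⟩ := (HasCompactSupport.intro hbs fun x hx => by
    rw [image_eq_zero_of_notMem_tsupport hx, inner_zero_right] :
      HasCompactSupport fun x => ⟪x, b x⟫).exists_bound_of_continuous (continuous_id.inner hb)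
  obtain ⟨Mv, hMv⟩ := hvb
  obtain ⟨Mw, hMw⟩ := hwb
  refine sub_nonneg.1 (nonneg_of_supersolution (hw.sub hv) ⟨Mw - Mv, ?_⟩
    (fun x => (abs_le.1 (hC x)).1) hm (fun x => ?_) x)
  · rintro _ ⟨y, rfl⟩
    exact sub_le_sub (hMw (mem_range_self y)) (hMv (mem_range_self y))
  · exact (sub_nonneg.2 (hle x)).trans_eq (driftOperator_sub hw hv x).symm

/-- Reaction terms for which sub- and supersolution methods work on nonnegative functions. -/
structure IsMonotoneReaction (H : ℝ → ℝ) : Prop where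
  contDiff : ContDiff ℝ 1 H
  monotoneOn : MonotoneOn H (Ici 0)
  map_zero_nonneg : 0 ≤ H 0

lemma IsMonotoneReaction.map_nonneg (hH : IsMonotoneReaction H) {s : ℝ} (hs : 0 ≤ s) : 0 ≤ H s :=
  hH.map_zero_nonneg.trans (hH.monotoneOn self_mem_Ici hs hs)

lemma IsMonotoneReaction.const_mul (hH : IsMonotoneReaction H) (hm : 0 ≤ m) :
    IsMonotoneReaction fun s => m * H s where
  contDiff := contDiff_const.mul hH.contDiff
  monotoneOn _ hs _ ht hst := mul_le_mul_of_nonneg_left (hH.monotoneOn hs ht hst) hm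
  map_zero_nonneg := mul_nonneg hm hH.map_zero_nonneg

lemma IsMonotoneReaction.const_mul_add (hH : IsMonotoneReaction H) (hm : 0 ≤ m) :
    IsMonotoneReaction fun s => m * s + H s where
  contDiff := (contDiff_const.mul contDiff_id).add hH.contDiff
  monotoneOn := (monotone_id.const_mul hm).monotoneOn _ |>.add hH.monotoneOn
  map_zero_nonneg := by simpa only [mul_zero, zero_add] using hH.map_zero_nonneg

/-- The data of the monotone iteration `-Δvⱼ₊₁ + ⟪b, ∇vⱼ₊₁⟫ + m vⱼ₊₁ = χ H(vⱼ)` on the whole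
space: `η` is a bounded supersolution of the limiting equation, and `m` is so large that the drift
is a small perturbation of `m - Δ`. -/
structure IsIterationProblem (b : V → V) (m : ℝ) (χ : V → ℝ) (H : ℝ → ℝ) (η : V → ℝ) : Prop where
  contDiff_drift : ContDiff ℝ 1 b
  hasCompactSupport_drift : HasCompactSupport b
  pos : 0 < m
  exists_drift_small :
    ∃ C, (∀ x, ‖b x‖ ≤ C) ∧ doublingConst V * laplaceRpow m (-(1 / 2)) * C ≤ 1 / 2
  contDiff_weight : ContDiff ℝ 1 χ
  hasCompactSupport_weight : HasCompactSupport χ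
  weight_nonneg : ∀ x, 0 ≤ χ x
  reaction : IsMonotoneReaction H
  contDiff_supersolution : ContDiff ℝ 2 η
  bddAbove_supersolution : BddAbove (range η)
  supersolution_nonneg : ∀ x, 0 ≤ η x
  supersolution : ∀ x, χ x * H (η x) ≤ driftOperator b m η x

/-- The functions to which the monotone iteration below the supersolution `η` applies. -/
structure IsIterate (η v : V → ℝ) : Prop where
  contDiff : ContDiff ℝ 2 v
  nonneg : ∀ x, 0 ≤ v x
  le : ∀ x, v x ≤ η x

namespace IsIterationProblem

lemma weight_mul_le (h : IsIterationProblem b m χ H η) {x : V} (hv : 0 ≤ v x) (hvw : v x ≤ w x) :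
    χ x * H (v x) ≤ χ x * H (w x) :=
  mul_le_mul_of_nonneg_left (h.reaction.monotoneOn hv (hv.trans hvw) hvw) (h.weight_nonneg x)

variable [MeasurableSpace V] [BorelSpace V]

lemma exists_next_iterate (h : IsIterationProblem b m χ H η) (hv : IsIterate η v) :
    ∃ w, IsIterate η w ∧ ∀ x, driftOperator b m w x = χ x * H (v x) := by
  have hf : ContDiff ℝ 1 fun x => χ x * H (v x) :=
    h.contDiff_weight.mul (h.reaction.contDiff.comp (hv.contDiff.of_le one_le_two))
  have hfs : HasCompactSupport fun x => χ x * H (v x) := h.hasCompactSupport_weight.mul_right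
  have hhalf : (1 / 2 : ℝ≥0) < 1 := NNReal.half_lt_self one_ne_zero
  obtain ⟨B, hB⟩ := exists_isBoundedIntegrable_of_hasCompactSupport hf.continuous hfs
  obtain ⟨C, hC, hsmall⟩ := h.exists_drift_small
  obtain ⟨w, hw, ⟨M, hM⟩, hsol⟩ := exists_solution_linear_drift_problem h.contDiff_drift
    h.hasCompactSupport_drift hC h.pos hsmall hB
    (isBoundedHolder_of_hasCompactSupport hf hfs hhalf.le) (by positivity) hhalf
  have hwb : BddBelow (range w) := ⟨-M, forall_mem_range.2 fun x => (abs_le.1 (hM x)).1⟩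
  have hwa : BddAbove (range w) := ⟨M, forall_mem_range.2 fun x => (abs_le.1 (hM x)).2⟩
  refine ⟨w, ⟨hw, ?_, ?_⟩, hsol⟩
  · refine le_of_driftOperator_le h.contDiff_drift.continuous h.hasCompactSupport_drift h.pos
      (v := 0) contDiff_const hw ⟨0, forall_mem_range.2 fun _ => le_rfl⟩ hwb fun x => ?_
    rw [driftOperator_zero, driftOperator, hsol]
    exact mul_nonneg (h.weight_nonneg x) (h.reaction.map_nonneg (hv.nonneg x))
  · exact le_of_driftOperator_le h.contDiff_drift.continuous h.hasCompactSupport_drift h.pos hw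
      h.contDiff_supersolution hwa ⟨0, forall_mem_range.2 h.supersolution_nonneg⟩ fun x =>
        (hsol x).trans_le ((h.weight_mul_le (hv.nonneg x) (hv.le x)).trans (h.supersolution x))

lemma exists_monotone_iterates (h : IsIterationProblem b m χ H η) :
    ∃ v : ℕ → V → ℝ, (∀ j, IsIterate η (v j)) ∧ Monotone v ∧
      ∀ j x, driftOperator b m (v (j + 1)) x = χ x * H (v j x) := by
  choose next hnext hsol using fun v : {v // IsIterate η v} => h.exists_next_iterate v.2
  let v : ℕ → {v // IsIterate η v} := fun j =>
    (fun v => ⟨next v, hnext v⟩)^[j] ⟨0, contDiff_const, fun _ => le_rfl, h.supersolution_nonneg⟩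
  have hv_succ (j : ℕ) : (v (j + 1)).1 = next (v j) :=
    congrArg Subtype.val (Function.iterate_succ_apply' _ _ _)
  have hv_sol (j : ℕ) (x : V) : driftOperator b m (v (j + 1)).1 x = χ x * H ((v j).1 x) := by
    rw [hv_succ, hsol]
  refine ⟨fun j => (v j).1, fun j => (v j).2, monotone_nat_of_le_succ fun j => ?_, hv_sol⟩
  induction j with
  | zero => exact (v 1).2.nonneg
  | succ j ih =>
    exact le_of_driftOperator_le h.contDiff_drift.continuous h.hasCompactSupport_drift h.pos
      (v (j + 1)).2.contDiff (v (j + 2)).2.contDiff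
      (.range_mono η (v (j + 1)).2.le h.bddAbove_supersolution)
      ⟨0, forall_mem_range.2 (v (j + 2)).2.nonneg⟩ fun x => by
        rw [hv_sol, hv_sol]
        exact h.weight_mul_le ((v j).2.nonneg x) (ih x)

lemma exists_isBoundedOnSupport_iterate (h : IsIterationProblem b m χ H η) {v : ℕ → V → ℝ}
    (hv : ∀ j, IsIterate η (v j)) (ζ : V → ℝ) : ∃ M, ∀ j, IsBoundedOnSupport ζ M (v (j + 1)) ∧
      IsBoundedOnSupport ζ M fun x => H (v j x) - m * v (j + 1) x := by
  obtain ⟨D, hD⟩ := h.bddAbove_supersolution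
  have hvD (j : ℕ) (x : V) : |v j x| ≤ D :=
    (abs_of_nonneg ((hv j).nonneg x)).trans_le (((hv j).le x).trans (hD (mem_range_self x)))
  have hH : Continuous H := h.reaction.contDiff.continuous
  obtain ⟨N, hN⟩ :=
    (isCompact_Icc (a := -D) (b := D)).exists_bound_of_continuousOn hH.continuousOn
  have hcont (j : ℕ) : Continuous (v j) := (hv j).contDiff.continuous
  refine ⟨max D (N + m * D), fun j => ⟨⟨(hcont _).aestronglyMeasurable, fun x _ =>
    (hvD _ x).trans (le_max_left _ _)⟩,
    ⟨((hH.comp (hcont _)).sub ((hcont _).const_smul m)).aestronglyMeasurable, fun x _ => ?_⟩⟩⟩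
  refine (abs_sub _ _).trans ((add_le_add (hN _ (abs_le.1 (hvD j x))) ?_).trans (le_max_right _ _))
  rw [abs_mul, abs_of_pos h.pos]
  exact mul_le_mul_of_nonneg_left (hvD _ x) h.pos.le

theorem exists_weak_solution (h : IsIterationProblem b m χ H η) :
    ∃ φ : V → ℝ, AEStronglyMeasurable φ ∧ (∀ x, φ x ∈ Icc 0 (η x)) ∧
      ∀ ⦃u ζ⦄, IsCutoff u ζ → (∀ x ∈ tsupport ζ, b x = u x ∧ χ x = 1) →
        SolvesLocalized u ζ φ fun y => H (φ y) - m * φ y := by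
  obtain ⟨v, hv, hmono, hsol⟩ := h.exists_monotone_iterates
  have hlim (x : V) : Tendsto (v · x) atTop (𝓝 (⨆ j, v j x)) := tendsto_atTop_ciSup
    (fun _ _ hij => hmono hij x) ⟨η x, forall_mem_range.2 fun j => (hv j).le x⟩
  refine ⟨fun x => ⨆ j, v j x, aestronglyMeasurable_of_tendsto_ae atTop
    (fun j => (hv j).contDiff.continuous.aestronglyMeasurable) (ae_of_all _ hlim), fun x =>
    ⟨Real.iSup_nonneg fun j => (hv j).nonneg x, ciSup_le fun j => (hv j).le x⟩, ?_⟩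
  intro u ζ hζ hbχ
  obtain ⟨M, hM⟩ := h.exists_isBoundedOnSupport_iterate hv ζ
  have hlim_succ (x : V) := (tendsto_add_atTop_iff_nat 1).2 (hlim x)
  refine hζ.solvesLocalized_of_tendsto (fun j => (hM j).1) (fun j => (hM j).2)
    (fun x _ => hlim_succ x) (fun x _ => ((h.reaction.contDiff.continuous.tendsto _).comp
      (hlim x)).sub ((hlim_succ x).const_mul m)) (.of_forall fun j => ?_)
  refine hζ.solvesLocalized (fun x _ => (hv _).contDiff.contDiffAt) fun x hx => ?_
  have hx := hsol j x
  obtain ⟨hbu, hχ⟩ := hbχ x ‹_›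
  rw [driftOperator, hbu, hχ, one_mul] at hx
  exact eq_sub_of_add_eq hx

end IsIterationProblem

end MonotoneIteration

/-! ### From a barrier to a solution -/

section SmoothStep

/-- A smooth monotone transition from `0` on `(-∞, a]` to `1` on `[a + δ, ∞)`. -/
def smoothStep (a δ s : ℝ) : ℝ :=
  Real.smoothTransition ((s - a) / δ)

variable {a δ s : ℝ}

lemma contDiff_smoothStep (a δ : ℝ) : ContDiff ℝ 2 (smoothStep a δ) :=
  Real.smoothTransition.contDiff.comp ((contDiff_id.sub contDiff_const).div_const δ)

lemma smoothStep_of_le (hδ : 0 < δ) (hs : s ≤ a) : smoothStep a δ s = 0 :=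
  Real.smoothTransition.zero_of_nonpos (div_nonpos_of_nonpos_of_nonneg (sub_nonpos.2 hs) hδ.le)

lemma smoothStep_of_ge (hδ : 0 < δ) (hs : a + δ ≤ s) : smoothStep a δ s = 1 :=
  Real.smoothTransition.one_of_one_le ((one_le_div₀ hδ).2 (le_sub_iff_add_le'.2 hs))

lemma smoothStep_mem_Icc (a δ s : ℝ) : smoothStep a δ s ∈ Icc 0 1 :=
  ⟨Real.smoothTransition.nonneg _, Real.smoothTransition.le_one _⟩

/-- A smooth substitute for `max δ s`: it is constant for `s ≤ δ`, equals `s` for `2 * δ ≤ s`, and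
lies between `δ` and `max δ s`. -/
def smoothMax (δ s : ℝ) : ℝ :=
  δ + (s - δ) * smoothStep δ δ s

lemma contDiff_smoothMax (δ : ℝ) : ContDiff ℝ 2 (smoothMax δ) :=
  contDiff_const.add ((contDiff_id.sub contDiff_const).mul (contDiff_smoothStep δ δ))

lemma smoothMax_of_le (hδ : 0 < δ) (hs : s ≤ δ) : smoothMax δ s = δ := by
  rw [smoothMax, smoothStep_of_le hδ hs, mul_zero, add_zero]

lemma smoothMax_of_two_mul_le (hδ : 0 < δ) (hs : 2 * δ ≤ s) : smoothMax δ s = s := by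
  rw [smoothMax, smoothStep_of_ge hδ (two_mul δ ▸ hs), mul_one, add_sub_cancel]

lemma smoothMax_mem_Icc (hδ : 0 < δ) (s : ℝ) : smoothMax δ s ∈ Icc δ (max δ s) := by
  rcases le_total s δ with hs | hs
  · rw [smoothMax_of_le hδ hs]
    exact ⟨le_rfl, le_max_left _ _⟩
  · obtain ⟨h₀, h₁⟩ := smoothStep_mem_Icc δ δ s
    rw [max_eq_right hs, smoothMax]
    constructor <;> nlinarith

variable {V : Type*} [AddCommGroup V] [Module ℝ V] {u : V → V} {P : V → ℝ}

/-- The drift `u` multiplied by a cutoff that is `1` on `{2 * δ ≤ P}` and `0` on `{P ≤ δ}`. -/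
def truncatedDrift (δ : ℝ) (u : V → V) (P : V → ℝ) (x : V) : V :=
  smoothStep δ δ (P x) • u x

lemma truncatedDrift_of_le (hδ : 0 < δ) {x : V} (hx : P x ≤ δ) : truncatedDrift δ u P x = 0 := by
  rw [truncatedDrift, smoothStep_of_le hδ hx, zero_smul]

lemma truncatedDrift_of_ge (hδ : 0 < δ) {x : V} (hx : 2 * δ ≤ P x) :
    truncatedDrift δ u P x = u x := by
  rw [truncatedDrift, smoothStep_of_ge hδ (two_mul δ ▸ hx), one_smul]

end SmoothStep

lemma exists_pos_le_mul_and_drift_small (V : Type*) [NormedAddCommGroup V] [InnerProductSpace ℝ V]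
    [FiniteDimensional ℝ V] [MeasurableSpace V] [BorelSpace V] {δ : ℝ} (hδ : 0 < δ) (A C : ℝ) :
    ∃ m, 0 < m ∧ A ≤ m * δ ∧ doublingConst V * laplaceRpow m (-(1 / 2)) * C ≤ 1 / 2 := by
  have hlim : Tendsto (fun m => doublingConst V * laplaceRpow m (-(1 / 2)) * C) atTop (𝓝 0) := by
    simpa only [mul_zero, zero_mul] using
      ((tendsto_laplaceRpow_atTop (by norm_num)).const_mul (doublingConst V)).mul_const C
  obtain ⟨m, hsmall, hpos, hA⟩ := ((hlim.eventually_le_const one_half_pos).and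
    ((eventually_gt_atTop 0).and (eventually_ge_atTop (A / δ)))).exists
  exact ⟨m, hpos, (div_le_iff₀ hδ).1 hA, hsmall⟩

section Barrier

variable {V : Type*} [NormedAddCommGroup V] [InnerProductSpace ℝ V] [FiniteDimensional ℝ V]
  {Ω : Set V} {u : V → V} {G : ℝ → ℝ} {P : V → ℝ} {a δ : ℝ}

/-- `P` is a supersolution of `-ΔP + ⟪u, ∇P⟫ = G(P)` in the bounded open set `Ω` that is positive
in `Ω` and vanishes on the boundary; it is extended by `0` to the whole space. -/
structure IsBarrier (Ω : Set V) (u : V → V) (G : ℝ → ℝ) (P : V → ℝ) : Prop where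
  isOpen : IsOpen Ω
  isBounded : Bornology.IsBounded Ω
  contDiffAt_drift : ∀ x ∈ Ω, ContDiffAt ℝ 1 u x
  reaction : IsMonotoneReaction G
  continuous : Continuous P
  eq_zero_of_notMem : ∀ x ∉ Ω, P x = 0
  pos : ∀ x ∈ Ω, 0 < P x
  contDiffAt : ∀ x ∈ Ω, ContDiffAt ℝ 2 P x
  supersolution : ∀ x ∈ Ω, G (P x) ≤ -Δ P x + fderiv ℝ P x (u x)

namespace IsBarrier

lemma nonneg (h : IsBarrier Ω u G P) (x : V) : 0 ≤ P x := by
  by_cases hx : x ∈ Ω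
  · exact (h.pos x hx).le
  · exact (h.eq_zero_of_notMem x hx).ge

lemma mem_of_pos (h : IsBarrier Ω u G P) {x : V} (hx : 0 < P x) : x ∈ Ω :=
  not_imp_comm.1 (h.eq_zero_of_notMem x) hx.ne'

lemma isCompact_setOf_le (h : IsBarrier Ω u G P) (ha : 0 < a) : IsCompact {x | a ≤ P x} :=
  Metric.isCompact_of_isClosed_isBounded (isClosed_le continuous_const h.continuous)
    (h.isBounded.subset fun _ hx => h.mem_of_pos (ha.trans_le hx))

lemma hasCompactSupport (h : IsBarrier Ω u G P) : HasCompactSupport P :=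
  .intro h.isBounded.isCompact_closure fun x hx =>
    h.eq_zero_of_notMem x fun hxΩ => hx (subset_closure hxΩ)

lemma bddAbove (h : IsBarrier Ω u G P) : BddAbove (range P) := by
  obtain ⟨M, hM⟩ := h.hasCompactSupport.exists_bound_of_continuous h.continuous
  exact ⟨M, forall_mem_range.2 fun x => (le_abs_self _).trans (hM x)⟩

lemma comp_eventuallyEq_const (h : IsBarrier Ω u G P) {H : ℝ → ℝ} {c : ℝ}
    (hH : ∀ s ≤ a, H s = c) {x : V} (hx : P x < a) : (fun y => H (P y)) =ᶠ[𝓝 x] fun _ => c := by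
  filter_upwards [h.continuous.continuousAt.eventually_lt_const hx] with y hy using hH _ hy.le

lemma contDiff_comp (h : IsBarrier Ω u G P) (ha : 0 < a) {H : ℝ → ℝ} {c : ℝ} (hH : ContDiff ℝ 2 H)
    (hc : ∀ s ≤ a, H s = c) : ContDiff ℝ 2 fun x => H (P x) := by
  refine contDiff_iff_contDiffAt.2 fun x => ?_
  rcases lt_or_ge (P x) a with hx | hx
  · exact contDiffAt_const.congr_of_eventuallyEq (h.comp_eventuallyEq_const hc hx)
  · exact hH.contDiffAt.comp x (h.contDiffAt x (h.mem_of_pos (ha.trans_le hx)))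

lemma tsupport_truncatedDrift_subset (h : IsBarrier Ω u G P) (hδ : 0 < δ) :
    tsupport (truncatedDrift δ u P) ⊆ {x | δ ≤ P x} :=
  closure_minimal (fun _ hx => le_of_not_ge fun hxP => hx (truncatedDrift_of_le hδ hxP))
    (isClosed_le continuous_const h.continuous)

lemma hasCompactSupport_truncatedDrift (h : IsBarrier Ω u G P) (hδ : 0 < δ) :
    HasCompactSupport (truncatedDrift δ u P) :=
  (h.isCompact_setOf_le hδ).of_isClosed_subset (isClosed_tsupport _)
    (h.tsupport_truncatedDrift_subset hδ)

lemma contDiff_truncatedDrift (h : IsBarrier Ω u G P) (hδ : 0 < δ) :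
    ContDiff ℝ 1 (truncatedDrift δ u P) :=
  contDiff_of_contDiffAt_tsupport fun x hx =>
    ((h.contDiff_comp hδ (contDiff_smoothStep δ δ)
      fun _ => smoothStep_of_le hδ).contDiffAt.of_le one_le_two).smul
      (h.contDiffAt_drift x (h.mem_of_pos (hδ.trans_le (h.tsupport_truncatedDrift_subset hδ hx))))

lemma contDiff_smoothMax_comp (h : IsBarrier Ω u G P) (hδ : 0 < δ) :
    ContDiff ℝ 2 fun x => smoothMax δ (P x) :=
  h.contDiff_comp hδ (contDiff_smoothMax δ) fun _ => smoothMax_of_le hδ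

lemma exists_abs_drift_smoothMax_le (h : IsBarrier Ω u G P) (hδ : 0 < δ) :
    ∃ A, ∀ x, |-Δ (fun y => smoothMax δ (P y)) x +
      fderiv ℝ (fun y => smoothMax δ (P y)) x (truncatedDrift δ u P x)| ≤ A := by
  have hη := h.contDiff_smoothMax_comp hδ
  refine (HasCompactSupport.intro (h.isCompact_setOf_le hδ)
    fun x hx => ?_).exists_bound_of_continuous
    ((contDiff_laplacian (k := 0) hη (by norm_num)).continuous.neg.add
      ((hη.continuous_fderiv two_ne_zero).clm_apply (h.contDiff_truncatedDrift hδ).continuous))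
  have hconst := h.comp_eventuallyEq_const (fun _ => smoothMax_of_le hδ) (not_le.1 hx)
  rw [Pi.add_apply, Pi.neg_apply, (laplacian_congr_nhds hconst).eq_of_nhds, hconst.fderiv_eq,
    congrFun laplacian_const x]
  simp

lemma smoothStep_mul_le_driftOperator (h : IsBarrier Ω u G P) (hδ : 0 < δ) {m : ℝ} (hm : 0 ≤ m)
    (hA : ∀ x, |-Δ (fun y => smoothMax δ (P y)) x +
      fderiv ℝ (fun y => smoothMax δ (P y)) x (truncatedDrift δ u P x)| ≤ m * δ) (x : V) :
    smoothStep (2 * δ) δ (P x) * (m * smoothMax δ (P x) + G (smoothMax δ (P x))) ≤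
      driftOperator (truncatedDrift δ u P) m (fun y => smoothMax δ (P y)) x := by
  rw [driftOperator]
  rcases lt_or_ge (2 * δ) (P x) with hx | hx
  · have heq : (fun y => smoothMax δ (P y)) =ᶠ[𝓝 x] P := by
      filter_upwards [h.continuous.continuousAt.eventually_const_lt hx] with y hy
        using smoothMax_of_two_mul_le hδ hy.le
    rw [(laplacian_congr_nhds heq).eq_of_nhds, heq.fderiv_eq, heq.eq_of_nhds,
      truncatedDrift_of_ge hδ hx.le]
    have hreaction := (h.reaction.const_mul_add hm).map_nonneg (h.nonneg x)
    calc smoothStep (2 * δ) δ (P x) * (m * P x + G (P x)) ≤ m * P x + G (P x) :=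
          mul_le_of_le_one_left hreaction (smoothStep_mem_Icc _ _ _).2
      _ ≤ -Δ P x + fderiv ℝ P x (u x) + m * P x := by
          linarith [h.supersolution x (h.mem_of_pos ((by positivity : 0 < 2 * δ).trans hx))]
  · rw [smoothStep_of_le hδ hx, zero_mul]
    have hmax := mul_le_mul_of_nonneg_left (smoothMax_mem_Icc hδ (P x)).1 hm
    linarith [(abs_le.1 (hA x)).1]

variable [MeasurableSpace V] [BorelSpace V]

lemma exists_isIterationProblem (h : IsBarrier Ω u G P) (hδ : 0 < δ) :
    ∃ m, IsIterationProblem (truncatedDrift δ u P) m (fun x => smoothStep (2 * δ) δ (P x))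
      (fun s => m * s + G s) fun x => smoothMax δ (P x) := by
  have h2δ : 0 < 2 * δ := by positivity
  have hb := h.contDiff_truncatedDrift hδ
  have hbs := h.hasCompactSupport_truncatedDrift hδ
  obtain ⟨C, hC⟩ := hbs.exists_bound_of_continuous hb.continuous
  obtain ⟨A, hA⟩ := h.exists_abs_drift_smoothMax_le hδ
  obtain ⟨M, hM⟩ := h.bddAbove
  obtain ⟨m, hm, hmA, hsmall⟩ := exists_pos_le_mul_and_drift_small V hδ A C
  exact ⟨m, {
    contDiff_drift := hb
    hasCompactSupport_drift := hbs
    pos := hm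
    exists_drift_small := ⟨C, hC, hsmall⟩
    contDiff_weight := (h.contDiff_comp h2δ (contDiff_smoothStep _ _)
      fun _ => smoothStep_of_le hδ).of_le one_le_two
    hasCompactSupport_weight := .intro (h.isCompact_setOf_le h2δ) fun x hx =>
      smoothStep_of_le hδ (not_le.1 hx).le
    weight_nonneg := fun x => (smoothStep_mem_Icc _ _ _).1
    reaction := h.reaction.const_mul_add hm.le
    contDiff_supersolution := h.contDiff_smoothMax_comp hδ
    bddAbove_supersolution := ⟨max δ M, forall_mem_range.2 fun x =>
      (smoothMax_mem_Icc hδ _).2.trans (max_le_max_left δ (hM (mem_range_self x)))⟩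
    supersolution_nonneg := fun x => hδ.le.trans (smoothMax_mem_Icc hδ _).1
    supersolution := h.smoothStep_mul_le_driftOperator hδ hm.le fun x => (hA x).trans hmA }⟩

lemma exists_approximate_weak_solution (h : IsBarrier Ω u G P) (hδ : 0 < δ) :
    ∃ φ : V → ℝ, AEStronglyMeasurable φ ∧ (∀ x, φ x ∈ Icc 0 (max δ (P x))) ∧
      ∀ ζ, IsCutoff u ζ → (∀ x ∈ tsupport ζ, 3 * δ ≤ P x) →
        SolvesLocalized u ζ φ fun y => G (φ y) := by
  obtain ⟨m, hm⟩ := h.exists_isIterationProblem hδ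
  obtain ⟨φ, hφ, hmem, hsolves⟩ := hm.exists_weak_solution
  refine ⟨φ, hφ, fun x => ⟨(hmem x).1, (hmem x).2.trans (smoothMax_mem_Icc hδ _).2⟩,
    fun ζ hζ hζP => ?_⟩
  simpa only [add_sub_cancel_left] using hsolves hζ fun x hx =>
    ⟨truncatedDrift_of_ge hδ (by linarith [hζP x hx]), smoothStep_of_ge hδ (by linarith [hζP x hx])⟩

end IsBarrier

end Barrier

section Extraction

lemma exists_subseq_tendsto_of_eventually_dist_lt {X E : Type*} [TopologicalSpace X]
    [TopologicalSpace.SeparableSpace X] [PseudoMetricSpace E] {s : Set X} {K : Set E}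
    (hK : IsCompact K) {f : ℕ → X → E} (hf : ∀ k x, f k x ∈ K)
    (hequi : ∀ x ∈ s, ∀ ε > 0, ∀ᶠ y in 𝓝 x, ∀ᶠ k in atTop, dist (f k y) (f k x) < ε) :
    ∃ σ : ℕ → ℕ, StrictMono σ ∧ ∀ x ∈ s, ∃ l, Tendsto (fun k => f (σ k) x) atTop (𝓝 l) := by
  obtain ⟨D, hDcount, hD⟩ := TopologicalSpace.exists_countable_dense X
  have := hDcount.to_subtype
  obtain ⟨a, -, σ, hσ, hlim⟩ := (isCompact_univ_pi fun _ : D => hK).tendsto_subseq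
    (x := fun k (q : D) => f k q) fun k q _ => hf k q
  refine ⟨σ, hσ, fun x hx => ?_⟩
  have hcauchy : CauchySeq fun k => f (σ k) x := by
    refine Metric.cauchySeq_iff.2 fun ε hε => ?_
    obtain ⟨q, hq, hqD⟩ := hD.inter_nhds_nonempty (hequi x hx (ε / 3) (by positivity))
    have hq_cauchy : CauchySeq fun k => f (σ k) q := (tendsto_pi_nhds.1 hlim ⟨q, hq⟩).cauchySeq
    obtain ⟨N, hN⟩ := Metric.cauchySeq_iff.1 hq_cauchy (ε / 3) (by positivity)
    obtain ⟨N', hN'⟩ := eventually_atTop.1 (hσ.tendsto_atTop.eventually hqD)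
    refine ⟨max N N', fun j hj k hk => ?_⟩
    linarith [dist_triangle4_left (f (σ j) q) (f (σ k) q) (f (σ j) x) (f (σ k) x),
      hN j (le_of_max_le_left hj) k (le_of_max_le_left hk),
      hN' j (le_of_max_le_right hj), hN' k (le_of_max_le_right hk)]
  obtain ⟨l, -, hl⟩ := cauchySeq_tendsto_of_isComplete hK.isComplete (fun k => hf (σ k) x) hcauchy
  exact ⟨l, hl⟩

end Extraction

section Existence

variable {V : Type*} [NormedAddCommGroup V] [InnerProductSpace ℝ V] [FiniteDimensional ℝ V]
  [MeasurableSpace V] [BorelSpace V] {Ω : Set V} {u : V → V} {G : ℝ → ℝ} {M : ℝ}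

/-- Sequences of bounded measurable functions that solve each localized equation of
`-Δv + ⟪u, ∇v⟫ = G(v)` in `Ω` from some index on. -/
structure IsAsymptoticWeakSol (Ω : Set V) (u : V → V) (G : ℝ → ℝ) (M : ℝ) (φ : ℕ → V → ℝ) :
    Prop where
  aestronglyMeasurable : ∀ k, AEStronglyMeasurable (φ k)
  protected abs_le : ∀ k x, |φ k x| ≤ M
  solvesLocalized : ∀ ζ, IsCutoff u ζ → tsupport ζ ⊆ Ω →
    ∀ᶠ k in atTop, SolvesLocalized u ζ (φ k) fun y => G (φ k y)

namespace IsAsymptoticWeakSol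

variable {φ : ℕ → V → ℝ}

lemma isBoundedOnSupport (hφ : IsAsymptoticWeakSol Ω u G M φ) (ζ : V → ℝ) (k : ℕ) :
    IsBoundedOnSupport ζ M (φ k) :=
  ⟨hφ.aestronglyMeasurable k, fun x _ => hφ.abs_le k x⟩

lemma comp_strictMono (hφ : IsAsymptoticWeakSol Ω u G M φ) {σ : ℕ → ℕ} (hσ : StrictMono σ) :
    IsAsymptoticWeakSol Ω u G M fun k => φ (σ k) where
  aestronglyMeasurable k := hφ.aestronglyMeasurable (σ k)
  abs_le k := hφ.abs_le (σ k)
  solvesLocalized ζ hζ hζΩ := hσ.tendsto_atTop.eventually (hφ.solvesLocalized ζ hζ hζΩ)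

lemma eventually_dist_lt (hφ : IsAsymptoticWeakSol Ω u G M φ) (hG : Continuous G)
    (hΩ : IsOpen Ω) (hu : ∀ x ∈ Ω, ContDiffAt ℝ 1 u x) {x : V} (hx : x ∈ Ω) {ε : ℝ}
    (hε : 0 < ε) : ∀ᶠ y in 𝓝 x, ∀ᶠ k in atTop, dist (φ k y) (φ k x) < ε := by
  obtain ⟨ζ, hζ, hζΩ, hone, -⟩ :=
    exists_isCutoff isCompact_singleton hΩ (singleton_subset_iff.2 hx) hu
  have hζx : ζ =ᶠ[𝓝 x] 1 := hone x rfl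
  have hhalf : (1 / 2 : ℝ≥0) < 1 := NNReal.half_lt_self one_ne_zero
  obtain ⟨N, hN⟩ := exists_isBoundedOnSupport_comp (V := V) hG M
  obtain ⟨C, hC⟩ := hζ.exists_holderWith hhalf N
  have hsmall : ∀ᶠ y in 𝓝 x, C * dist y x ^ ((1 / 2 : ℝ≥0) : ℝ) < ε := by
    have hcont : ContinuousAt (fun y => C * dist y x ^ ((1 / 2 : ℝ≥0) : ℝ)) x :=
      ((continuous_id.dist continuous_const).rpow_const
        fun _ => Or.inr (NNReal.coe_nonneg _)).continuousAt.const_mul _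
    refine hcont.eventually_lt_const ?_
    beta_reduce
    rwa [dist_self, Real.zero_rpow (by norm_num), mul_zero]
  filter_upwards [hsmall, hζx] with y hy hζy
  filter_upwards [hφ.solvesLocalized ζ hζ hζΩ] with k hk
  have hbounded := hN ζ (φ k) (hφ.isBoundedOnSupport ζ k)
  have hdist := (hC _ _ hbounded.1 hbounded.2 hk).dist_le y x
  rw [hζy, hζx.eq_of_nhds, Pi.one_apply, Pi.one_apply, one_mul, one_mul] at hdist
  exact hdist.trans_lt hy

lemma isBoundedWeakSol_of_tendsto (hφ : IsAsymptoticWeakSol Ω u G M φ) (hG : Continuous G)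
    {ψ : V → ℝ} (hψ : AEStronglyMeasurable ψ)
    (hlim : ∀ x ∈ Ω, Tendsto (φ · x) atTop (𝓝 (ψ x))) : IsBoundedWeakSol Ω u G M ψ where
  aestronglyMeasurable := hψ
  abs_le x hx := le_of_tendsto (hlim x hx).abs (.of_forall fun k => hφ.abs_le k x)
  solvesLocalized ζ hζ hζΩ := by
    obtain ⟨N, hN⟩ := exists_isBoundedOnSupport_comp (V := V) hG M
    have hbounded (k : ℕ) := hN ζ (φ k) (hφ.isBoundedOnSupport ζ k)
    exact hζ.solvesLocalized_of_tendsto (fun k => (hbounded k).1) (fun k => (hbounded k).2)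
      (fun x hx => hlim x (hζΩ hx))
      (fun x hx => (hG.tendsto _).comp (hlim x (hζΩ hx))) (hφ.solvesLocalized ζ hζ hζΩ)

theorem exists_subseq_tendsto (hφ : IsAsymptoticWeakSol Ω u G M φ) (hG : Continuous G)
    (hΩ : IsOpen Ω) (hu : ∀ x ∈ Ω, ContDiffAt ℝ 1 u x) :
    ∃ σ : ℕ → ℕ, StrictMono σ ∧ ∃ ψ, IsBoundedWeakSol Ω u G M ψ ∧
      (∀ x ∈ Ω, Tendsto (fun k => φ (σ k) x) atTop (𝓝 (ψ x))) ∧ ∀ x ∉ Ω, ψ x = 0 := by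
  obtain ⟨σ, hσ, hconv⟩ := exists_subseq_tendsto_of_eventually_dist_lt
    (isCompact_Icc (a := -M) (b := M)) (fun k x => abs_le.1 (hφ.abs_le k x))
    fun x hx ε hε => hφ.eventually_dist_lt hG hΩ hu hx hε
  choose! l hl using hconv
  have hlim : ∀ x ∈ Ω, Tendsto (fun k => φ (σ k) x) atTop (𝓝 (Ω.indicator l x)) := fun x hx => by
    rw [indicator_of_mem hx]
    exact hl x hx
  have hψ : AEStronglyMeasurable (Ω.indicator l) := by
    refine aestronglyMeasurable_of_tendsto_ae atTop (f := fun k => Ω.indicator (φ (σ k)))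
      (fun k => (hφ.aestronglyMeasurable _).indicator hΩ.measurableSet) (.of_forall fun x => ?_)
    by_cases hx : x ∈ Ω
    · simpa only [indicator_of_mem hx] using hl x hx
    · simp only [indicator_of_notMem hx, tendsto_const_nhds]
  exact ⟨σ, hσ, Ω.indicator l, (hφ.comp_strictMono hσ).isBoundedWeakSol_of_tendsto hG hψ hlim,
    hlim, fun x hx => indicator_of_notMem hx l⟩

end IsAsymptoticWeakSol

namespace IsBarrier

variable {P : V → ℝ}

lemma exists_isAsymptoticWeakSol (h : IsBarrier Ω u G P) :
    ∃ M, ∃ φ : ℕ → V → ℝ, IsAsymptoticWeakSol Ω u G M φ ∧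
      ∀ (k : ℕ) x, φ k x ∈ Icc 0 (max (1 / ((k : ℝ) + 1)) (P x)) := by
  have hδ (k : ℕ) : 0 < 1 / ((k : ℝ) + 1) := Nat.one_div_pos_of_nat
  choose φ hφ hmem hsolves using fun k => h.exists_approximate_weak_solution (hδ k)
  obtain ⟨D, hD⟩ := h.bddAbove
  refine ⟨max 1 D, φ, ⟨hφ, fun k x => ?_, fun ζ hζ hζΩ => ?_⟩, hmem⟩
  · rw [abs_of_nonneg (hmem k x).1]
    exact (hmem k x).2.trans (max_le_max (by simpa using Nat.one_div_le_one_div (α := ℝ) k.zero_le)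
      (hD (mem_range_self x)))
  · obtain ⟨a, ha, haP⟩ := hζ.hasCompactSupport.exists_forall_le' h.continuous.continuousOn
      fun x hx => h.pos x (hζΩ hx)
    filter_upwards [tendsto_one_div_add_atTop_nhds_zero_nat.eventually_lt_const
      (by positivity : 0 < a / 3)] with k hk
    exact hsolves k ζ hζ fun x hx => by linarith [haP x hx]

theorem exists_solution (h : IsBarrier Ω u G P) :
    ∃ φ : V → ℝ, Continuous φ ∧ (∀ x, φ x ∈ Icc 0 (P x)) ∧
      ∀ x ∈ Ω, ContDiffAt ℝ 2 φ x ∧ -Δ φ x + fderiv ℝ φ x (u x) = G (φ x) := by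
  obtain ⟨M, φ, hφ, hmem⟩ := h.exists_isAsymptoticWeakSol
  obtain ⟨σ, hσ, ψ, hψ, hlim, hzero⟩ := hφ.exists_subseq_tendsto h.reaction.contDiff.continuous
    h.isOpen h.contDiffAt_drift
  have hψ_mem (x : V) : ψ x ∈ Icc 0 (P x) := by
    by_cases hx : x ∈ Ω
    · have hmax : Tendsto (fun k => max (1 / ((σ k : ℝ) + 1)) (P x)) atTop (𝓝 (max 0 (P x))) :=
        (tendsto_one_div_add_atTop_nhds_zero_nat.comp hσ.tendsto_atTop).max tendsto_const_nhds
      rw [max_eq_right (h.nonneg x)] at hmax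
      exact ⟨ge_of_tendsto' (hlim x hx) fun k => (hmem _ x).1,
        le_of_tendsto_of_tendsto' (hlim x hx) hmax fun k => (hmem _ x).2⟩
    · rw [hzero x hx]
      exact ⟨le_rfl, h.nonneg x⟩
  have hsol (x : V) (hx : x ∈ Ω) :=
    hψ.contDiffAt_two_and_eq h.reaction.contDiff h.isOpen h.contDiffAt_drift hx
  refine ⟨ψ, continuous_iff_continuousAt.2 fun x => ?_, hψ_mem, hsol⟩
  by_cases hx : x ∈ Ω
  · exact (hsol x hx).1.continuousAt
  · have hP : Tendsto P (𝓝 x) (𝓝 0) := h.eq_zero_of_notMem x hx ▸ h.continuous.tendsto x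
    rw [ContinuousAt, hzero x hx]
    exact squeeze_zero (fun y => (hψ_mem y).1) (fun y => (hψ_mem y).2) hP

end IsBarrier

end Existence

/-! ### The comparison profile -/

section InverseFunction

variable {𝕜 E F G : Type*} [RCLike 𝕜] [NormedAddCommGroup E] [NormedSpace 𝕜 E] [CompleteSpace E]
  [NormedAddCommGroup F] [NormedSpace 𝕜 F] [NormedAddCommGroup G] [NormedSpace 𝕜 G]

lemma contDiffAt_of_comp_of_injective {f : E → F} {Φ : G → E} {f' : E ≃L[𝕜] F} {a : G}
    {k : WithTop ℕ∞} (hf : ContDiffAt 𝕜 k f (Φ a)) (hf' : HasFDerivAt f (f' : E →L[𝕜] F) (Φ a))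
    (hinj : Function.Injective f) (hcomp : ContDiffAt 𝕜 k (f ∘ Φ) a) (hk : k ≠ 0) :
    ContDiffAt 𝕜 k Φ a := by
  have hright : ∀ᶠ y in 𝓝 (f (Φ a)), f (hf.localInverse hf' hk y) = y :=
    (hf.hasStrictFDerivAt' hf' hk).eventually_right_inverse
  refine ((hf.to_localInverse hf' hk).comp a hcomp).congr_of_eventuallyEq ?_
  filter_upwards [hcomp.continuousAt.eventually hright] with t ht
  exact hinj ht.symm

lemma contDiffAt_of_comp_of_injective_of_hasDerivAt {f : 𝕜 → 𝕜} {Φ : G → 𝕜} {f' : 𝕜} {a : G}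
    {k : WithTop ℕ∞} (hf : ContDiffAt 𝕜 k f (Φ a)) (hf' : HasDerivAt f f' (Φ a)) (hf'₀ : f' ≠ 0)
    (hinj : Function.Injective f) (hcomp : ContDiffAt 𝕜 k (f ∘ Φ) a) (hk : k ≠ 0) :
    ContDiffAt 𝕜 k Φ a :=
  contDiffAt_of_comp_of_injective hf
    (hf'.hasFDerivAt_equiv hf'₀) hinj hcomp hk

end InverseFunction

section ReciprocalIntegral

variable {g : ℝ → ℝ} {s θ : ℝ}

/-- The primitive `s ↦ ∫₀ˢ dt / g(t)`; on the negative axis `g` is replaced by `g 0`, so that the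
primitive of a function that is positive on `[0, ∞)` is increasing on all of `ℝ`. -/
def reciprocalIntegral (g : ℝ → ℝ) (s : ℝ) : ℝ :=
  ∫ t in (0 : ℝ)..s, 1 / g (max t 0)

lemma reciprocalIntegral_zero (g : ℝ → ℝ) : reciprocalIntegral g 0 = 0 :=
  intervalIntegral.integral_same

lemma IsMonotoneReaction.map_pos (hg : IsMonotoneReaction g) (hg0 : 0 < g 0) (hs : 0 ≤ s) :
    0 < g s :=
  hg0.trans_le (hg.monotoneOn self_mem_Ici hs hs)

lemma hasDerivAt_reciprocalIntegral (hg : IsMonotoneReaction g) (hg0 : 0 < g 0) (s : ℝ) :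
    HasDerivAt (reciprocalIntegral g) (1 / g (max s 0)) s := by
  have hcont : Continuous fun t => 1 / g (max t 0) :=
    continuous_const.div (hg.contDiff.continuous.comp (continuous_id.max continuous_const))
      fun t => (hg.map_pos hg0 (le_max_right t 0)).ne'
  exact intervalIntegral.integral_hasDerivAt_right (hcont.intervalIntegrable _ _)
    hcont.aestronglyMeasurable.stronglyMeasurableAtFilter hcont.continuousAt

lemma hasDerivAt_reciprocalIntegral_of_nonneg (hg : IsMonotoneReaction g) (hg0 : 0 < g 0)
    (hs : 0 ≤ s) : HasDerivAt (reciprocalIntegral g) (1 / g s) s := by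
  simpa only [max_eq_left hs] using hasDerivAt_reciprocalIntegral hg hg0 s

lemma strictMono_reciprocalIntegral (hg : IsMonotoneReaction g) (hg0 : 0 < g 0) :
    StrictMono (reciprocalIntegral g) := by
  refine strictMono_of_deriv_pos fun s => ?_
  rw [(hasDerivAt_reciprocalIntegral hg hg0 s).deriv]
  exact one_div_pos.2 (hg.map_pos hg0 (le_max_right s 0))

lemma reciprocalIntegral_pos (hg : IsMonotoneReaction g) (hg0 : 0 < g 0) (hs : 0 < s) :
    0 < reciprocalIntegral g s :=
  reciprocalIntegral_zero g ▸ strictMono_reciprocalIntegral hg hg0 hs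

lemma continuous_reciprocalIntegral (hg : IsMonotoneReaction g) (hg0 : 0 < g 0) :
    Continuous (reciprocalIntegral g) :=
  continuous_iff_continuousAt.2 fun s => (hasDerivAt_reciprocalIntegral hg hg0 s).continuousAt

lemma contDiffAt_two_reciprocalIntegral (hg : IsMonotoneReaction g) (hg0 : 0 < g 0) (hs : 0 < s) :
    ContDiffAt ℝ 2 (reciprocalIntegral g) s := by
  have hderiv (t : ℝ) (ht : t ∈ Ioi 0) := hasDerivAt_reciprocalIntegral_of_nonneg hg hg0
    (mem_Ioi.1 ht).le
  have hC2 : ContDiffOn ℝ (1 + 1) (reciprocalIntegral g) (Ioi 0) := by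
    refine (contDiffOn_succ_iff_deriv_of_isOpen isOpen_Ioi).2
      ⟨fun t ht => (hderiv t ht).differentiableAt.differentiableWithinAt, by simp, ?_⟩
    have hinv : ContDiffOn ℝ 1 (fun t => 1 / g t) (Ioi 0) :=
      contDiffOn_const.div hg.contDiff.contDiffOn
        fun t ht => (hg.map_pos hg0 (mem_Ioi.1 ht).le).ne'
    exact hinv.congr fun t ht => (hderiv t ht).deriv
  exact (one_add_one_eq_two (R := WithTop ℕ∞) ▸ hC2).contDiffAt (Ioi_mem_nhds hs)

lemma exists_mul_reciprocalIntegral_le (hg : IsMonotoneReaction g) (hg0 : 0 < g 0)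
    (hgint : IntegrableOn (fun s => 1 / g s) (Ici 0)) (hθ : θ ∈ Ioo (0 : ℝ) 1) :
    ∃ K > 0, ∀ s, θ * reciprocalIntegral g s ≤ reciprocalIntegral g K := by
  have hmono := strictMono_reciprocalIntegral hg hg0
  have hint : IntegrableOn (fun t => 1 / g (max t 0)) (Ioi 0) :=
    (hgint.mono_set Ioi_subset_Ici_self).congr_fun
      (fun t ht => by simp only [max_eq_left (mem_Ioi.1 ht).le]) measurableSet_Ioi
  set H := ∫ t in Ioi (0 : ℝ), 1 / g (max t 0)
  have hlim : Tendsto (reciprocalIntegral g) atTop (𝓝 H) :=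
    intervalIntegral_tendsto_integral_Ioi 0 hint tendsto_id
  have hle : ∀ s, reciprocalIntegral g s ≤ H := hmono.monotone.ge_of_tendsto hlim
  have hH : 0 < H := (reciprocalIntegral_pos hg hg0 one_pos).trans_le (hle 1)
  obtain ⟨K, hK, hK0⟩ := ((hlim.eventually_const_lt (mul_lt_of_lt_one_left hH hθ.2)).and
    (eventually_gt_atTop 0)).exists
  exact ⟨K, hK0, fun s => (mul_le_mul_of_nonneg_left (hle s) hθ.1.le).trans hK.le⟩

end ReciprocalIntegral

section ComparisonProfile

variable {g Φ : ℝ → ℝ} {s θ : ℝ}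

/-- The change of unknown `Φ` given by `∫₀^{Φ(s)} dt / g(t) = θ ∫₀ˢ dt / g(t)` for `s > 0`. It maps
solutions at parameter `λ` to supersolutions at parameter `θ λ`. -/
def IsComparisonProfile (g : ℝ → ℝ) (θ : ℝ) (Φ : ℝ → ℝ) : Prop :=
  ∀ s, 0 < s → reciprocalIntegral g (Φ s) = θ * reciprocalIntegral g s

lemma exists_isComparisonProfile (hg : IsMonotoneReaction g) (hg0 : 0 < g 0)
    (hθ : θ ∈ Icc (0 : ℝ) 1) : ∃ Φ, IsComparisonProfile g θ Φ := by
  have hex (s : ℝ) (hs : 0 < s) : ∃ p, reciprocalIntegral g p = θ * reciprocalIntegral g s := by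
    have hpos := (reciprocalIntegral_pos hg hg0 hs).le
    obtain ⟨p, -, hp⟩ := intermediate_value_Icc hs.le
      (continuous_reciprocalIntegral hg hg0).continuousOn
      (show θ * reciprocalIntegral g s ∈ Icc (reciprocalIntegral g 0) (reciprocalIntegral g s) by
        rw [reciprocalIntegral_zero]
        exact ⟨mul_nonneg hθ.1 hpos, mul_le_of_le_one_left hpos hθ.2⟩)
    exact ⟨p, hp⟩
  choose! Φ hΦ using hex
  exact ⟨Φ, hΦ⟩

namespace IsComparisonProfile

lemma pos (hΦ : IsComparisonProfile g θ Φ) (hg : IsMonotoneReaction g) (hg0 : 0 < g 0)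
    (hθ : 0 < θ) (hs : 0 < s) : 0 < Φ s := by
  rw [← (strictMono_reciprocalIntegral hg hg0).lt_iff_lt, reciprocalIntegral_zero,
    hΦ s hs]
  exact mul_pos hθ (reciprocalIntegral_pos hg hg0 hs)

lemma le_self (hΦ : IsComparisonProfile g θ Φ) (hg : IsMonotoneReaction g) (hg0 : 0 < g 0)
    (hθ : θ ≤ 1) (hs : 0 < s) : Φ s ≤ s := by
  rw [← (strictMono_reciprocalIntegral hg hg0).le_iff_le, hΦ s hs]
  exact mul_le_of_le_one_left (reciprocalIntegral_pos hg hg0 hs).le hθ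

lemma comp_eventuallyEq (hΦ : IsComparisonProfile g θ Φ) (hs : 0 < s) :
    reciprocalIntegral g ∘ Φ =ᶠ[𝓝 s] fun t => θ * reciprocalIntegral g t := by
  filter_upwards [lt_mem_nhds hs] with t ht using hΦ t ht

lemma contDiffAt (hΦ : IsComparisonProfile g θ Φ) (hg : IsMonotoneReaction g) (hg0 : 0 < g 0)
    (hθ : 0 < θ) (hs : 0 < s) : ContDiffAt ℝ 2 Φ s := by
  have hΦs := hΦ.pos hg hg0 hθ hs
  have hcomp : ContDiffAt ℝ 2 (reciprocalIntegral g ∘ Φ) s :=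
    (contDiffAt_const.mul (contDiffAt_two_reciprocalIntegral hg hg0 hs)).congr_of_eventuallyEq
      (hΦ.comp_eventuallyEq hs)
  exact contDiffAt_of_comp_of_injective_of_hasDerivAt
    (contDiffAt_two_reciprocalIntegral hg hg0 hΦs)
    (hasDerivAt_reciprocalIntegral_of_nonneg hg hg0 hΦs.le)
    (one_div_pos.2 (hg.map_pos hg0 hΦs.le)).ne' (strictMono_reciprocalIntegral hg hg0).injective
    hcomp two_ne_zero

lemma deriv_eq (hΦ : IsComparisonProfile g θ Φ) (hg : IsMonotoneReaction g) (hg0 : 0 < g 0)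
    (hθ : 0 < θ) (hs : 0 < s) : deriv Φ s = θ * g (Φ s) / g s := by
  have hΦs := hΦ.pos hg hg0 hθ hs
  have hchain : HasDerivAt (reciprocalIntegral g ∘ Φ) (1 / g (Φ s) * deriv Φ s) s :=
    (hasDerivAt_reciprocalIntegral_of_nonneg hg hg0 hΦs.le).comp s
      ((hΦ.contDiffAt hg hg0 hθ hs).differentiableAt two_ne_zero).hasDerivAt
  have hright : HasDerivAt (reciprocalIntegral g ∘ Φ) (θ * (1 / g s)) s :=
    (hΦ.comp_eventuallyEq hs).hasDerivAt_iff.2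
      ((hasDerivAt_reciprocalIntegral_of_nonneg hg hg0 hs.le).const_mul θ)
  have hne := (hg.map_pos hg0 hs.le).ne'
  have hne' := (hg.map_pos hg0 hΦs.le).ne'
  have heq := hchain.unique hright
  field_simp at heq ⊢
  linarith

lemma deriv_deriv_eq (hΦ : IsComparisonProfile g θ Φ) (hg : IsMonotoneReaction g)
    (hg0 : 0 < g 0) (hθ : 0 < θ) (hs : 0 < s) :
    deriv (deriv Φ) s = θ * g (Φ s) * (θ * deriv g (Φ s) - deriv g s) / g s ^ 2 := by
  have hgd (t : ℝ) : HasDerivAt g (deriv g t) t :=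
    (hg.contDiff.differentiable one_ne_zero t).hasDerivAt
  have hgs := (hg.map_pos hg0 hs.le).ne'
  have hderiv : deriv Φ =ᶠ[𝓝 s] fun t => θ * g (Φ t) / g t := by
    filter_upwards [lt_mem_nhds hs] with t ht using hΦ.deriv_eq hg hg0 hθ ht
  have hΦd : HasDerivAt Φ (θ * g (Φ s) / g s) s := hΦ.deriv_eq hg hg0 hθ hs ▸
    ((hΦ.contDiffAt hg hg0 hθ hs).differentiableAt two_ne_zero).hasDerivAt
  have hquot := (((hgd (Φ s)).comp s hΦd).const_mul θ).div (hgd s) hgs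
  refine (hderiv.deriv_eq.trans hquot.deriv).trans ?_
  simp only [Function.comp_apply]
  field_simp

lemma deriv_deriv_nonpos (hΦ : IsComparisonProfile g θ Φ) (hg : IsMonotoneReaction g)
    (hg0 : 0 < g 0) (hgconv : ConvexOn ℝ (Ici 0) g) (hθ : θ ∈ Ioc (0 : ℝ) 1) (hs : 0 < s) :
    deriv (deriv Φ) s ≤ 0 := by
  have hΦs := (hΦ.pos hg hg0 hθ.1 hs).le
  have hgd : Differentiable ℝ g := hg.contDiff.differentiable one_ne_zero
  have hconvex : deriv g (Φ s) ≤ deriv g s :=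
    hgconv.monotoneOn_deriv (fun t _ => hgd t) hΦs hs.le (hΦ.le_self hg hg0 hθ.2 hs)
  have hnonneg : 0 ≤ deriv g (Φ s) :=
    (hgd (Φ s)).derivWithin (uniqueDiffOn_Ici 0 _ hΦs) ▸ hg.monotoneOn.derivWithin_nonneg
  rw [hΦ.deriv_deriv_eq hg hg0 hθ.1 hs]
  refine div_nonpos_of_nonpos_of_nonneg (mul_nonpos_of_nonneg_of_nonpos
    (mul_nonneg hθ.1.le (hg.map_pos hg0 hΦs).le) (sub_nonpos.2 ?_)) (sq_nonneg _)
  exact (mul_le_of_le_one_left hnonneg hθ.2).trans hconvex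

end IsComparisonProfile

end ComparisonProfile

section Supersolution

variable {V : Type*} [NormedAddCommGroup V] [InnerProductSpace ℝ V] [FiniteDimensional ℝ V]
  {Ω : Set V} {u : V → V} {g Φ : ℝ → ℝ} {φ : V → ℝ} {lam lam₀ θ : ℝ} {x : V}

lemma gradient_comp (hΦ : DifferentiableAt ℝ Φ (φ x)) (hφ : DifferentiableAt ℝ φ x) :
    ∇ (Φ ∘ φ) x = deriv Φ (φ x) • ∇ φ x := by
  rw [gradient, (hΦ.hasDerivAt.comp_hasFDerivAt x hφ.hasFDerivAt).fderiv, map_smul]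
  rfl

lemma laplacian_comp (hΦ : ContDiffAt ℝ 2 Φ (φ x)) (hφ : ContDiffAt ℝ 2 φ x) :
    Δ (Φ ∘ φ) x = deriv Φ (φ x) * Δ φ x + deriv (deriv Φ) (φ x) * ‖∇ φ x‖ ^ 2 := by
  have hgrad : ∇ (Φ ∘ φ) =ᶠ[𝓝 x] fun y => deriv Φ (φ y) • ∇ φ y := by
    filter_upwards [hφ.eventually (by simp), hφ.continuousAt.eventually (hΦ.eventually (by simp))]
      with y hφy hΦy
    exact gradient_comp (hΦy.differentiableAt two_ne_zero) (hφy.differentiableAt two_ne_zero)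
  have hφd := hφ.differentiableAt two_ne_zero
  have hderiv : DifferentiableAt ℝ (deriv Φ) (φ x) := by
    have hfderiv : DifferentiableAt ℝ (fderiv ℝ Φ) (φ x) :=
      (hΦ.fderiv_right one_add_one_eq_two.le).differentiableAt one_ne_zero
    exact hfderiv.clm_apply (differentiableAt_const 1)
  have hcomp : HasFDerivAt (fun y => deriv Φ (φ y)) (deriv (deriv Φ) (φ x) • fderiv ℝ φ x) x :=
    hderiv.hasDerivAt.comp_hasFDerivAt x hφd.hasFDerivAt
  rw [← divergence_gradient (hΦ.comp x hφ), divergence, hgrad.fderiv_eq, ← divergence,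
    divergence_smul hcomp.differentiableAt (differentiableAt_gradient hφ), divergence_gradient hφ,
    hcomp.fderiv, smul_apply, ← inner_gradient_left, real_inner_self_eq_norm_sq, smul_eq_mul]

/-- Positive supersolutions of the explosion problem: `-Δφ + ⟪u, ∇φ⟫ ≥ λ g(φ)` in `Ω`, with
`φ = 0` on `∂Ω`. -/
structure IsPositiveSupersolution (Ω : Set V) (u : V → V) (g : ℝ → ℝ) (lam : ℝ) (φ : V → ℝ) :
    Prop where
  contDiffAt : ∀ x ∈ Ω, ContDiffAt ℝ 2 φ x
  continuousOn : ContinuousOn φ (closure Ω)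
  eq_zero_of_mem_frontier : ∀ x ∈ frontier Ω, φ x = 0
  pos : ∀ x ∈ Ω, 0 < φ x
  supersolution : ∀ x ∈ Ω, lam * g (φ x) ≤ -Δ φ x + fderiv ℝ φ x (u x)

lemma IsComparisonProfile.supersolution_comp (hΦ : IsComparisonProfile g θ Φ)
    (hg : IsMonotoneReaction g) (hg0 : 0 < g 0) (hgconv : ConvexOn ℝ (Ici 0) g)
    (hθ : θ ∈ Ioc (0 : ℝ) 1) (hφ : ContDiffAt ℝ 2 φ x) (hpos : 0 < φ x) {w : V}
    (hsuper : lam * g (φ x) ≤ -Δ φ x + fderiv ℝ φ x w) :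
    θ * lam * g (Φ (φ x)) ≤ -Δ (Φ ∘ φ) x + fderiv ℝ (Φ ∘ φ) x w := by
  have hΦ2 := hΦ.contDiffAt hg hg0 hθ.1 hpos
  have hgφ := hg.map_pos hg0 hpos.le
  have hgΦ := hg.map_pos hg0 (hΦ.pos hg hg0 hθ.1 hpos).le
  have hfderiv : fderiv ℝ (Φ ∘ φ) x w = deriv Φ (φ x) * fderiv ℝ φ x w := by
    rw [← inner_gradient_left, gradient_comp (hΦ2.differentiableAt two_ne_zero)
      (hφ.differentiableAt two_ne_zero), real_inner_smul_left, inner_gradient_left]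
  have hderiv : 0 ≤ deriv Φ (φ x) := by
    rw [hΦ.deriv_eq hg hg0 hθ.1 hpos]
    exact div_nonneg (mul_nonneg hθ.1.le hgΦ.le) hgφ.le
  have hconcave : deriv (deriv Φ) (φ x) * ‖∇ φ x‖ ^ 2 ≤ 0 :=
    mul_nonpos_of_nonpos_of_nonneg (hΦ.deriv_deriv_nonpos hg hg0 hgconv hθ hpos) (sq_nonneg _)
  calc
    θ * lam * g (Φ (φ x)) = deriv Φ (φ x) * (lam * g (φ x)) := by
      rw [hΦ.deriv_eq hg hg0 hθ.1 hpos]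
      field_simp
    _ ≤ deriv Φ (φ x) * (-Δ φ x + fderiv ℝ φ x w) := mul_le_mul_of_nonneg_left hsuper hderiv
    _ ≤ -Δ (Φ ∘ φ) x + fderiv ℝ (Φ ∘ φ) x w := by
      rw [laplacian_comp hΦ2 hφ, hfderiv]
      linarith

lemma IsPositiveSupersolution.continuous_indicator_comp (h : IsPositiveSupersolution Ω u g lam φ)
    (hΩ : IsOpen Ω) (hcont : ∀ s, 0 < s → ContinuousAt Φ s) (hpos : ∀ s, 0 < s → 0 < Φ s)
    (hle : ∀ s, 0 < s → Φ s ≤ s) : Continuous (Ω.indicator (Φ ∘ φ)) := by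
  refine continuous_iff_continuousAt.2 fun x => ?_
  by_cases hx : x ∈ Ω
  · have heq : Ω.indicator (Φ ∘ φ) =ᶠ[𝓝 x] Φ ∘ φ :=
      (eqOn_indicator (f := Φ ∘ φ)).eventuallyEq_of_mem (hΩ.mem_nhds hx)
    exact ((hcont _ (h.pos x hx)).comp (h.contDiffAt x hx).continuousAt).congr heq.symm
  · have hφ : Tendsto (Ω.indicator φ) (𝓝 x) (𝓝 0) := indicator_of_notMem hx φ ▸
      (continuous_indicator h.eq_zero_of_mem_frontier h.continuousOn).tendsto x
    rw [ContinuousAt, indicator_of_notMem hx]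
    exact squeeze_zero (fun y => indicator_nonneg (fun y hy => (hpos _ (h.pos y hy)).le) y)
      (fun y => indicator_le_indicator' fun hy => hle _ (h.pos y hy)) hφ

theorem IsPositiveSupersolution.isBarrier (h : IsPositiveSupersolution Ω u g lam φ)
    (hΩ : IsOpen Ω) (hbdd : Bornology.IsBounded Ω) (hu : ContDiffOn ℝ 1 u Ω)
    (hg : IsMonotoneReaction g) (hg0 : 0 < g 0) (hgconv : ConvexOn ℝ (Ici 0) g)
    (hθ : θ ∈ Ioc (0 : ℝ) 1) (hΦ : IsComparisonProfile g θ Φ)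
    (hlam₀ : lam₀ ∈ Icc 0 (θ * lam)) :
    IsBarrier Ω u (fun s => lam₀ * g s) (Ω.indicator (Φ ∘ φ)) := by
  have hΦpos (s : ℝ) (hs : 0 < s) : 0 < Φ s := hΦ.pos hg hg0 hθ.1 hs
  have hΦcont (s : ℝ) (hs : 0 < s) := (hΦ.contDiffAt hg hg0 hθ.1 hs).continuousAt
  have heq (x : V) (hx : x ∈ Ω) : Ω.indicator (Φ ∘ φ) =ᶠ[𝓝 x] Φ ∘ φ :=
    (eqOn_indicator (f := Φ ∘ φ)).eventuallyEq_of_mem (hΩ.mem_nhds hx)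
  refine ⟨hΩ, hbdd, fun x hx => hu.contDiffAt (hΩ.mem_nhds hx), hg.const_mul hlam₀.1,
    h.continuous_indicator_comp hΩ hΦcont hΦpos fun s => hΦ.le_self hg hg0 hθ.2,
    fun x hx => indicator_of_notMem hx _, fun x hx => ?_, fun x hx => ?_, fun x hx => ?_⟩
  · rw [indicator_of_mem hx]
    exact hΦpos _ (h.pos x hx)
  · exact ((hΦ.contDiffAt hg hg0 hθ.1 (h.pos x hx)).comp x
      (h.contDiffAt x hx)).congr_of_eventuallyEq (heq x hx)
  · rw [(heq x hx).eq_of_nhds, (laplacian_congr_nhds (heq x hx)).eq_of_nhds, (heq x hx).fderiv_eq]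
    exact (mul_le_mul_of_nonneg_right hlam₀.2
      (hg.map_pos hg0 (hΦpos _ (h.pos x hx)).le).le).trans
      (hΦ.supersolution_comp hg hg0 hgconv hθ (h.contDiffAt x hx) (h.pos x hx)
        (h.supersolution x hx))

end Supersolution

section EuclideanSpace

variable {n : ℕ} {φ : EuclideanSpace ℝ (Fin n) → ℝ} {x : EuclideanSpace ℝ (Fin n)}

lemma lapl_eq_laplacian (hφ : ContDiffAt ℝ 2 φ x) : lapl φ x = Δ φ x := by
  rw [laplacian_eq_iteratedFDeriv_orthonormalBasis φ (EuclideanSpace.basisFun (Fin n) ℝ), lapl]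
  refine Finset.sum_congr rfl fun i _ => ?_
  rw [fderiv_fderiv_apply hφ, EuclideanSpace.basisFun_apply, iteratedFDeriv_two_apply]
  rfl

lemma neg_lapl_add_inner_gradient (hφ : ContDiffAt ℝ 2 φ x) (w : EuclideanSpace ℝ (Fin n)) :
    -lapl φ x + ⟪w, ∇ φ x⟫ = -Δ φ x + fderiv ℝ φ x w := by
  rw [lapl_eq_laplacian hφ, real_inner_comm, inner_gradient_left]

lemma IsClassicalSol.isPositiveSupersolution {Ω : Set (EuclideanSpace ℝ (Fin n))}
    {u : EuclideanSpace ℝ (Fin n) → EuclideanSpace ℝ (Fin n)} {g : ℝ → ℝ} {lam : ℝ}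
    (h : IsClassicalSol Ω u g lam φ) (hpos : ∀ x ∈ Ω, 0 < φ x) :
    IsPositiveSupersolution Ω u g lam φ where
  contDiffAt := h.1
  continuousOn := h.2.1
  eq_zero_of_mem_frontier := h.2.2.2
  pos := hpos
  supersolution x hx :=
    ((h.2.2.1 x hx).symm.trans (neg_lapl_add_inner_gradient (h.1 x hx) (u x))).le

end EuclideanSpace

theorem uniform_bound_away_from_threshold_general {g : ℝ → ℝ} (hg : ContDiff ℝ 1 g)
    (hg0 : 0 < g 0) (hgmono : MonotoneOn g (Ici 0)) (hgconv : ConvexOn ℝ (Ici 0) g)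
    (hgint : IntegrableOn (fun s => 1 / g s) (Ici 0)) {θ : ℝ} (hθ : θ ∈ Ioo (0 : ℝ) 1) :
    ∃ K : ℝ, 0 < K ∧
      ∀ (n : ℕ) (Ω : Set (EuclideanSpace ℝ (Fin n))), IsOpen Ω → Bornology.IsBounded Ω →
        ∀ u : EuclideanSpace ℝ (Fin n) → EuclideanSpace ℝ (Fin n), ContDiffOn ℝ 1 u Ω →
          ∀ lam₁, (∃ φ₁, IsPositiveSupersolution Ω u g lam₁ φ₁) →
            ∀ lam₀ ∈ Icc 0 (θ * lam₁),
              ∃ φ₀, IsNonnegSol Ω u g lam₀ φ₀ ∧ ∀ x ∈ Ω, φ₀ x ≤ K := by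
  have hreaction : IsMonotoneReaction g := ⟨hg, hgmono, hg0.le⟩
  obtain ⟨K, hK, hbound⟩ := exists_mul_reciprocalIntegral_le hreaction hg0 hgint hθ
  obtain ⟨Φ, hΦ⟩ := exists_isComparisonProfile hreaction hg0 ⟨hθ.1.le, hθ.2.le⟩
  refine ⟨K, hK, fun n Ω hΩ hbdd u hu lam₁ ⟨φ₁, hφ₁⟩ lam₀ hlam₀ => ?_⟩
  have hbarrier := hφ₁.isBarrier hΩ hbdd hu hreaction hg0 hgconv ⟨hθ.1, hθ.2.le⟩ hΦ hlam₀
  obtain ⟨φ₀, hcont, hmem, hsol⟩ := hbarrier.exists_solution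
  refine ⟨φ₀, ⟨⟨fun x hx => (hsol x hx).1, hcont.continuousOn, fun x hx => ?_, fun x hx => ?_⟩,
    fun x _ => (hmem x).1⟩, fun x hx => ?_⟩
  · exact (neg_lapl_add_inner_gradient (hsol x hx).1 (u x)).trans (hsol x hx).2
  · have hxΩ : x ∉ Ω := (hΩ.frontier_eq ▸ hx).2
    exact le_antisymm ((hmem x).2.trans_eq (hbarrier.eq_zero_of_notMem x hxΩ)) (hmem x).1
  · refine (hmem x).2.trans ?_
    rw [indicator_of_mem hx, Function.comp_apply,
      ← (strictMono_reciprocalIntegral hreaction hg0).le_iff_le, hΦ _ (hφ₁.pos x hx)]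
    exact hbound (φ₁ x)

/-- For every `θ ∈ (0,1)` there is `K(θ) > 0`, depending only on `θ`
and `g` (not on `Ω` or `u`), such that if a positive classical solution exists at some
`λ₁ > 0`, then for every `λ₀ ∈ (0, θ λ₁]` there is a nonnegative classical solution at
`λ₀` bounded above by `K(θ)`. -/
theorem uniform_bound_away_from_threshold (g : ℝ → ℝ)
    (hg : ContDiff ℝ 2 g) (hg0 : 0 < g 0)
    (hgmono : StrictMonoOn g (Ici 0)) (hgconv : ConvexOn ℝ (Ici 0) g)
    (hgint : IntegrableOn (fun s => 1 / g s) (Ici 0))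
    (θ : ℝ) (hθ : θ ∈ Ioo (0 : ℝ) 1) :
    ∃ K : ℝ, 0 < K ∧
      ∀ (n : ℕ) (Ω : Set (EuclideanSpace ℝ (Fin n))),
        IsOpen Ω → IsConnected Ω → Bornology.IsBounded Ω →
        ∀ u : EuclideanSpace ℝ (Fin n) → EuclideanSpace ℝ (Fin n),
          ContDiffOn ℝ 1 u (closure Ω) →
          ∀ lam₁ : ℝ, 0 < lam₁ →
            (∃ φ₁, IsClassicalSol Ω u g lam₁ φ₁ ∧ ∀ x ∈ Ω, 0 < φ₁ x) →
            ∀ lam₀ : ℝ, 0 < lam₀ → lam₀ ≤ θ * lam₁ →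
              ∃ φ₀, IsNonnegSol Ω u g lam₀ φ₀ ∧ ∀ x ∈ Ω, φ₀ x ≤ K := by
  obtain ⟨K, hK, hmain⟩ := uniform_bound_away_from_threshold_general (hg.of_le one_le_two) hg0
    hgmono.monotoneOn hgconv hgint hθ
  exact ⟨K, hK, fun n Ω hΩ _ hbdd u hu lam₁ _ ⟨φ₁, hφ₁, hpos⟩ lam₀ hlam₀ hle =>
    hmain n Ω hΩ hbdd u (hu.mono subset_closure) lam₁ ⟨φ₁, hφ₁.isPositiveSupersolution hpos⟩ lam₀
      ⟨hlam₀.le, hle⟩⟩
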